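/- arXiv:1312.0101 — 3 statements merged into one kernel-verified Lean document; each statement's English description precedes it below -/
import Mathlib

section
/- Suppose n = 2 and let Ω, ω, u, λ, ū be as in the context; let s₀ be the smallest zero of ū in (0,1). If (x,y) ∈ Ω and u(x,y) = 0, then |x − s₀| ≤ Cε² for a constant C not depending on ε or on the shape of Ω. In particular, the projection of the nodal set Λ = {(x,y) ∈ Ω : u(x,y) = 0} onto the x-axis has diameter at most Cε². -/
open MeasureTheory Set Filter Topology RealInnerProductSpace

noncomputable section

/-- The point `(x, y) ∈ ℝ² ≅ ℝ^2`. -/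
def mk2 (x y : ℝ) : EuclideanSpace ℝ (Fin 2) :=
  (EuclideanSpace.equiv (Fin 2) ℝ).symm ![x, y]

/-- The cross-section `Ω(s) = {y : (s, y) ∈ Ω} ⊆ ℝ`. -/
def cross2 (Ω : Set (EuclideanSpace ℝ (Fin 2))) (s : ℝ) : Set ℝ := {y | mk2 s y ∈ Ω}

/-- `ω(s)`: the 1-dimensional Lebesgue measure of the cross-section. -/
def ωvol2 (Ω : Set (EuclideanSpace ℝ (Fin 2))) (s : ℝ) : ℝ := (volume (cross2 Ω s)).toReal

/-- The Laplacian, as the sum of the pure second derivatives along the standard basis. -/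
def lap {k : ℕ} (u : EuclideanSpace ℝ (Fin k) → ℝ) (p : EuclideanSpace ℝ (Fin k)) : ℝ :=
  ∑ i, fderiv ℝ (fun q => fderiv ℝ u q (EuclideanSpace.single i 1)) p (EuclideanSpace.single i 1)

/-- The cross-sectional average `ū(x)` of `u`. -/
def ubar2 (Ω : Set (EuclideanSpace ℝ (Fin 2))) (u : EuclideanSpace ℝ (Fin 2) → ℝ) (x : ℝ) : ℝ :=
  (∫ y in cross2 Ω x, u (mk2 x y)) / ωvol2 Ω x

abbrev E2 := EuclideanSpace ℝ (Fin 2)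

theorem mk2_zero (x y : ℝ) : (mk2 x y) 0 = x := by simp [mk2]
theorem mk2_one (x y : ℝ) : (mk2 x y) 1 = y := by simp [mk2]
theorem mk2_eta (p : E2) : mk2 (p 0) (p 1) = p := by
  ext i; fin_cases i <;> simp [mk2]
theorem mk2_comb (a b x y x' y' : ℝ) : a • mk2 x y + b • mk2 x' y' = mk2 (a*x+b*x') (a*y+b*y') := by
  ext i; fin_cases i <;> simp [mk2]
theorem mk2_sub (x y x' y' : ℝ) : mk2 x y - mk2 x' y' = mk2 (x-x') (y-y') := by
  ext i; fin_cases i <;> simp [mk2]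
theorem mk2_cont : Continuous (fun z : ℝ × ℝ => mk2 z.1 z.2) := by
  unfold mk2
  apply (EuclideanSpace.equiv (Fin 2) ℝ).symm.continuous.comp
  apply continuous_pi
  intro i; fin_cases i <;> simp <;> fun_prop
theorem mk2_norm_le (x y : ℝ) : ‖mk2 x y‖ ≤ |x| + |y| := by
  have h : mk2 x y = x • EuclideanSpace.single 0 1 + y • EuclideanSpace.single 1 1 := by
    ext i; fin_cases i <;> simp [mk2]
  rw [h]
  refine (norm_add_le _ _).trans ?_
  simp [norm_smul]
theorem mk2_norm_sq (x y : ℝ) : ‖mk2 x y‖^2 = x^2+y^2 := by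
  rw [EuclideanSpace.norm_sq_eq]; simp [mk2]
theorem mk2_mp : MeasurePreserving (fun z : ℝ × ℝ => mk2 z.1 z.2) := by
  have h1 := (MeasureTheory.volume_preserving_finTwoArrow ℝ).symm
  have h2 := (EuclideanSpace.volume_preserving_symm_measurableEquiv_toLp (Fin 2)).symm
  have := h2.comp h1
  have e : (fun z : ℝ × ℝ => mk2 z.1 z.2) =
    ⇑(MeasurableEquiv.toLp 2 (Fin 2 → ℝ)).symm.symm ∘ ⇑MeasurableEquiv.finTwoArrow.symm := by
    funext z; ext i; fin_cases i <;> rfl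
  rw [e]; exact this
theorem mk2_emb : MeasurableEmbedding (fun z : ℝ × ℝ => mk2 z.1 z.2) := by
  have h2 := ((MeasurableEquiv.finTwoArrow (α := ℝ)).symm.trans (MeasurableEquiv.toLp 2 (Fin 2 → ℝ))).measurableEmbedding
  convert h2 using 1
  funext z; ext i; fin_cases i <;> rfl

structure Dom (Ω : Set E2) (ε : ℝ) : Prop where
  op : IsOpen Ω
  cv : Convex ℝ Ω
  bd : Bornology.IsBounded Ω
  sub : ∀ x y, mk2 x y ∈ Ω → x ∈ Ioo (0:ℝ) 1 ∧ y ∈ Ioo (-ε) ε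
  ne : ∀ s ∈ Ioo (0:ℝ) 1, (cross2 Ω s).Nonempty
  pos : 0 < ε

def fa (Ω : Set E2) (x : ℝ) : ℝ := sInf (cross2 Ω x)
def fb (Ω : Set E2) (x : ℝ) : ℝ := sSup (cross2 Ω x)
def fw (Ω : Set E2) (x : ℝ) : ℝ := fb Ω x - fa Ω x

namespace Dom
variable {Ω : Set E2} {ε : ℝ}

theorem cr_open (h : Dom Ω ε) (x : ℝ) : IsOpen (cross2 Ω x) := by
  have : Continuous (fun y : ℝ => mk2 x y) := mk2_cont.comp (by fun_prop : Continuous fun y : ℝ => (x, y))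
  exact h.op.preimage this

theorem cr_conv (h : Dom Ω ε) (x : ℝ) : Convex ℝ (cross2 Ω x) := by
  intro y hy z hz a b ha hb hab
  have := h.cv hy hz ha hb hab
  rw [mk2_comb] at this
  simp only [cross2, mem_ofPred_eq, smul_eq_mul]
  convert this using 2
  rw [← add_mul, hab, one_mul]

theorem cr_sub (h : Dom Ω ε) (x : ℝ) : cross2 Ω x ⊆ Ioo (-ε) ε := fun y hy => (h.sub x y hy).2

theorem cr_eq (h : Dom Ω ε) {x : ℝ} (hx : x ∈ Ioo (0:ℝ) 1) :
    cross2 Ω x = Ioo (fa Ω x) (fb Ω x) := by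
  have hb : BddAbove (cross2 Ω x) := ⟨ε, fun y hy => (h.cr_sub x hy).2.le⟩
  have ha : BddBelow (cross2 Ω x) := ⟨-ε, fun y hy => (h.cr_sub x hy).1.le⟩
  apply Subset.antisymm
  · intro y hy
    obtain ⟨r, hr, hb'⟩ := Metric.isOpen_iff.1 (h.cr_open x) y hy
    have h1 : y + r/2 ∈ cross2 Ω x := hb' (by simp [abs_of_pos hr]; linarith)
    have h2 : y - r/2 ∈ cross2 Ω x := hb' (by simp [abs_of_pos hr]; linarith)
    exact ⟨by have := csInf_le ha h2; unfold fa; linarith, by have := le_csSup hb h1; unfold fb; linarith⟩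
  · intro y hy
    obtain ⟨y1, h1, h1'⟩ := exists_lt_of_csInf_lt (h.ne x hx) hy.1
    obtain ⟨y2, h2, h2'⟩ := exists_lt_of_lt_csSup (h.ne x hx) hy.2
    exact (h.cr_conv x).ordConnected.out h1 h2 ⟨h1'.le, h2'.le⟩

theorem lt (h : Dom Ω ε) {x : ℝ} (hx : x ∈ Ioo (0:ℝ) 1) : fa Ω x < fb Ω x := by
  obtain ⟨y, hy⟩ := h.ne x hx
  rw [h.cr_eq hx] at hy
  exact hy.1.trans hy.2

theorem fw_pos (h : Dom Ω ε) {x : ℝ} (hx : x ∈ Ioo (0:ℝ) 1) : 0 < fw Ω x := sub_pos.2 (h.lt hx)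

theorem fa_ge (h : Dom Ω ε) {x : ℝ} (hx : x ∈ Ioo (0:ℝ) 1) : -ε ≤ fa Ω x :=
  le_csInf (h.ne x hx) fun _ hy => (h.cr_sub x hy).1.le

theorem fb_le (h : Dom Ω ε) {x : ℝ} (hx : x ∈ Ioo (0:ℝ) 1) : fb Ω x ≤ ε :=
  csSup_le (h.ne x hx) fun _ hy => (h.cr_sub x hy).2.le

theorem mem_iff (h : Dom Ω ε) {x y : ℝ} (hx : x ∈ Ioo (0:ℝ) 1) :
    mk2 x y ∈ Ω ↔ fa Ω x < y ∧ y < fb Ω x := by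
  have := h.cr_eq hx
  constructor
  · intro hy
    have : y ∈ cross2 Ω x := hy
    rwa [h.cr_eq hx] at this
  · intro hy
    have h2 : y ∈ Ioo (fa Ω x) (fb Ω x) := hy
    rw [← h.cr_eq hx] at h2
    exact h2

theorem omega_eq (h : Dom Ω ε) {x : ℝ} (hx : x ∈ Ioo (0:ℝ) 1) : ωvol2 Ω x = fw Ω x := by
  unfold ωvol2 fw
  rw [h.cr_eq hx, Real.volume_Ioo, ENNReal.toReal_ofReal (sub_nonneg.2 (h.lt hx).le)]

theorem comb_mem (h : Dom Ω ε) {x x' y y' a b : ℝ} (hy : mk2 x y ∈ Ω) (hy' : mk2 x' y' ∈ Ω)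
    (ha : 0 ≤ a) (hb : 0 ≤ b) (hab : a + b = 1) : mk2 (a*x+b*x') (a*y+b*y') ∈ Ω := by
  have := h.cv hy hy' ha hb hab
  rwa [mk2_comb] at this

theorem fb_concave (h : Dom Ω ε) : ConcaveOn ℝ (Ioo 0 1) (fb Ω) := by
  refine ⟨convex_Ioo 0 1, ?_⟩
  intro x hx x' hx' a b ha hb hab
  have hz := (convex_Ioo (0:ℝ) 1) hx hx' ha hb hab
  simp only [smul_eq_mul] at hz ⊢
  refine le_of_forall_pos_lt_add ?_
  intro e he
  obtain ⟨y1, h1, h1'⟩ := exists_lt_of_lt_csSup (h.ne x hx) (show fb Ω x - e < fb Ω x by linarith)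
  obtain ⟨y2, h2, h2'⟩ := exists_lt_of_lt_csSup (h.ne x' hx') (show fb Ω x' - e < fb Ω x' by linarith)
  have := ((h.mem_iff hz).1 (h.comb_mem h1 h2 ha hb hab)).2
  have e1 := mul_le_mul_of_nonneg_left h1'.le ha
  have e2 := mul_le_mul_of_nonneg_left h2'.le hb
  have : e = a * e + b * e := by rw [← add_mul, hab, one_mul]
  linarith

theorem fa_convex (h : Dom Ω ε) : ConvexOn ℝ (Ioo 0 1) (fa Ω) := by
  refine ⟨convex_Ioo 0 1, ?_⟩
  intro x hx x' hx' a b ha hb hab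
  have hz := (convex_Ioo (0:ℝ) 1) hx hx' ha hb hab
  simp only [smul_eq_mul] at hz ⊢
  refine le_of_forall_pos_lt_add ?_
  intro e he
  obtain ⟨y1, h1, h1'⟩ := exists_lt_of_csInf_lt (h.ne x hx) (show fa Ω x < fa Ω x + e by linarith)
  obtain ⟨y2, h2, h2'⟩ := exists_lt_of_csInf_lt (h.ne x' hx') (show fa Ω x' < fa Ω x' + e by linarith)
  have := ((h.mem_iff hz).1 (h.comb_mem h1 h2 ha hb hab)).1
  have e1 := mul_le_mul_of_nonneg_left h1'.le ha
  have e2 := mul_le_mul_of_nonneg_left h2'.le hb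
  have : e = a * e + b * e := by rw [← add_mul, hab, one_mul]
  linarith

theorem fw_concave (h : Dom Ω ε) : ConcaveOn ℝ (Ioo 0 1) (fw Ω) := h.fb_concave.sub h.fa_convex

theorem fb_cont (h : Dom Ω ε) : ContinuousOn (fb Ω) (Ioo 0 1) := h.fb_concave.continuousOn isOpen_Ioo
theorem fa_cont (h : Dom Ω ε) : ContinuousOn (fa Ω) (Ioo 0 1) := h.fa_convex.continuousOn isOpen_Ioo
theorem fw_cont (h : Dom Ω ε) : ContinuousOn (fw Ω) (Ioo 0 1) := h.fb_cont.sub h.fa_cont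

/-- slope bound for convex functions on `(0,1)` with values in `[-ε,ε]` -/
theorem _root_.slope_bd {f : ℝ → ℝ} {ε : ℝ} (hf : ConvexOn ℝ (Ioo 0 1) f)
    (hb : ∀ x ∈ Ioo (0:ℝ) 1, |f x| ≤ ε) {x x' d : ℝ} (hd : 0 < d) (hx : d ≤ x) (hx1 : d ≤ 1 - x)
    (hxx : x < x') (hx' : x' < (1 + x)/2) : |f x' - f x| ≤ 4 * ε / d * (x' - x) := by
  have m0 : x/2 ∈ Ioo (0:ℝ) 1 := ⟨by linarith, by linarith⟩
  have m1 : x ∈ Ioo (0:ℝ) 1 := ⟨by linarith, by linarith⟩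
  have m2 : x' ∈ Ioo (0:ℝ) 1 := ⟨by linarith, by linarith⟩
  have m3 : (1+x)/2 ∈ Ioo (0:ℝ) 1 := ⟨by linarith, by linarith⟩
  have s1 := hf.slope_mono_adjacent m0 m2 (show x/2 < x by linarith) hxx
  have s2 := hf.secant_mono_aux2 m1 m3 hxx hx'
  have b0 := abs_le.1 (hb _ m0)
  have b1 := abs_le.1 (hb _ m1)
  have b3 := abs_le.1 (hb _ m3)
  have hε : 0 ≤ ε := by linarith
  have hp : 0 < x' - x := by linarith
  have k1 : -(4*ε/d) ≤ (f x - f (x/2)) / (x - x/2) := by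
    rw [le_div_iff₀ (by linarith)]
    have : 4*ε/d * (x - x/2) ≥ 2 * ε := by
      rw [ge_iff_le, div_mul_eq_mul_div, le_div_iff₀ hd]; nlinarith
    linarith
  have k2 : (f ((1+x)/2) - f x) / ((1+x)/2 - x) ≤ 4*ε/d := by
    rw [div_le_iff₀ (by linarith)]
    have : 4*ε/d * ((1+x)/2 - x) ≥ 2 * ε := by
      rw [ge_iff_le, div_mul_eq_mul_div, le_div_iff₀ hd]; nlinarith
    linarith
  have r1 := k1.trans s1
  have r2 := s2.trans k2
  rw [le_div_iff₀ hp] at r1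
  rw [div_le_iff₀ hp] at r2
  rw [abs_le]; constructor <;> linarith

theorem fa_slope (h : Dom Ω ε) {x x' d : ℝ} (hd : 0 < d) (hx : d ≤ x) (hx1 : d ≤ 1 - x)
    (hxx : x < x') (hx' : x' < (1 + x)/2) : |fa Ω x' - fa Ω x| ≤ 4 * ε / d * (x' - x) := by
  refine slope_bd h.fa_convex (fun z hz => ?_) hd hx hx1 hxx hx'
  have := h.fa_ge hz
  have := h.fb_le hz
  have := h.lt hz
  rw [abs_le]; constructor <;> linarith

theorem fb_slope (h : Dom Ω ε) {x x' d : ℝ} (hd : 0 < d) (hx : d ≤ x) (hx1 : d ≤ 1 - x)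
    (hxx : x < x') (hx' : x' < (1 + x)/2) : |fb Ω x' - fb Ω x| ≤ 4 * ε / d * (x' - x) := by
  have := slope_bd (f := fun x => - fb Ω x) (ε := ε) h.fb_concave.neg (fun z hz => ?_) hd hx hx1 hxx hx'
  · rw [← abs_neg]; convert this using 2; ring
  have := h.fa_ge hz
  have := h.fb_le hz
  have := h.lt hz
  rw [abs_neg, abs_le]; constructor <;> linarith

theorem fw_cmp (h : Dom Ω ε) {x z : ℝ} (hx : x ∈ Ioo (0:ℝ) 1) (hz : z ∈ Ioo (0:ℝ) 1) :
    min x (1 - x) / 2 * fw Ω z ≤ fw Ω x := by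
  have key : ∀ s ∈ Ioo (0:ℝ) 1, ∀ θ : ℝ, 0 ≤ θ → θ ≤ 1 → x = θ * z + (1-θ) * s → min x (1-x) / 2 ≤ θ →
      min x (1 - x) / 2 * fw Ω z ≤ fw Ω x := by
    intro s hs θ h0 h1 hxe hm
    have := h.fw_concave.2 hz hs h0 (show 0 ≤ 1 - θ by linarith) (by ring)
    simp only [smul_eq_mul] at this
    rw [← hxe] at this
    have p1 := h.fw_pos hs
    have p2 := h.fw_pos hz
    nlinarith [mul_nonneg (show 0 ≤ 1 - θ by linarith) p1.le, mul_le_mul_of_nonneg_right hm p2.le]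
  obtain ⟨hx0, hx1⟩ := hx
  obtain ⟨hz0, hz1⟩ := hz
  rcases le_total x z with hxz | hxz
  · have hd : 0 < z - x/2 := by linarith
    refine key (x/2) ⟨by linarith, by linarith⟩ ((x/2)/(z - x/2)) (by positivity) ?_ ?_ ?_
    · rw [div_le_one hd]; linarith
    · have := div_mul_cancel₀ (x/2) hd.ne'
      linear_combination -this
    · rw [le_div_iff₀ hd]
      have := min_le_left x (1-x)
      have : 0 ≤ min x (1-x) := le_min hx0.le (by linarith)
      nlinarith
  · have hd : 0 < (1+x)/2 - z := by linarith
    refine key ((1+x)/2) ⟨by linarith, by linarith⟩ (((1-x)/2)/((1+x)/2 - z)) ?_ ?_ ?_ ?_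
    · apply div_nonneg <;> linarith
    · rw [div_le_one hd]; linarith
    · have := div_mul_cancel₀ ((1-x)/2) hd.ne'
      linear_combination this
    · rw [le_div_iff₀ hd]
      have := min_le_right x (1-x)
      have : 0 ≤ min x (1-x) := le_min hx0.le (by linarith)
      nlinarith

theorem fw_le (h : Dom Ω ε) {x : ℝ} (hx : x ∈ Ioo (0:ℝ) 1) : fw Ω x ≤ 2 * ε := by
  have := h.fa_ge hx
  have := h.fb_le hx
  unfold fw; linarith

theorem cpt (h : Dom Ω ε) : IsCompact (closure Ω) := h.bd.isCompact_closure

theorem nonempty (h : Dom Ω ε) : Ω.Nonempty := by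
  obtain ⟨y, hy⟩ := h.ne (1/2) ⟨by norm_num, by norm_num⟩
  exact ⟨_, hy⟩

theorem pt_mem (h : Dom Ω ε) {x t : ℝ} (hx : x ∈ Ioo (0:ℝ) 1) (ht : t ∈ Ioo (0:ℝ) 1) :
    mk2 x (fa Ω x + t * fw Ω x) ∈ Ω := by
  rw [h.mem_iff hx]
  have := h.fw_pos hx
  have e : fb Ω x = fa Ω x + fw Ω x := by unfold fw; ring
  constructor
  · nlinarith [ht.1]
  · rw [e]; nlinarith [ht.2]

theorem mk_closure (h : Dom Ω ε) {x y : ℝ} (hx : x ∈ Ioo (0:ℝ) 1) (hy : y ∈ Icc (fa Ω x) (fb Ω x)) :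
    mk2 x y ∈ closure Ω := by
  rw [← closure_Ioo (h.lt hx).ne] at hy
  have hc : Continuous (fun y : ℝ => mk2 x y) := mk2_cont.comp (by fun_prop : Continuous fun y : ℝ => (x, y))
  have := image_closure_subset_closure_image hc (s := Ioo (fa Ω x) (fb Ω x)) (mem_image_of_mem _ hy)
  refine closure_mono ?_ this
  rintro _ ⟨z, hz, rfl⟩
  exact (h.mem_iff hx).2 hz

theorem pt_closure (h : Dom Ω ε) {x t : ℝ} (hx : x ∈ Ioo (0:ℝ) 1) (ht : t ∈ Icc (0:ℝ) 1) :
    mk2 x (fa Ω x + t * fw Ω x) ∈ closure Ω := by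
  apply h.mk_closure hx
  have := h.fw_pos hx
  have e : fb Ω x = fa Ω x + fw Ω x := by unfold fw; ring
  constructor
  · nlinarith [ht.1]
  · rw [e]; nlinarith [ht.2]

end Dom

def avg (Ω : Set E2) (f : E2 → ℝ) (x : ℝ) : ℝ :=
  ∫ t in (0:ℝ)..1, f (mk2 x (fa Ω x + t * fw Ω x))

namespace Dom
variable {Ω : Set E2} {ε : ℝ}

theorem cross_int (h : Dom Ω ε) (f : E2 → ℝ) {x : ℝ} (hx : x ∈ Ioo (0:ℝ) 1) :
    ∫ y in cross2 Ω x, f (mk2 x y) = fw Ω x * avg Ω f x := by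
  rw [h.cr_eq hx, ← integral_Ioc_eq_integral_Ioo, ← intervalIntegral.integral_of_le (h.lt hx).le]
  unfold avg
  have := intervalIntegral.mul_integral_comp_add_mul (a := 0) (b := 1) (f := fun y => f (mk2 x y)) (fw Ω x) (fa Ω x)
  simp only [mul_zero, add_zero, mul_one] at this
  rw [show fb Ω x = fa Ω x + fw Ω x by unfold fw; ring, ← this]
  simp only [mul_comm]

theorem ubar_eq (h : Dom Ω ε) (f : E2 → ℝ) {x : ℝ} (hx : x ∈ Ioo (0:ℝ) 1) :
    ubar2 Ω f x = avg Ω f x := by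
  unfold ubar2
  rw [h.cross_int f hx, h.omega_eq hx, mul_div_cancel_left₀ _ (h.fw_pos hx).ne']

theorem bdd (h : Dom Ω ε) {f : E2 → ℝ} (hf : ContinuousOn f (closure Ω)) :
    ∃ B, 0 ≤ B ∧ ∀ p ∈ closure Ω, |f p| ≤ B := by
  obtain ⟨B, hB⟩ := h.cpt.exists_bound_of_continuousOn hf
  exact ⟨max B 0, le_max_right _ _, fun p hp => (hB p hp).trans (le_max_left _ _)⟩

theorem intOn (h : Dom Ω ε) {f : E2 → ℝ} (hf : ContinuousOn f (closure Ω)) : IntegrableOn f Ω :=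
  (hf.integrableOn_compact h.cpt).mono_set subset_closure

theorem sec_cont (h : Dom Ω ε) {f : E2 → ℝ} (hf : ContinuousOn f (closure Ω)) {x : ℝ}
    (hx : x ∈ Ioo (0:ℝ) 1) :
    ContinuousOn (fun t => f (mk2 x (fa Ω x + t * fw Ω x))) (Icc 0 1) := by
  have hc : Continuous (fun t : ℝ => mk2 x (fa Ω x + t * fw Ω x)) :=
    mk2_cont.comp (by fun_prop : Continuous fun t : ℝ => (x, fa Ω x + t * fw Ω x))
  exact hf.comp hc.continuousOn (fun t ht => h.pt_closure hx ht)

theorem sec_int (h : Dom Ω ε) {f : E2 → ℝ} (hf : ContinuousOn f (closure Ω)) {x : ℝ}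
    (hx : x ∈ Ioo (0:ℝ) 1) :
    IntervalIntegrable (fun t => f (mk2 x (fa Ω x + t * fw Ω x))) volume 0 1 := by
  apply ContinuousOn.intervalIntegrable
  rw [uIcc_of_le zero_le_one]
  exact h.sec_cont hf hx

theorem avg_le (h : Dom Ω ε) {f : E2 → ℝ} (hf : ContinuousOn f (closure Ω)) {x B : ℝ}
    (hx : x ∈ Ioo (0:ℝ) 1) (hB : ∀ y, mk2 x y ∈ Ω → f (mk2 x y) ≤ B) : avg Ω f x ≤ B := by
  have := intervalIntegral.integral_mono_on_of_le_Ioo (a := 0) (b := 1) (μ := volume) zero_le_one (h.sec_int hf hx)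
    (intervalIntegrable_const (c := B)) (fun t ht => hB _ (h.pt_mem hx ht))
  simpa [avg] using this

theorem le_avg (h : Dom Ω ε) {f : E2 → ℝ} (hf : ContinuousOn f (closure Ω)) {x B : ℝ}
    (hx : x ∈ Ioo (0:ℝ) 1) (hB : ∀ y, mk2 x y ∈ Ω → B ≤ f (mk2 x y)) : B ≤ avg Ω f x := by
  have := intervalIntegral.integral_mono_on_of_le_Ioo (a := 0) (b := 1) (μ := volume) zero_le_one
    (intervalIntegrable_const (c := B)) (h.sec_int hf hx) (fun t ht => hB _ (h.pt_mem hx ht))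
  simpa [avg] using this

theorem avg_cont (h : Dom Ω ε) {f : E2 → ℝ} (hf : ContinuousOn f (closure Ω)) :
    ContinuousOn (avg Ω f) (Ioo 0 1) := by
  intro x hx
  obtain ⟨B, -, hB⟩ := h.bdd hf
  apply ContinuousAt.continuousWithinAt
  have hn : ∀ᶠ x' in 𝓝 x, x' ∈ Ioo (0:ℝ) 1 := isOpen_Ioo.mem_nhds hx
  apply intervalIntegral.continuousAt_of_dominated_interval (bound := fun _ => B)
  · filter_upwards [hn] with x' hx'
    exact (h.sec_int hf hx').aestronglyMeasurable_restrict_uIoc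
  · filter_upwards [hn] with x' hx'
    refine ae_of_all _ fun t ht => ?_
    rw [uIoc_of_le zero_le_one] at ht
    exact hB _ (h.pt_closure hx' ⟨ht.1.le, ht.2⟩)
  · exact intervalIntegrable_const
  · refine ae_of_all _ fun t ht => ?_
    rw [uIoc_of_le zero_le_one] at ht
    have ht' : t ∈ Icc (0:ℝ) 1 := ⟨ht.1.le, ht.2⟩
    have hc : ContinuousAt (fun x' => mk2 x' (fa Ω x' + t * fw Ω x')) x := by
      have a1 := h.fa_cont.continuousAt (isOpen_Ioo.mem_nhds hx)
      have a2 := h.fw_cont.continuousAt (isOpen_Ioo.mem_nhds hx)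
      exact mk2_cont.continuousAt.comp (f := fun x' => (x', fa Ω x' + t * fw Ω x')) (by fun_prop)
    have := (hf _ (h.pt_closure hx ht')).tendsto.comp
      (tendsto_nhdsWithin_iff.2 ⟨hc, by filter_upwards [hn] with x' hx' using h.pt_closure hx' ht'⟩)
    exact this

theorem integrand_int (h : Dom Ω ε) {f : E2 → ℝ} (hf : ContinuousOn f (closure Ω)) :
    IntegrableOn (fun x => fw Ω x * avg Ω f x) (Ioo 0 1) := by
  obtain ⟨B, hB0, hB⟩ := h.bdd hf
  have hc : ContinuousOn (fun x => fw Ω x * avg Ω f x) (Ioo 0 1) := h.fw_cont.mul (h.avg_cont hf)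
  refine IntegrableOn.of_bound (by simp) (hc.aestronglyMeasurable measurableSet_Ioo) (2 * ε * B) ?_
  refine (ae_restrict_mem measurableSet_Ioo).mono fun x hx => ?_
  rw [norm_mul]
  have h1 : |avg Ω f x| ≤ B := abs_le.2
    ⟨h.le_avg hf hx fun y hy => (abs_le.1 (hB _ (subset_closure hy))).1,
      h.avg_le hf hx fun y hy => (abs_le.1 (hB _ (subset_closure hy))).2⟩
  have h2 := h.fw_le hx
  have h3 := h.fw_pos hx
  rw [Real.norm_eq_abs, Real.norm_eq_abs, abs_of_pos h3]
  gcongr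
  exact h3.le.trans h2

theorem fubini (h : Dom Ω ε) {f : E2 → ℝ} (hf : ContinuousOn f (closure Ω)) :
    ∫ p in Ω, f p = ∫ x in Ioo (0:ℝ) 1, fw Ω x * avg Ω f x := by
  set S : Set (ℝ × ℝ) := (fun z : ℝ × ℝ => mk2 z.1 z.2) ⁻¹' Ω with hS
  have hSo : MeasurableSet S := (h.op.preimage mk2_cont).measurableSet
  have e1 : ∫ p in Ω, f p = ∫ z in S, f (mk2 z.1 z.2) :=
    (mk2_mp.setIntegral_preimage_emb mk2_emb f Ω).symm
  have hi : IntegrableOn (fun z : ℝ × ℝ => f (mk2 z.1 z.2)) S :=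
    (mk2_mp.integrableOn_comp_preimage mk2_emb).2 (h.intOn hf)
  rw [e1, ← integral_indicator hSo]
  rw [MeasureTheory.Measure.volume_eq_prod]
  rw [integral_prod _ (by
    rw [← MeasureTheory.Measure.volume_eq_prod]; exact (integrable_indicator_iff hSo).2 hi)]
  rw [← integral_indicator measurableSet_Ioo]
  congr 1
  funext x
  by_cases hx : x ∈ Ioo (0:ℝ) 1
  · rw [indicator_of_mem hx, ← h.cross_int f hx, ← integral_indicator (h.cr_open x).measurableSet]
    congr 1
  · rw [indicator_of_notMem hx]
    rw [← integral_zero ℝ ℝ]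
    congr 1
    funext y
    apply indicator_of_notMem
    intro hy
    exact hx (h.sub x y hy).1

theorem avg_mul (f : E2 → ℝ) (χ : ℝ → ℝ) (x : ℝ) :
    avg Ω (fun p => χ (p 0) * f p) x = χ x * avg Ω f x := by
  unfold avg
  simp only [mk2_zero]
  rw [intervalIntegral.integral_const_mul]

theorem avg_add (h : Dom Ω ε) {f g : E2 → ℝ} (hf : ContinuousOn f (closure Ω))
    (hg : ContinuousOn g (closure Ω)) {x : ℝ} (hx : x ∈ Ioo (0:ℝ) 1) :
    avg Ω (fun p => f p + g p) x = avg Ω f x + avg Ω g x := by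
  unfold avg
  exact intervalIntegral.integral_add (h.sec_int hf hx) (h.sec_int hg hx)

theorem avg_const (c x : ℝ) : avg Ω (fun _ => c) x = c := by simp [avg]

theorem fubini_mul (h : Dom Ω ε) {f : E2 → ℝ} (hf : ContinuousOn f (closure Ω)) {χ : ℝ → ℝ}
    (hχ : Continuous χ) :
    ∫ p in Ω, χ (p 0) * f p = ∫ x in Ioo (0:ℝ) 1, χ x * (fw Ω x * avg Ω f x) := by
  rw [h.fubini (f := fun p => χ (p 0) * f p)]
  · congr 1; funext x
    rw [avg_mul]; ring
  · apply ContinuousOn.mul _ hf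
    exact (hχ.comp (by fun_prop)).continuousOn

end Dom

def DD (Ω : Set E2) (i : Fin 2) (f : E2 → ℝ) (p : E2) : ℝ :=
  fderivWithin ℝ f (closure Ω) p (EuclideanSpace.single i 1)

def Sm (Ω : Set E2) (f : E2 → ℝ) : Prop := ContDiffOn ℝ (⊤:ℕ∞) f (closure Ω)

theorem Sm.diff {Ω : Set E2} {f : E2 → ℝ} (hf : Sm Ω f) : DifferentiableOn ℝ f (closure Ω) :=
  ContDiffOn.differentiableOn hf (by simp)

theorem Sm.cont {Ω : Set E2} {f : E2 → ℝ} (hf : Sm Ω f) : ContinuousOn f (closure Ω) :=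
  ContDiffOn.continuousOn hf

theorem Sm.mul {Ω : Set E2} {f g : E2 → ℝ} (hf : Sm Ω f) (hg : Sm Ω g) : Sm Ω (fun p => f p * g p) :=
  ContDiffOn.mul hf hg
theorem Sm.add {Ω : Set E2} {f g : E2 → ℝ} (hf : Sm Ω f) (hg : Sm Ω g) : Sm Ω (fun p => f p + g p) :=
  ContDiffOn.add hf hg
theorem Sm.sub {Ω : Set E2} {f g : E2 → ℝ} (hf : Sm Ω f) (hg : Sm Ω g) : Sm Ω (fun p => f p - g p) :=
  ContDiffOn.sub hf hg
theorem Sm.const {Ω : Set E2} (c : ℝ) : Sm Ω (fun _ => c) := contDiffOn_const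

theorem grad_apply (f : E2 → ℝ) (p : E2) (i : Fin 2) :
    (gradient f p) i = fderiv ℝ f p (EuclideanSpace.single i 1) := by
  unfold gradient
  have := InnerProductSpace.toDual_symm_apply (𝕜 := ℝ) (x := EuclideanSpace.single i (1:ℝ)) (y := fderiv ℝ f p)
  rw [← this, EuclideanSpace.inner_single_right]
  simp

namespace Dom
variable {Ω : Set E2} {ε : ℝ}

theorem ud (h : Dom Ω ε) : UniqueDiffOn ℝ (closure Ω) := by
  apply uniqueDiffOn_convex h.cv.closure
  exact h.nonempty.mono (interior_maximal subset_closure h.op)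

theorem sm_D (h : Dom Ω ε) {f : E2 → ℝ} (hf : Sm Ω f) (i : Fin 2) : Sm Ω (DD Ω i f) := by
  have := ContDiffOn.fderivWithin hf h.ud (m := ((⊤:ℕ∞) : WithTop ℕ∞)) (by simp)
  exact this.clm_apply contDiffOn_const

theorem nhds (h : Dom Ω ε) {p : E2} (hp : p ∈ Ω) : closure Ω ∈ 𝓝 p :=
  mem_of_superset (h.op.mem_nhds hp) subset_closure

theorem D_eq (h : Dom Ω ε) (f : E2 → ℝ) (i : Fin 2) {p : E2} (hp : p ∈ Ω) :
    DD Ω i f p = fderiv ℝ f p (EuclideanSpace.single i 1) := by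
  unfold DD
  rw [fderivWithin_of_mem_nhds (h.nhds hp)]

theorem grad_sq (h : Dom Ω ε) (f : E2 → ℝ) {p : E2} (hp : p ∈ Ω) :
    ‖gradient f p‖^2 = (DD Ω 0 f p)^2 + (DD Ω 1 f p)^2 := by
  rw [EuclideanSpace.norm_sq_eq, Fin.sum_univ_two, grad_apply, grad_apply, h.D_eq f 0 hp, h.D_eq f 1 hp]
  simp

theorem D_mul (h : Dom Ω ε) {f g : E2 → ℝ} (hf : Sm Ω f) (hg : Sm Ω g) (i : Fin 2) {p : E2}
    (hp : p ∈ closure Ω) :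
    DD Ω i (fun q => f q * g q) p = f p * DD Ω i g p + DD Ω i f p * g p := by
  unfold DD
  rw [fderivWithin_fun_mul (h.ud p hp) (hf.diff p hp) (hg.diff p hp)]
  simp [mul_comm]

theorem D_add (h : Dom Ω ε) {f g : E2 → ℝ} (hf : Sm Ω f) (hg : Sm Ω g) (i : Fin 2) {p : E2}
    (hp : p ∈ closure Ω) :
    DD Ω i (fun q => f q + g q) p = DD Ω i f p + DD Ω i g p := by
  unfold DD
  rw [fderivWithin_fun_add (h.ud p hp) (hf.diff p hp) (hg.diff p hp)]
  simp

theorem D_const (i : Fin 2) (c : ℝ) (p : E2) :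
    DD Ω i (fun _ => c) p = 0 := by
  unfold DD
  simp

theorem sm_chi {χ : ℝ → ℝ} (hχ : ContDiff ℝ (⊤:ℕ∞) χ) (i : Fin 2) : Sm Ω (fun p => χ (p i)) := by
  apply ContDiff.contDiffOn
  exact hχ.comp (contDiff_piLp_apply (p := 2))

theorem D_chi (h : Dom Ω ε) {χ : ℝ → ℝ} (hχ : ContDiff ℝ (⊤:ℕ∞) χ) (j i : Fin 2) {p : E2}
    (hp : p ∈ closure Ω) :
    DD Ω i (fun p => χ (p j)) p = if i = j then deriv χ (p j) else 0 := by
  unfold DD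
  have h1 : HasDerivAt χ (deriv χ (p j)) (p j) := (hχ.differentiable (by simp) _).hasDerivAt
  have h2 : HasFDerivAt (fun p : E2 => p j) (EuclideanSpace.proj (𝕜 := ℝ) j) p :=
    (EuclideanSpace.proj (𝕜 := ℝ) j : E2 →L[ℝ] ℝ).hasFDerivAt
  have h3 := (h1.comp_hasFDerivAt p h2).hasFDerivWithinAt (s := closure Ω)
  have h4 := h3.fderivWithin (h.ud p hp)
  change (fderivWithin ℝ (χ ∘ fun p : E2 => p j) (closure Ω) p) _ = _
  rw [h4]
  by_cases hij : i = j <;> simp [hij]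

end Dom

structure Eig (Ω : Set E2) (u : E2 → ℝ) (lam : ℝ) : Prop where
  sm : Sm Ω u
  mean : ∫ p in Ω, u p = 0
  pos : 0 < lam
  lap : ∀ p ∈ Ω, DD Ω 0 (DD Ω 0 u) p + DD Ω 1 (DD Ω 1 u) p = - (lam * u p)
  en : lam * ∫ p in Ω, (u p)^2 = ∫ p in Ω, ((DD Ω 0 u p)^2 + (DD Ω 1 u p)^2)
  weak : ∀ φ, Sm Ω φ → ∫ p in Ω, (DD Ω 0 u p * DD Ω 0 φ p + DD Ω 1 u p * DD Ω 1 φ p) =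
    lam * ∫ p in Ω, u p * φ p
  ray : ∀ φ, Sm Ω φ → lam * ((∫ p in Ω, (φ p)^2) - (∫ p in Ω, φ p)^2 / (∫ p in Ω, (1:ℝ))) ≤
    ∫ p in Ω, ((DD Ω 0 φ p)^2 + (DD Ω 1 φ p)^2)

namespace Dom
variable {Ω : Set E2} {ε : ℝ}

theorem W_pos (h : Dom Ω ε) : 0 < ∫ _p in Ω, (1:ℝ) := by
  simp only [integral_const, smul_eq_mul, mul_one, MeasurableSet.univ, measureReal_restrict_apply, univ_inter]
  rw [measureReal_def]
  exact ENNReal.toReal_pos (h.op.measure_pos _ h.nonempty).ne' h.bd.measure_lt_top.ne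

theorem sq_pos (h : Dom Ω ε) {f : E2 → ℝ} (hf : ContinuousOn f (closure Ω)) (hne : ∃ p ∈ Ω, f p ≠ 0) :
    0 < ∫ p in Ω, (f p)^2 := by
  have hi : IntegrableOn (fun p => (f p)^2) Ω := h.intOn (hf.pow 2)
  rw [integral_pos_iff_support_of_nonneg (fun p => sq_nonneg _) hi]
  have hc : ContinuousOn f Ω := hf.mono subset_closure
  have ho : IsOpen (Ω ∩ f ⁻¹' {0}ᶜ) := hc.isOpen_inter_preimage h.op isOpen_compl_singleton
  have hpos : 0 < volume (Ω ∩ f ⁻¹' {0}ᶜ) := by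
    obtain ⟨p, hp, hp'⟩ := hne
    exact ho.measure_pos _ ⟨p, hp, hp'⟩
  refine hpos.trans_le ?_
  rw [Measure.restrict_apply' h.op.measurableSet]
  apply measure_mono
  rintro p ⟨hp, hp'⟩
  refine ⟨?_, hp⟩
  simpa using hp'

theorem gr_int (h : Dom Ω ε) {f g : E2 → ℝ} (hf : Sm Ω f) (hg : Sm Ω g) :
    IntegrableOn (fun p => DD Ω 0 f p * DD Ω 0 g p + DD Ω 1 f p * DD Ω 1 g p) Ω :=
  h.intOn (((h.sm_D hf 0).mul (h.sm_D hg 0)).add ((h.sm_D hf 1).mul (h.sm_D hg 1))).cont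

/-- Expansion of the energy of `f + t g`. -/
theorem en_expand (h : Dom Ω ε) {f g : E2 → ℝ} (hf : Sm Ω f) (hg : Sm Ω g) (t : ℝ) :
    ∫ p in Ω, ((DD Ω 0 (fun q => f q + t * g q) p)^2 + (DD Ω 1 (fun q => f q + t * g q) p)^2) =
    (∫ p in Ω, ((DD Ω 0 f p)^2 + (DD Ω 1 f p)^2)) +
      2 * t * (∫ p in Ω, (DD Ω 0 f p * DD Ω 0 g p + DD Ω 1 f p * DD Ω 1 g p)) +
      t^2 * ∫ p in Ω, ((DD Ω 0 g p)^2 + (DD Ω 1 g p)^2) := by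
  have i1 := h.gr_int hf hf
  have i2 := h.gr_int hf hg
  have i3 := h.gr_int hg hg
  simp only [← sq] at i1 i3
  rw [← integral_const_mul, ← integral_const_mul, ← integral_add i1 (i2.const_mul _)]
  refine Eq.trans ?_ (integral_add (i1.add (i2.const_mul (2*t))) (i3.const_mul (t^2)))
  apply setIntegral_congr_fun h.op.measurableSet
  intro p hp
  have hp' := subset_closure hp
  have key : ∀ i, DD Ω i (fun q => f q + t * g q) p = DD Ω i f p + t * DD Ω i g p := by
    intro i
    rw [h.D_add hf ((Sm.const t).mul hg) i hp', h.D_mul (Sm.const t) hg i hp', D_const]; ring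
  simp only [key, Pi.add_apply]
  ring

theorem sq_expand (h : Dom Ω ε) {f g : E2 → ℝ} (hf : Sm Ω f) (hg : Sm Ω g) (t : ℝ) :
    ∫ p in Ω, (f p + t * g p)^2 = (∫ p in Ω, (f p)^2) + 2 * t * (∫ p in Ω, f p * g p) +
      t^2 * ∫ p in Ω, (g p)^2 := by
  have i1 := h.intOn (hf.mul hf).cont
  have i2 := h.intOn (hf.mul hg).cont
  have i3 := h.intOn (hg.mul hg).cont
  simp only [← sq] at i1 i3
  rw [← integral_const_mul, ← integral_const_mul, ← integral_add i1 (i2.const_mul _)]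
  refine Eq.trans ?_ (integral_add (i1.add (i2.const_mul (2*t))) (i3.const_mul (t^2)))
  apply setIntegral_congr_fun h.op.measurableSet
  intro p hp
  simp only [Pi.add_apply]
  ring

theorem lin_expand (h : Dom Ω ε) {f g : E2 → ℝ} (hf : Sm Ω f) (hg : Sm Ω g) (t : ℝ) :
    ∫ p in Ω, (f p + t * g p) = (∫ p in Ω, f p) + t * (∫ p in Ω, g p) := by
  rw [← integral_const_mul, ← integral_add (h.intOn hf.cont) ((h.intOn hg.cont).const_mul _)]

theorem mkEig (h : Dom Ω ε) {u : E2 → ℝ} {lam : ℝ}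
    (hu : ContDiffOn ℝ (⊤:ℕ∞) u (closure Ω))
    (hne : ∃ p ∈ Ω, u p ≠ 0)
    (hm : (∫ p in Ω, u p) = 0)
    (hl : ∀ p ∈ Ω, _root_.lap u p = -(lam * u p))
    (hpos : 0 < lam)
    (hinf : lam = sInf {r | ∃ w : EuclideanSpace ℝ (Fin 2) → ℝ,
        ContDiffOn ℝ (⊤:ℕ∞) w (closure Ω) ∧ (∃ p ∈ Ω, w p ≠ 0) ∧ (∫ p in Ω, w p) = 0 ∧
        r = (∫ p in Ω, ‖gradient w p‖ ^ 2) / (∫ p in Ω, (w p) ^ 2)})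
    (hat : lam = (∫ p in Ω, ‖gradient u p‖ ^ 2) / (∫ p in Ω, (u p) ^ 2)) : Eig Ω u lam := by
  have hu' : Sm Ω u := hu
  have hgr : ∀ w : E2 → ℝ, ∫ p in Ω, ‖gradient w p‖ ^ 2 = ∫ p in Ω, ((DD Ω 0 w p)^2 + (DD Ω 1 w p)^2) := by
    intro w
    exact setIntegral_congr_fun h.op.measurableSet fun p hp => h.grad_sq w hp
  have hen : lam * ∫ p in Ω, (u p)^2 = ∫ p in Ω, ((DD Ω 0 u p)^2 + (DD Ω 1 u p)^2) := by
    rw [← hgr, hat, div_mul_cancel₀ _ (h.sq_pos hu'.cont hne).ne']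
  have ray0 : ∀ w, Sm Ω w → ∫ p in Ω, w p = 0 →
      lam * ∫ p in Ω, (w p)^2 ≤ ∫ p in Ω, ((DD Ω 0 w p)^2 + (DD Ω 1 w p)^2) := by
    intro w hw hw0
    by_cases hz : ∃ p ∈ Ω, w p ≠ 0
    · rw [← hgr, ← le_div_iff₀ (h.sq_pos hw.cont hz), hinf]
      apply csInf_le
      · refine ⟨0, ?_⟩
        rintro r ⟨w', -, -, -, rfl⟩
        apply div_nonneg <;> exact integral_nonneg fun p => by positivity
      · exact ⟨w, hw, hz, hw0, rfl⟩
    · push Not at hz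
      have : ∫ p in Ω, (w p)^2 = 0 := by
        rw [setIntegral_congr_fun h.op.measurableSet (g := fun _ => (0:ℝ))]
        · simp
        · intro p hp; simp [hz p hp]
      rw [this, mul_zero]
      exact integral_nonneg fun p => by positivity
  have W := h.W_pos
  have ray : ∀ φ, Sm Ω φ → lam * ((∫ p in Ω, (φ p)^2) - (∫ p in Ω, φ p)^2 / (∫ p in Ω, (1:ℝ))) ≤
      ∫ p in Ω, ((DD Ω 0 φ p)^2 + (DD Ω 1 φ p)^2) := by
    intro φ hφ
    set t := -((∫ p in Ω, φ p) / (∫ p in Ω, (1:ℝ))) with ht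
    have e0 := h.lin_expand hφ (Sm.const (Ω := Ω) 1) t
    have e1 := h.sq_expand hφ (Sm.const (Ω := Ω) 1) t
    have e2 := h.en_expand hφ (Sm.const (Ω := Ω) 1) t
    have := ray0 _ (hφ.add ((Sm.const t).mul (Sm.const (Ω := Ω) 1)))
      (by rw [e0, ht]; field_simp; ring)
    rw [e1, e2] at this
    simp only [D_const, mul_one, one_pow] at this
    have z : (∫ p in Ω, φ p)^2 / (∫ p in Ω, (1:ℝ)) = - (2 * t * (∫ p in Ω, φ p) + t^2 * ∫ p in Ω, (1:ℝ)) := by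
      rw [ht]; field_simp; ring
    rw [z]
    simp at this ⊢
    linarith
  refine ⟨hu', hm, hpos, ?_, hen, ?_, ray⟩
  · intro p hp
    rw [← hl p hp]
    unfold _root_.lap
    rw [Fin.sum_univ_two]
    have : ∀ i : Fin 2, DD Ω i (DD Ω i u) p = fderiv ℝ (fun q => fderiv ℝ u q (EuclideanSpace.single i 1)) p (EuclideanSpace.single i 1) := by
      intro i
      rw [h.D_eq _ i hp]
      have : DD Ω i u =ᶠ[𝓝 p] (fun q => fderiv ℝ u q (EuclideanSpace.single i 1)) := by
        filter_upwards [h.op.mem_nhds hp] with q hq using h.D_eq u i hq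
      rw [this.fderiv_eq]
    rw [this, this]
  · intro φ hφ
    have q : ∀ t : ℝ, 0 ≤ 2 * t * ((∫ p in Ω, (DD Ω 0 u p * DD Ω 0 φ p + DD Ω 1 u p * DD Ω 1 φ p)) -
        lam * ∫ p in Ω, u p * φ p) + t^2 * ((∫ p in Ω, ((DD Ω 0 φ p)^2 + (DD Ω 1 φ p)^2))
          - lam * ((∫ p in Ω, (φ p)^2) - (∫ p in Ω, φ p)^2 / (∫ p in Ω, (1:ℝ)))) := by
      intro t
      have := ray _ (hu'.add ((Sm.const t).mul hφ))
      rw [h.en_expand hu' hφ t, h.sq_expand hu' hφ t, h.lin_expand hu' hφ t, hm] at this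
      have e : (0 + t * ∫ p in Ω, φ p)^2 / (∫ p in Ω, (1:ℝ)) = t^2 * ((∫ p in Ω, φ p)^2 / (∫ p in Ω, (1:ℝ))) := by ring
      rw [e] at this
      linarith
    generalize (∫ p in Ω, (DD Ω 0 u p * DD Ω 0 φ p + DD Ω 1 u p * DD Ω 1 φ p)) = A at q ⊢
    generalize lam * ∫ p in Ω, u p * φ p = B at q ⊢
    generalize ((∫ p in Ω, ((DD Ω 0 φ p)^2 + (DD Ω 1 φ p)^2))
          - lam * ((∫ p in Ω, (φ p)^2) - (∫ p in Ω, φ p)^2 / (∫ p in Ω, (1:ℝ)))) = K at q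
    by_contra hAB
    have h1 : A - B ≠ 0 := sub_ne_zero.2 hAB
    have h2 : 0 < (A-B)^2 := by positivity
    have := q (-(A-B)/(|K|+1))
    have hk : 0 < |K|+1 := by positivity
    have e : 2 * (-(A-B)/(|K|+1)) * (A-B) + (-(A-B)/(|K|+1))^2 * K = (A-B)^2/(|K|+1)^2 * (K - 2*(|K|+1)) := by
      field_simp; ring
    rw [e] at this
    have h3 : K - 2*(|K|+1) < 0 := by linarith [le_abs_self K, abs_nonneg K]
    have h4 : 0 < (A-B)^2/(|K|+1)^2 := by positivity
    nlinarith

end Dom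

def PP (Ω : Set E2) (u : E2 → ℝ) (x : ℝ) : ℝ := ∫ s in (0:ℝ)..x, fw Ω s * avg Ω u s

theorem lin2 (L : E2 →L[ℝ] ℝ) (p : E2) :
    L p = L (EuclideanSpace.single 0 1) * p 0 + L (EuclideanSpace.single 1 1) * p 1 := by
  have : p = (p 0) • EuclideanSpace.single 0 (1:ℝ) + (p 1) • EuclideanSpace.single 1 (1:ℝ) := by
    ext i; fin_cases i <;> simp
  conv_lhs => rw [this]
  simp [mul_comm]

namespace Dom
variable {Ω : Set E2} {ε : ℝ}

theorem ii (h : Dom Ω ε) {f : E2 → ℝ} (hf : ContinuousOn f (closure Ω)) {a b : ℝ} (ha : 0 ≤ a) (ha1 : a ≤ 1)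
    (hb : 0 ≤ b) (hb1 : b ≤ 1) :
    IntervalIntegrable (fun x => fw Ω x * avg Ω f x) volume a b := by
  have h1 : IntervalIntegrable (fun x => fw Ω x * avg Ω f x) volume 0 1 := by
    rw [intervalIntegrable_iff_integrableOn_Ioo_of_le zero_le_one]
    exact h.integrand_int hf
  apply h1.mono_set
  rw [uIcc_of_le zero_le_one]
  exact uIcc_subset_Icc ⟨ha, ha1⟩ ⟨hb, hb1⟩

theorem PP_deriv (h : Dom Ω ε) {u : E2 → ℝ} (hu : ContinuousOn u (closure Ω)) {x : ℝ} (hx : x ∈ Ioo (0:ℝ) 1) :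
    HasDerivAt (PP Ω u) (fw Ω x * avg Ω u x) x := by
  have hc : ContinuousOn (fun x => fw Ω x * avg Ω u x) (Ioo 0 1) := h.fw_cont.mul (h.avg_cont hu)
  apply intervalIntegral.integral_hasDerivAt_right
  · exact h.ii hu le_rfl zero_le_one hx.1.le hx.2.le
  · exact hc.stronglyMeasurableAtFilter isOpen_Ioo x hx
  · exact hc.continuousAt (isOpen_Ioo.mem_nhds hx)

theorem PP_cont (h : Dom Ω ε) {u : E2 → ℝ} (hu : ContinuousOn u (closure Ω)) :
    ContinuousOn (PP Ω u) (Icc 0 1) := by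
  have := intervalIntegral.continuousOn_primitive_interval' (h.ii hu le_rfl zero_le_one zero_le_one le_rfl) (a := 0) (by simp)
  rwa [uIcc_of_le zero_le_one] at this

theorem PP_one (h : Dom Ω ε) {u : E2 → ℝ} (hu : ContinuousOn u (closure Ω)) :
    PP Ω u 1 = ∫ p in Ω, u p := by
  unfold PP
  rw [h.fubini hu, intervalIntegral.integral_of_le zero_le_one, integral_Ioc_eq_integral_Ioo]

theorem G_eq (h : Dom Ω ε) {u : E2 → ℝ} {lam : ℝ} (he : Eig Ω u lam) {x : ℝ} (hx : x ∈ Ioo (0:ℝ) 1) :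
    fw Ω x * avg Ω (DD Ω 0 u) x = - (lam * PP Ω u x) := by
  have hu := he.sm.cont
  have hD := (h.sm_D he.sm 0).cont
  have hPc := h.PP_cont hu
  set H : ℝ → ℝ := fun x => fw Ω x * avg Ω (DD Ω 0 u) x + lam * PP Ω u x with hH
  have hHc : ContinuousOn H (Ioo 0 1) :=
    (h.fw_cont.mul (h.avg_cont hD)).add ((hPc.mono Ioo_subset_Icc_self).const_smul lam)
  have key : ∀ᵐ x, x ∈ Ioo (0:ℝ) 1 → H x = 0 := by
    apply isOpen_Ioo.ae_eq_zero_of_integral_contDiff_smul_eq_zero (hHc.locallyIntegrableOn measurableSet_Ioo)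
    intro φ hφ hφc hφs
    set χ : ℝ → ℝ := fun x => ∫ s in (0:ℝ)..x, φ s with hχ
    have hd : ∀ x, HasDerivAt χ (φ x) x := fun x => (hφ.continuous.integral_hasStrictDerivAt 0 x).hasDerivAt
    have hde : deriv χ = φ := funext fun x => (hd x).deriv
    have hχs : ContDiff ℝ (⊤:ℕ∞) χ := by
      rw [contDiff_infty_iff_deriv]
      exact ⟨fun x => (hd x).differentiableAt, hde ▸ hφ⟩
    have hw := he.weak _ (sm_chi hχs 0)
    have e1 : ∫ p in Ω, (DD Ω 0 u p * DD Ω 0 (fun p => χ (p 0)) p + DD Ω 1 u p * DD Ω 1 (fun p => χ (p 0)) p)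
        = ∫ p in Ω, φ (p 0) * DD Ω 0 u p := by
      apply setIntegral_congr_fun h.op.measurableSet
      intro p hp
      simp only [h.D_chi hχs _ _ (subset_closure hp), hde]
      simp [mul_comm]
    rw [e1, h.fubini_mul hD hφ.continuous] at hw
    simp_rw [mul_comm (u _)] at hw
    rw [h.fubini_mul hu hχs.continuous] at hw
    have ibp := intervalIntegral.integral_mul_deriv_eq_deriv_mul_of_hasDerivAt (a := 0) (b := 1)
      (u := χ) (v := PP Ω u) (u' := φ) (v' := fun x => fw Ω x * avg Ω u x)
      hχs.continuous.continuousOn (by rw [uIcc_of_le zero_le_one]; exact hPc)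
      (fun x _ => hd x) (fun x hx => h.PP_deriv hu (by simpa using hx))
      (hφ.continuous.intervalIntegrable _ _) (h.ii hu le_rfl zero_le_one zero_le_one le_rfl)
    rw [h.PP_one hu, he.mean] at ibp
    have c0 : χ 0 = 0 := by simp [hχ]
    rw [c0] at ibp
    simp only [mul_zero, zero_mul, sub_zero, zero_sub] at ibp
    rw [intervalIntegral.integral_of_le zero_le_one, integral_Ioc_eq_integral_Ioo,
      intervalIntegral.integral_of_le zero_le_one, integral_Ioc_eq_integral_Ioo] at ibp
    rw [ibp] at hw
    have e2 : ∫ x, φ x • H x = ∫ x in Ioo (0:ℝ) 1, φ x • H x := by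
      symm
      apply setIntegral_eq_integral_of_forall_compl_eq_zero
      intro x hx
      have : φ x = 0 := by
        by_contra hne
        exact hx (hφs (subset_tsupport _ hne))
      simp [this]
    rw [e2]
    obtain ⟨Bφ, hBφ⟩ := hφc.exists_bound_of_continuous hφ.continuous
    have j1 : IntegrableOn (fun x => φ x * (fw Ω x * avg Ω (DD Ω 0 u) x)) (Ioo 0 1) :=
      (h.integrand_int hD).bdd_mul hφ.continuous.aestronglyMeasurable (ae_of_all _ hBφ)
    have j2 : IntegrableOn (fun x => φ x * PP Ω u x) (Ioo 0 1) :=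
      ((hφ.continuous.continuousOn.mul hPc).integrableOn_compact isCompact_Icc).mono_set Ioo_subset_Icc_self
    have e3 : ∀ x, φ x • H x = φ x * (fw Ω x * avg Ω (DD Ω 0 u) x) + lam * (φ x * PP Ω u x) := by
      intro x; simp only [hH, smul_eq_mul]; ring
    simp_rw [e3]
    rw [integral_add j1 (j2.const_mul lam), integral_const_mul, hw]
    ring
  have : EqOn H (fun _ => 0) (Ioo 0 1) := by
    refine Measure.eqOn_open_of_ae_eq (μ := volume) ?_ isOpen_Ioo hHc continuousOn_const
    exact (ae_restrict_iff' measurableSet_Ioo).2 key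
  have := this hx
  simp only [hH] at this
  linarith

theorem dini (h : Dom Ω ε) {u : E2 → ℝ} (hu : Sm Ω u) {B x d : ℝ} (hB : 0 ≤ B)
    (hg : ∀ p ∈ Ω, |DD Ω 1 u p| ≤ B * max (min (p 0) (1 - p 0)) ε)
    (hd : d = min x (1 - x)) (hdε : ε ≤ d) {κ : ℝ} (hκ : 0 < κ) :
    ∀ᶠ z in 𝓝[>] x, |avg Ω u z - avg Ω u x - (z - x) * avg Ω (DD Ω 0 u) x| ≤ (4 * B * ε + κ) * (z - x) := by
  have hε := h.pos
  have hd0 : 0 < d := by linarith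
  have hdx : d ≤ x := hd ▸ min_le_left _ _
  have hdx' : d ≤ 1 - x := hd ▸ min_le_right _ _
  have hx : x ∈ Ioo (0:ℝ) 1 := ⟨by linarith, by linarith⟩
  have hfc : ContinuousOn (fderivWithin ℝ u (closure Ω)) (closure Ω) :=
    ContDiffOn.continuousOn_fderivWithin hu h.ud (by simp)
  have huc := h.cpt.uniformContinuousOn_of_continuous hfc
  rw [Metric.uniformContinuousOn_iff] at huc
  obtain ⟨δ, hδ, hδ'⟩ := huc (κ/5) (by linarith)
  have hev : ∀ᶠ z in 𝓝[>] x, z ∈ Ioo x (min ((1+x)/2) (x + δ/5)) :=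
    Ioo_mem_nhdsGT (lt_min (by linarith) (by linarith))
  filter_upwards [hev] with z hz
  obtain ⟨hz1, hz2⟩ := hz
  have hz3 : z < (1+x)/2 := hz2.trans_le (min_le_left _ _)
  have hz4 : z < x + δ/5 := hz2.trans_le (min_le_right _ _)
  have hzm : z ∈ Ioo (0:ℝ) 1 := ⟨by linarith, by linarith⟩
  have sa := h.fa_slope hd0 hdx hdx' hz1 hz3
  have sb := h.fb_slope hd0 hdx hdx' hz1 hz3
  have hzx : 0 < z - x := by linarith
  have pt : ∀ t ∈ Ioo (0:ℝ) 1, |u (mk2 z (fa Ω z + t * fw Ω z)) - u (mk2 x (fa Ω x + t * fw Ω x))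
      - (z - x) * DD Ω 0 u (mk2 x (fa Ω x + t * fw Ω x))| ≤ (4 * B * ε + κ) * (z - x) := by
    intro t ht
    set q := mk2 z (fa Ω z + t * fw Ω z) with hq
    set p := mk2 x (fa Ω x + t * fw Ω x) with hp
    have hqm : q ∈ Ω := h.pt_mem hzm ht
    have hpm : p ∈ Ω := h.pt_mem hx ht
    set e := (fa Ω z + t * fw Ω z) - (fa Ω x + t * fw Ω x) with he
    have hsub : q - p = mk2 (z - x) e := by rw [hq, hp, mk2_sub]
    have hey : |e| ≤ 4 * ε / d * (z - x) := by
      have : e = (1-t) * (fa Ω z - fa Ω x) + t * (fb Ω z - fb Ω x) := by rw [he]; unfold fw; ring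
      rw [this]
      refine (abs_add_le _ _).trans ?_
      rw [abs_mul, abs_mul, abs_of_pos ht.1, abs_of_pos (by linarith [ht.2] : 0 < 1 - t)]
      nlinarith [ht.1, ht.2, mul_le_mul_of_nonneg_left sa (by linarith [ht.2] : 0 ≤ 1 - t),
        mul_le_mul_of_nonneg_left sb ht.1.le]
    have h4 : 4 * ε / d ≤ 4 := by rw [div_le_iff₀ hd0]; linarith
    have hn : ‖q - p‖ ≤ 5 * (z - x) := by
      rw [hsub]
      refine (mk2_norm_le _ _).trans ?_
      rw [abs_of_pos hzx]
      nlinarith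
    have mv := (h.cv.closure.inter (convex_ball p δ)).norm_image_sub_le_of_norm_hasFDerivWithin_le'
      (f := u) (f' := fun y => fderivWithin ℝ u (closure Ω) y) (φ := fderivWithin ℝ u (closure Ω) p) (C := κ/5)
      (fun y hy => ((hu.diff y hy.1).hasFDerivWithinAt).mono inter_subset_left)
      (fun y hy => by
        have := hδ' y hy.1 p (subset_closure hpm) hy.2
        rw [dist_eq_norm] at this
        exact this.le)
      (x := p) (y := q) ⟨subset_closure hpm, Metric.mem_ball_self hδ⟩
      ⟨subset_closure hqm, by rw [Metric.mem_ball, dist_eq_norm]; linarith⟩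
    rw [lin2, hsub, mk2_zero, mk2_one] at mv
    change |u q - u p - (DD Ω 0 u p * (z - x) + DD Ω 1 u p * e)| ≤ _ at mv
    rw [← hsub] at mv
    have hD1 : |DD Ω 1 u p * e| ≤ 4 * B * ε * (z - x) := by
      rw [abs_mul]
      have g := hg p hpm
      rw [hp, mk2_zero, ← hd, max_eq_left hdε, ← hp] at g
      calc |DD Ω 1 u p| * |e| ≤ (B * d) * (4 * ε / d * (z - x)) := by gcongr
        _ = _ := by field_simp
    have mv2 : |u q - u p - (DD Ω 0 u p * (z - x) + DD Ω 1 u p * e)| ≤ κ * (z - x) := mv.trans (by nlinarith)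
    rw [abs_le] at mv2 hD1 ⊢
    constructor <;> linarith [mv2.1, mv2.2, hD1.1, hD1.2]
  have i1 := h.sec_int hu.cont hzm
  have i2 := h.sec_int hu.cont hx
  have i3 := (h.sec_int (h.sm_D hu 0).cont hx).const_mul (z - x)
  have eq : avg Ω u z - avg Ω u x - (z - x) * avg Ω (DD Ω 0 u) x =
      ∫ t in (0:ℝ)..1, (u (mk2 z (fa Ω z + t * fw Ω z)) - u (mk2 x (fa Ω x + t * fw Ω x))
      - (z - x) * DD Ω 0 u (mk2 x (fa Ω x + t * fw Ω x))) := by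
    rw [intervalIntegral.integral_sub (i1.sub i2) i3, intervalIntegral.integral_sub i1 i2,
      intervalIntegral.integral_const_mul]
    rfl
  rw [eq, ← Real.norm_eq_abs]
  have := intervalIntegral.norm_integral_le_of_norm_le (a := (0:ℝ)) (b := 1) (μ := volume) zero_le_one
    (f := fun t => (u (mk2 z (fa Ω z + t * fw Ω z)) - u (mk2 x (fa Ω x + t * fw Ω x))
      - (z - x) * DD Ω 0 u (mk2 x (fa Ω x + t * fw Ω x))))
    (g := fun _ => (4 * B * ε + κ) * (z - x)) ?_ intervalIntegrable_const
  · simpa using this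
  · have : ∀ᵐ t : ℝ, t ≠ 1 := by simp [ae_iff]
    filter_upwards [this] with t ht1 ht
    exact pt t ⟨ht.1, lt_of_le_of_ne ht.2 ht1⟩

theorem ray_cut (h : Dom Ω ε) {u : E2 → ℝ} {lam : ℝ} (he : Eig Ω u lam) {χ : ℝ → ℝ}
    (hχ : ContDiff ℝ (⊤:ℕ∞) χ) (b : ℝ) :
    lam * (b * (∫ p in Ω, (χ (p 0))^2 * (u p + b)) - (∫ p in Ω, χ (p 0) * (u p + b))^2 / (∫ p in Ω, (1:ℝ)))
      ≤ ∫ p in Ω, (deriv χ (p 0))^2 * (u p + b)^2 := by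
  have sχ : Sm Ω (fun p => χ (p 0)) := sm_chi hχ 0
  have sχ' : Sm Ω (fun p => deriv χ (p 0)) := sm_chi ((contDiff_infty_iff_deriv.1 hχ).2) 0
  have sv : Sm Ω (fun p => u p + b) := he.sm.add (Sm.const b)
  have sχv := sχ.mul sv
  have sχ2v := sχ.mul sχv
  have W := h.W_pos
  have r := he.ray _ (sχv.add ((Sm.const (-b)).mul (Sm.const (Ω := Ω) 1)))
  have w := he.weak _ sχ2v
  rw [h.sq_expand sχv (Sm.const (Ω := Ω) 1), h.lin_expand sχv (Sm.const (Ω := Ω) 1)] at r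
  have Dv : ∀ i, ∀ p ∈ Ω, DD Ω i (fun q => χ (q 0) * (u q + b)) p = χ (p 0) * DD Ω i u p +
      (if i = 0 then deriv χ (p 0) else 0) * (u p + b) := by
    intro i p hp
    have hp' := subset_closure hp
    rw [h.D_mul sχ sv i hp', h.D_add he.sm (Sm.const b) i hp', D_const, h.D_chi hχ 0 i hp']
    ring
  have Dv2 : ∀ i, ∀ p ∈ Ω, DD Ω i (fun q => χ (q 0) * (χ (q 0) * (u q + b))) p = (χ (p 0))^2 * DD Ω i u p +
      2 * χ (p 0) * (if i = 0 then deriv χ (p 0) else 0) * (u p + b) := by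
    intro i p hp
    have hp' := subset_closure hp
    rw [h.D_mul sχ sχv i hp', Dv i p hp, h.D_chi hχ 0 i hp']
    ring
  have Dpsi : ∀ i, ∀ p ∈ Ω, DD Ω i (fun q => χ (q 0) * (u q + b) + -b * 1) p = χ (p 0) * DD Ω i u p +
      (if i = 0 then deriv χ (p 0) else 0) * (u p + b) := by
    intro i p hp
    have hp' := subset_closure hp
    rw [h.D_add sχv ((Sm.const (-b)).mul (Sm.const (Ω := Ω) 1)) i hp', Dv i p hp]
    rw [D_const, add_zero]
  have en : ∫ p in Ω, ((DD Ω 0 (fun q => χ (q 0) * (u q + b) + -b * 1) p)^2 +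
      (DD Ω 1 (fun q => χ (q 0) * (u q + b) + -b * 1) p)^2) =
      (∫ p in Ω, (DD Ω 0 u p * DD Ω 0 (fun q => χ (q 0) * (χ (q 0) * (u q + b))) p +
        DD Ω 1 u p * DD Ω 1 (fun q => χ (q 0) * (χ (q 0) * (u q + b))) p)) +
      ∫ p in Ω, (deriv χ (p 0))^2 * (u p + b)^2 := by
    have j1 := h.gr_int he.sm sχ2v
    have j2 : IntegrableOn (fun p => (deriv χ (p 0))^2 * (u p + b)^2) Ω :=
      h.intOn ((sχ'.cont.pow 2).mul (sv.cont.pow 2))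
    rw [← integral_add j1 j2]
    apply setIntegral_congr_fun h.op.measurableSet
    intro p hp
    simp only [Dpsi _ p hp, Dv2 _ p hp]
    simp
    ring
  rw [en, w] at r
  -- u * (χ (χ v)) = χ v ^2 - b χ² v
  have e1 : ∫ p in Ω, u p * (χ (p 0) * (χ (p 0) * (u p + b))) =
      (∫ p in Ω, (χ (p 0) * (u p + b))^2) - b * ∫ p in Ω, (χ (p 0))^2 * (u p + b) := by
    have j1 := h.intOn (sχv.mul sχv).cont
    have j2 : IntegrableOn (fun p => (χ (p 0))^2 * (u p + b)) Ω :=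
      h.intOn ((sχ.cont.pow 2).mul sv.cont)
    simp only [← sq] at j1
    rw [← integral_const_mul, ← integral_sub j1 (j2.const_mul b)]
    apply setIntegral_congr_fun h.op.measurableSet
    intro p hp
    ring_nf
  rw [e1] at r
  simp only [mul_one, one_pow] at r
  have z : ((∫ p in Ω, χ (p 0) * (u p + b)) + -b * ∫ p in Ω, (1:ℝ))^2 / (∫ p in Ω, (1:ℝ)) =
    (∫ p in Ω, χ (p 0) * (u p + b))^2/ (∫ p in Ω, (1:ℝ)) - 2 * b * (∫ p in Ω, χ (p 0) * (u p + b))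
      + b^2 * (∫ p in Ω, (1:ℝ)) := by
    field_simp; ring
  rw [z] at r
  linarith

end Dom

theorem second_deriv_nonpos {f f' : ℝ → ℝ} {c : ℝ} (hm : IsLocalMax f 0)
    (h1 : ∀ᶠ s in 𝓝 0, HasDerivAt f (f' s) s) (h2 : HasDerivAt f' c 0) : c ≤ 0 := by
  by_contra hc
  push Not at hc
  have e : deriv f =ᶠ[𝓝 0] f' := h1.mono fun s hs => hs.deriv
  have hdd : deriv (deriv f) 0 = c := by rw [e.deriv_eq, h2.deriv]
  have hmin := isLocalMin_of_deriv_deriv_pos (f := f) (x₀ := 0) (by rw [hdd]; exact hc) hm.deriv_eq_zero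
    h1.self_of_nhds.continuousAt
  have hconst : f =ᶠ[𝓝 0] fun _ => f 0 := by
    filter_upwards [hm, hmin] with s a b using le_antisymm a b
  have : deriv (deriv f) 0 = 0 := by
    have : deriv f =ᶠ[𝓝 0] fun _ => 0 := by
      have := hconst.deriv
      simpa using this
    rw [this.deriv_eq]; simp
  linarith

namespace Dom
variable {Ω : Set E2} {ε : ℝ}

theorem D_congr (h : Dom Ω ε) {f g : E2 → ℝ} (i : Fin 2) (hfg : ∀ p ∈ Ω, f p = g p) {p : E2} (hp : p ∈ Ω) :
    DD Ω i f p = DD Ω i g p := by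
  rw [h.D_eq f i hp, h.D_eq g i hp]
  have : f =ᶠ[𝓝 p] g := by
    filter_upwards [h.op.mem_nhds hp] with q hq using hfg q hq
  rw [this.fderiv_eq]

theorem D_comm (h : Dom Ω ε) {f : E2 → ℝ} (hf : Sm Ω f) (i j : Fin 2) {p : E2} (hp : p ∈ Ω) :
    DD Ω i (DD Ω j f) p = DD Ω j (DD Ω i f) p := by
  have hc : ContDiffAt ℝ (⊤:ℕ∞) f p := ContDiffOn.contDiffAt hf (h.nhds hp)
  have hs : IsSymmSndFDerivAt ℝ f p := hc.isSymmSndFDerivAt (by simp; exact WithTop.coe_le_coe.2 (le_top : (2:ℕ∞) ≤ ⊤))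
  have hd : DifferentiableAt ℝ (fderiv ℝ f) p := by
    have := hc.fderiv_right (m := ((⊤:ℕ∞) : WithTop ℕ∞)) (by simp)
    exact this.differentiableAt (by simp)
  have key : ∀ i j, DD Ω i (DD Ω j f) p = fderiv ℝ (fderiv ℝ f) p (EuclideanSpace.single i 1) (EuclideanSpace.single j 1) := by
    intro i j
    rw [h.D_congr i (fun q hq => h.D_eq f j hq) hp, h.D_eq _ i hp]
    rw [fderiv_clm_apply hd (differentiableAt_const _)]
    simp
  rw [key, key]
  exact hs _ _

theorem line_deriv (h : Dom Ω ε) {f : E2 → ℝ} (hf : Sm Ω f) (i : Fin 2) {p : E2} {s : ℝ}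
    (hs : p + s • EuclideanSpace.single i (1:ℝ) ∈ Ω) :
    HasDerivAt (fun s : ℝ => f (p + s • EuclideanSpace.single i (1:ℝ)))
      (DD Ω i f (p + s • EuclideanSpace.single i (1:ℝ))) s := by
  rw [h.D_eq f i hs]
  have hd : DifferentiableAt ℝ f (p + s • EuclideanSpace.single i (1:ℝ)) :=
    (hf.diff _ (subset_closure hs)).differentiableAt (h.nhds hs)
  have hl : HasDerivAt (fun s : ℝ => p + s • EuclideanSpace.single i (1:ℝ)) (EuclideanSpace.single i (1:ℝ)) s := by
    simpa using ((hasDerivAt_id s).smul_const (EuclideanSpace.single i (1:ℝ))).const_add p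
  exact hd.hasFDerivAt.comp_hasDerivAt s hl

theorem DD_nonpos (h : Dom Ω ε) {g : E2 → ℝ} (hg : Sm Ω g) (i : Fin 2) {p : E2} (hp : p ∈ Ω)
    (hm : ∀ q ∈ Ω, g q ≤ g p) : DD Ω i (DD Ω i g) p ≤ 0 := by
  have hc : Continuous (fun s : ℝ => p + s • EuclideanSpace.single i (1:ℝ)) := by fun_prop
  have hev : ∀ᶠ s in 𝓝 (0:ℝ), p + s • EuclideanSpace.single i (1:ℝ) ∈ Ω := by
    apply hc.continuousAt.eventually_mem
    simpa using h.op.mem_nhds hp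
  have := second_deriv_nonpos (f := fun s : ℝ => g (p + s • EuclideanSpace.single i (1:ℝ)))
    (f' := fun s : ℝ => DD Ω i g (p + s • EuclideanSpace.single i (1:ℝ)))
    (c := DD Ω i (DD Ω i g) (p + (0:ℝ) • EuclideanSpace.single i (1:ℝ))) ?_ ?_ ?_
  · simpa using this
  · filter_upwards [hev] with s hs
    simpa using hm _ hs
  · filter_upwards [hev] with s hs using h.line_deriv hg i hs
  · exact h.line_deriv (h.sm_D hg i) i (by simpa using hp)

theorem max_princ (h : Dom Ω ε) {v : E2 → ℝ} (hv : Sm Ω v) {lam k K : ℝ}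
    (hl : ∀ p ∈ Ω, DD Ω 0 (DD Ω 0 v) p + DD Ω 1 (DD Ω 1 v) p = - (lam * v p))
    (hk : lam < k^2) (hk0 : 0 < k) (hkε : k * ε ≤ 1) (hK : 0 ≤ K)
    (hb : ∀ p ∈ frontier Ω, v p ≤ K) : ∀ p ∈ Ω, v p ≤ 2 * K := by
  set c : ℝ → ℝ := fun y => Real.cos (k * y) with hc
  have hcs : ContDiff ℝ (⊤:ℕ∞) c := by fun_prop
  have hc1 : deriv c = fun y => - k * Real.sin (k * y) := by
    funext y
    have : HasDerivAt c (-Real.sin (k*y) * k) y := by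
      have := (Real.hasDerivAt_cos (k*y)).comp y ((hasDerivAt_id y).const_mul k)
      simpa [Function.comp_def] using this
    rw [this.deriv]; ring
  have hcs1 : ContDiff ℝ (⊤:ℕ∞) (deriv c) := by rw [hc1]; fun_prop
  have hc2 : deriv (deriv c) = fun y => - k^2 * c y := by
    funext y
    rw [hc1]
    have : HasDerivAt (fun y => - k * Real.sin (k * y)) (-k * (Real.cos (k*y) * k)) y := by
      have := ((Real.hasDerivAt_sin (k*y)).comp y ((hasDerivAt_id y).const_mul k)).const_mul (-k)
      simpa [Function.comp_def] using this
    rw [this.deriv, hc]; ring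
  set H : E2 → ℝ := fun p => c (p 1) with hH
  have sH : Sm Ω H := sm_chi hcs 1
  have hHpos : ∀ p ∈ closure Ω, 1/2 ≤ H p := by
    have hcl : IsClosed {p : E2 | 1/2 ≤ H p} := by
      apply isClosed_le continuous_const
      exact hcs.continuous.comp (by fun_prop)
    apply closure_minimal _ hcl
    intro p hp
    have := (h.sub (p 0) (p 1) (by rwa [mk2_eta])).2
    have h1 : (k * p 1)^2 ≤ 1 := by
      rw [sq_le_one_iff_abs_le_one, abs_mul, abs_of_pos hk0]
      have : |p 1| ≤ ε := abs_le.2 ⟨this.1.le, this.2.le⟩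
      nlinarith
    have := Real.one_sub_sq_div_two_le_cos (x := k * p 1)
    change 1/2 ≤ Real.cos (k * p 1)
    linarith
  obtain ⟨p, hp, hmax⟩ := h.cpt.exists_isMaxOn (h.nonempty.mono subset_closure)
    (f := fun p => v p / H p) (hv.cont.div sH.cont fun p hp => by linarith [hHpos p hp])
  set m := v p / H p with hm
  have hvm : ∀ q ∈ closure Ω, v q ≤ m * H q := by
    intro q hq
    have : v q / H q ≤ m := hmax hq
    rwa [div_le_iff₀ (by linarith [hHpos q hq])] at this
  have hvp : v p = m * H p := by rw [hm, div_mul_cancel₀]; linarith [hHpos p hp]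
  have hHle : ∀ q, H q ≤ 1 := fun q => Real.cos_le_one _
  have hm2 : m ≤ 2 * K := by
    by_contra hcon
    push Not at hcon
    by_cases hpΩ : p ∈ Ω
    · set g : E2 → ℝ := fun q => v q + (-m) * H q with hg
      have sg : Sm Ω g := hv.add ((Sm.const (-m)).mul sH)
      have hgD : ∀ i, ∀ q ∈ Ω, DD Ω i (DD Ω i g) q = DD Ω i (DD Ω i v) q + (-m) * DD Ω i (DD Ω i H) q := by
        intro i q hq
        have a : ∀ f : E2 → ℝ, Sm Ω f → ∀ r ∈ Ω, DD Ω i (fun q => -m * f q) r = -m * DD Ω i f r := by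
          intro f hf r hr
          rw [h.D_mul (Sm.const (-m)) hf i (subset_closure hr), D_const]; ring
        have s1 : ∀ r ∈ Ω, DD Ω i g r = DD Ω i v r + -m * DD Ω i H r := by
          intro r hr
          rw [hg, h.D_add hv ((Sm.const (-m)).mul sH) i (subset_closure hr), a H sH r hr]
        rw [h.D_congr i s1 hq, h.D_add (h.sm_D hv i) ((Sm.const (-m)).mul (h.sm_D sH i)) i (subset_closure hq),
          a _ (h.sm_D sH i) q hq]
      have hle : ∀ q ∈ Ω, g q ≤ g p := by
        intro q hq
        have := hvm q (subset_closure hq)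
        simp only [hg]; linarith
      have d0 := h.DD_nonpos sg 0 hpΩ hle
      have d1 := h.DD_nonpos sg 1 hpΩ hle
      rw [hgD _ p hpΩ] at d0 d1
      have H0 : DD Ω 0 (DD Ω 0 H) p = 0 := by
        rw [h.D_congr 0 (g := fun _ => 0) (fun q hq => by
          rw [hH, h.D_chi hcs 1 0 (subset_closure hq)]; simp) hpΩ, D_const]
      have H1 : DD Ω 1 (DD Ω 1 H) p = -k^2 * H p := by
        rw [h.D_congr 1 (g := fun q => deriv c (q 1)) (fun q hq => by
          rw [hH, h.D_chi hcs 1 1 (subset_closure hq)]; simp) hpΩ, h.D_chi hcs1 1 1 hp, hc2]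
        simp [hH]
      rw [H0] at d0
      rw [H1] at d1
      have := hl p hpΩ
      rw [hvp] at this
      have hmp : 0 < m * H p := mul_pos (by linarith) (by linarith [hHpos p hp])
      nlinarith
    · have hfr : p ∈ frontier Ω := ⟨hp, by rwa [h.op.interior_eq]⟩
      have := hb p hfr
      have := hHpos p hp
      nlinarith
  intro q hq
  have h1 := hvm q (subset_closure hq)
  have h2 := hHpos q (subset_closure hq)
  have h3 := hHle q
  nlinarith

theorem lap_D (h : Dom Ω ε) {u : E2 → ℝ} {lam : ℝ} (he : Eig Ω u lam) (j : Fin 2) {p : E2} (hp : p ∈ Ω) :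
    DD Ω 0 (DD Ω 0 (DD Ω j u)) p + DD Ω 1 (DD Ω 1 (DD Ω j u)) p = - (lam * DD Ω j u p) := by
  have c : ∀ i, DD Ω i (DD Ω i (DD Ω j u)) p = DD Ω j (DD Ω i (DD Ω i u)) p := by
    intro i
    rw [h.D_congr i (fun q hq => h.D_comm he.sm i j hq) hp, h.D_comm (h.sm_D he.sm i) i j hp]
  rw [c, c]
  have s : ∀ i, Sm Ω (DD Ω i (DD Ω i u)) := fun i => h.sm_D (h.sm_D he.sm i) i
  rw [← h.D_add (s 0) (s 1) j (subset_closure hp),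
    h.D_congr j (g := fun q => (-lam) * u q) (fun q hq => by rw [he.lap q hq]; ring) hp,
    h.D_mul (Sm.const _) he.sm j (subset_closure hp), D_const]
  ring

end Dom

def gau (z : E2) : ℝ := Real.exp (-‖z‖^2)

theorem gau_pos (z : E2) : 0 < gau z := Real.exp_pos _
theorem gau_cont : Continuous gau := by unfold gau; fun_prop

theorem gau_int : Integrable (fun z : E2 => (1 + 2 * ‖z‖) * gau z) := by
  have h := GaussianFourier.integrable_cexp_neg_mul_sq_norm_add (V := E2) (b := ((1/2 : ℝ):ℂ)) (by simp) 0 0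
  have h2 := h.norm
  have h3 : Integrable (fun z : E2 => 2 * Real.exp (-(1/2) * ‖z‖^2)) := by
    refine (h2.congr (Eventually.of_forall fun z => ?_)).const_mul 2
    simp only [Complex.norm_exp]
    congr 1
    simp [← Complex.ofReal_pow]
  refine h3.mono' (by apply Continuous.aestronglyMeasurable; have := gau_cont; fun_prop) (Eventually.of_forall fun z => ?_)
  rw [Real.norm_of_nonneg (mul_nonneg (by positivity) (gau_pos z).le)]
  have e1 := Real.add_one_le_exp ((1/2) * ‖z‖^2)
  have e2 : gau z = Real.exp (-(1/2) * ‖z‖^2) * Real.exp (-((1/2) * ‖z‖^2)) := by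
    rw [gau, ← Real.exp_add]; congr 1; ring
  have e3 : Real.exp ((1/2) * ‖z‖^2) * Real.exp (-((1/2) * ‖z‖^2)) = 1 := by
    rw [← Real.exp_add]; simp
  rw [e2]
  have e4 : (1 + 2 * ‖z‖) ≤ 2 * Real.exp ((1/2) * ‖z‖^2) := by nlinarith [sq_nonneg (‖z‖ - 1)]
  calc (1 + 2 * ‖z‖) * (Real.exp (-(1/2) * ‖z‖^2) * Real.exp (-((1/2) * ‖z‖^2))) 
      ≤ (2 * Real.exp ((1/2) * ‖z‖^2)) * (Real.exp (-(1/2) * ‖z‖^2) * Real.exp (-((1/2) * ‖z‖^2))) := by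
        gcongr
    _ = 2 * Real.exp (-(1/2) * ‖z‖^2) * (Real.exp ((1/2) * ‖z‖^2) * Real.exp (-((1/2) * ‖z‖^2))) := by ring
    _ ≤ _ := by rw [e3]; simp

theorem gau_lin_int (X : E2) : Integrable (fun z : E2 => ⟪X, z⟫ * gau z) := by
  refine (gau_int.const_mul ‖X‖).mono' (by apply Continuous.aestronglyMeasurable; have := gau_cont; fun_prop) (Eventually.of_forall fun z => ?_)
  rw [norm_mul, Real.norm_of_nonneg (gau_pos z).le]
  have := norm_inner_le_norm (𝕜 := ℝ) X z
  have g := (gau_pos z).le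
  have : ‖⟪X, z⟫‖ ≤ ‖X‖ * (1 + 2 * ‖z‖) := by nlinarith [norm_nonneg X, norm_nonneg z, mul_nonneg (norm_nonneg X) (norm_nonneg z)]
  nlinarith

theorem half_gauss (n V : E2) (hn : n ≠ 0)
    (h : ∫ z in {z : E2 | ⟪n, z⟫ < 0}, ⟪V, z⟫ * gau z = 0) : ⟪n, V⟫ = 0 := by
  set H := {z : E2 | ⟪n, z⟫ < 0} with hH
  have hHm : IsOpen H := isOpen_lt (by fun_prop) continuous_const
  set K : Submodule ℝ E2 := Submodule.span ℝ {n} with hK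
  set R := K.reflection with hR
  have hRn : R n = n := Submodule.reflection_mem_subspace_eq_self (Submodule.mem_span_singleton_self n)
  have hRR : ∀ z, R (R z) = z := fun z => Submodule.reflection_reflection K z
  have hin : ∀ X z, ⟪X, R z⟫ = ⟪R X, z⟫ := by
    intro X z
    conv_lhs => rw [← hRR X]
    exact R.inner_map_map _ _
  have h2 : ∫ z in H, ⟪R V, z⟫ * gau z = 0 := by
    have mp := R.measurePreserving
    have := mp.setIntegral_preimage_emb R.toHomeomorph.measurableEmbedding (fun z => ⟪V, z⟫ * gau z) H
    rw [h] at this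
    rw [← this]
    have e : (R : E2 → E2) ⁻¹' H = H := by
      ext z; simp only [hH, mem_preimage, mem_ofPred_eq, hin, hRn]
    rw [e]
    apply integral_congr_ae
    refine Eventually.of_forall fun z => ?_
    simp only [hin, gau, R.norm_map]
  have h3 : ∫ z in H, ⟪V + R V, z⟫ * gau z = 0 := by
    simp only [inner_add_left, add_mul]
    rw [integral_add (gau_lin_int V).integrableOn (gau_lin_int _).integrableOn, h, h2, add_zero]
  have e : V + R V = (2 * (⟪n, V⟫ / ‖n‖^2)) • n := by
    rw [hR, Submodule.reflection_apply, Submodule.starProjection_singleton, mul_smul]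
    simp [two_smul]
  rw [e] at h3
  simp only [inner_smul_left, mul_assoc] at h3
  rw [integral_const_mul] at h3
  have hneg : 0 < ∫ z in H, -(⟪n, z⟫ * gau z) := by
    rw [integral_pos_iff_support_of_nonneg_ae]
    · rw [Measure.restrict_apply' hHm.measurableSet]
      refine lt_of_lt_of_le (hHm.measure_pos volume ⟨-n, ?_⟩) (measure_mono fun z hz => ⟨?_, hz⟩)
      · simp [hH, hn]
      · have : ⟪n, z⟫ < 0 := hz
        simp [(gau_pos z).ne', this.ne]
    · refine (ae_restrict_mem hHm.measurableSet).mono fun z hz => ?_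
      have : ⟪n, z⟫ < 0 := hz
      have := gau_pos z
      simp only [Pi.zero_apply]
      nlinarith
    · exact (gau_lin_int n).integrableOn.neg
  rw [integral_neg] at hneg
  have hn2 : ‖n‖^2 ≠ 0 := by simpa using hn
  simp only [conj_trivial, mul_eq_zero] at h3
  rcases h3 with (h3 | h3) | h3
  · norm_num at h3
  · rcases div_eq_zero_iff.1 h3 with h3 | h3
    · exact h3
    · exact absurd h3 hn2
  · linarith

namespace Dom
variable {Ω : Set E2} {ε : ℝ}

theorem chi_deriv (b δ : ℝ) : deriv (fun s : ℝ => Real.exp (-((s - b)/δ)^2)) =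
    fun s => (-2 / δ) * (((s - b)/δ) * Real.exp (-((s - b)/δ)^2)) := by
  funext s
  have h1 : HasDerivAt (fun s : ℝ => (s - b)/δ) (1/δ) s := ((hasDerivAt_id s).sub_const b).div_const δ
  have h2 := ((h1.pow 2).neg).exp
  have h3 : HasDerivAt (fun s : ℝ => Real.exp (-((s - b)/δ)^2)) _ s := h2
  rw [h3.deriv]
  simp; ring

theorem blow_zero (h : Dom Ω ε) {u : E2 → ℝ} {lam : ℝ} (he : Eig Ω u lam) (a : E2) {δ : ℝ} (hδ : 0 < δ) :
    ∫ z, Ω.indicator (fun p => DD Ω 0 u p * (δ⁻¹ • (p - a)) 0 + DD Ω 1 u p * (δ⁻¹ • (p - a)) 1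
      + δ/2*lam*u p) (a + δ • z) * gau z = 0 := by
  set G : E2 → ℝ := Ω.indicator (fun p => (DD Ω 0 u p * (δ⁻¹ • (p - a)) 0 + DD Ω 1 u p * (δ⁻¹ • (p - a)) 1
      + δ/2*lam*u p) * gau (δ⁻¹ • (p - a))) with hG
  have e : (fun z : E2 => Ω.indicator (fun p => DD Ω 0 u p * (δ⁻¹ • (p - a)) 0 + DD Ω 1 u p * (δ⁻¹ • (p - a)) 1
      + δ/2*lam*u p) (a + δ • z) * gau z) = fun z => (fun p => G (a + p)) (δ • z) := by
    funext z
    simp only [hG, indicator]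
    have : δ⁻¹ • (a + δ • z - a) = z := by
      rw [add_sub_cancel_left, smul_smul, inv_mul_cancel₀ hδ.ne', one_smul]
    rw [this]
    split_ifs <;> simp
  rw [e, Measure.integral_comp_smul volume (fun p => G (a + p)) δ, integral_add_left_eq_self G a]
  have : ∫ p, G p = 0 := by
    rw [hG, integral_indicator h.op.measurableSet]
    set χ : Fin 2 → ℝ → ℝ := fun i s => Real.exp (-((s - a i)/δ)^2) with hχ
    have sχ : ∀ i, ContDiff ℝ (⊤:ℕ∞) (χ i) := by intro i; simp only [hχ]; fun_prop
    have sφ : Sm Ω (fun p => χ 0 (p 0) * χ 1 (p 1)) := (sm_chi (sχ 0) 0).mul (sm_chi (sχ 1) 1)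
    have w := he.weak _ sφ
    have hg : ∀ p, gau (δ⁻¹ • (p - a)) = χ 0 (p 0) * χ 1 (p 1) := by
      intro p
      simp only [gau, hχ]
      rw [← Real.exp_add, EuclideanSpace.norm_sq_eq, Fin.sum_univ_two]
      congr 1
      simp only [Real.norm_eq_abs, sq_abs, PiLp.smul_apply, PiLp.sub_apply, smul_eq_mul]
      ring
    have i1 := h.gr_int he.sm sφ
    have i2 := (h.intOn (he.sm.mul sφ).cont).const_mul lam
    have : ∫ p in Ω, (-(δ/2)) * ((DD Ω 0 u p * DD Ω 0 (fun p => χ 0 (p 0) * χ 1 (p 1)) p + DD Ω 1 u p * DD Ω 1 (fun p => χ 0 (p 0) * χ 1 (p 1)) p) - lam * (u p * (χ 0 (p 0) * χ 1 (p 1)))) = 0 := by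
      rw [integral_const_mul, integral_sub i1 i2, w, integral_const_mul]; ring
    rw [← this]
    apply setIntegral_congr_fun h.op.measurableSet
    intro p hp
    have hp' := subset_closure hp
    simp only
    rw [h.D_mul (sm_chi (sχ 0) 0) (sm_chi (sχ 1) 1) 0 hp', h.D_mul (sm_chi (sχ 0) 0) (sm_chi (sχ 1) 1) 1 hp',
      h.D_chi (sχ 0) 0 0 hp', h.D_chi (sχ 1) 1 0 hp', h.D_chi (sχ 0) 0 1 hp', h.D_chi (sχ 1) 1 1 hp', hg]
    have d0 : deriv (χ 0) (p 0) = (-2 / δ) * (((p 0 - a 0)/δ) * χ 0 (p 0)) := by rw [hχ]; simp only; rw [chi_deriv]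
    have d1 : deriv (χ 1) (p 1) = (-2 / δ) * (((p 1 - a 1)/δ) * χ 1 (p 1)) := by rw [hχ]; simp only; rw [chi_deriv]
    rw [d0, d1]
    simp
    field_simp
    ring
  rw [this, smul_zero]

open Classical in
theorem neumann (h : Dom Ω ε) {u : E2 → ℝ} {lam : ℝ} (he : Eig Ω u lam) {F : E2 → ℝ}
    (hF : ContDiff ℝ (⊤:ℕ∞) F) (hΩ : Ω = {p | F p < 0}) (hfr : frontier Ω = {p | F p = 0})
    {a : E2} (ha : a ∈ frontier Ω) (hn : gradient F a ≠ 0) :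
    ⟪gradient F a, mk2 (DD Ω 0 u a) (DD Ω 1 u a)⟫ = 0 := by
  set n := gradient F a with hndef
  have hFa : F a = 0 := by rw [hfr] at ha; exact ha
  have hcl : a ∈ closure Ω := ha.1
  have hd : ∀ z : E2, HasDerivAt (fun t : ℝ => F (a + t • z)) ⟪n, z⟫ 0 := by
    intro z
    have hdf : HasFDerivAt F (fderiv ℝ F a) (a + (0:ℝ) • z) := by
      simpa using (hF.differentiable (by simp) a).hasFDerivAt
    have hl : HasDerivAt (fun s : ℝ => a + s • z) z 0 := by
      simpa using ((hasDerivAt_id (0:ℝ)).smul_const z).const_add a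
    have := hdf.comp_hasDerivAt (0:ℝ) hl
    have e : ⟪n, z⟫ = fderiv ℝ F a z := by
      rw [hndef, gradient, InnerProductSpace.toDual_symm_apply]
    rw [e]; exact this
  have hsl : ∀ z : E2, Tendsto (fun t : ℝ => t⁻¹ * F (a + t • z)) (𝓝[>] 0) (𝓝 ⟪n, z⟫) := by
    intro z
    have := (hasDerivAt_iff_tendsto_slope.1 (hd z)).mono_left (nhdsWithin_mono _ (fun t (ht : 0 < t) => ht.ne') : 𝓝[>] (0:ℝ) ≤ 𝓝[≠] 0)
    refine this.congr fun t => ?_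
    simp [slope, hFa]
  have hneg : ∀ z : E2, ⟪n, z⟫ < 0 → ∀ᶠ t in 𝓝[>] (0:ℝ), a + t • z ∈ Ω := by
    intro z hz
    filter_upwards [(hsl z).eventually_lt_const hz, self_mem_nhdsWithin] with t h1 h2
    rw [hΩ]
    have : 0 < t⁻¹ := inv_pos.2 h2
    change F _ < 0
    by_contra hc
    push Not at hc
    nlinarith [mul_nonneg this.le hc]
  have hpos : ∀ z : E2, 0 < ⟪n, z⟫ → ∀ᶠ t in 𝓝[>] (0:ℝ), a + t • z ∉ Ω := by
    intro z hz
    filter_upwards [(hsl z).eventually_const_lt hz, self_mem_nhdsWithin] with t h1 h2 h3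
    rw [hΩ] at h3
    have : 0 < t⁻¹ := inv_pos.2 h2
    have h3' : F (a + t • z) < 0 := h3
    nlinarith
  have hne : ∀ᵐ z : E2, ⟪n, z⟫ ≠ 0 := by
    have := Measure.addHaar_submodule (volume : Measure E2) (LinearMap.ker (innerSL ℝ n : E2 →L[ℝ] ℝ).toLinearMap) (by
      intro hc
      have : n ∈ LinearMap.ker (innerSL ℝ n : E2 →L[ℝ] ℝ).toLinearMap := by rw [hc]; trivial
      simp at this
      exact hn this)
    rw [ae_iff]
    convert this using 2
    ext z; simp
  obtain ⟨B0, hB0, b0⟩ := h.bdd (h.sm_D he.sm 0).cont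
  obtain ⟨B1, hB1, b1⟩ := h.bdd (h.sm_D he.sm 1).cont
  obtain ⟨B2, hB2, b2⟩ := h.bdd he.sm.cont
  set V := mk2 (DD Ω 0 u a) (DD Ω 1 u a) with hV
  set H := {z : E2 | ⟪n, z⟫ < 0} with hH
  have hHm : IsOpen H := isOpen_lt (by fun_prop) continuous_const
  have hin : ∀ z, ⟪V, z⟫ = DD Ω 0 u a * z 0 + DD Ω 1 u a * z 1 := by
    intro z
    rw [EuclideanSpace.inner_eq_star_dotProduct]
    simp [hV, mk2_zero, mk2_one, dotProduct, mul_comm]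
  set Kf : ℝ → E2 → ℝ := fun δ z => Ω.indicator (fun p => DD Ω 0 u p * (δ⁻¹ • (p - a)) 0 + DD Ω 1 u p * (δ⁻¹ • (p - a)) 1
      + δ/2*lam*u p) (a + δ • z) * gau z with hKf
  have hKe : ∀ δ z, 0 < δ → Kf δ z = (if a + δ • z ∈ Ω then DD Ω 0 u (a + δ • z) * z 0 + DD Ω 1 u (a + δ • z) * z 1 + δ/2*lam*u (a + δ • z) else 0) * gau z := by
    intro δ z hδ
    simp only [hKf, indicator]
    have : δ⁻¹ • (a + δ • z - a) = z := by
      rw [add_sub_cancel_left, smul_smul, inv_mul_cancel₀ hδ.ne', one_smul]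
    rw [this]
  have lim : Tendsto (fun δ => ∫ z, Kf δ z) (𝓝[>] 0) (𝓝 (∫ z, H.indicator (fun z => ⟪V, z⟫ * gau z) z)) := by
    apply tendsto_integral_filter_of_dominated_convergence (fun z => (B0 + B1 + lam * B2) * ((1 + 2 * ‖z‖) * gau z))
    · filter_upwards [self_mem_nhdsWithin] with δ (hδ : 0 < δ)
      apply AEStronglyMeasurable.mul _ gau_cont.aestronglyMeasurable
      have m : Measurable (Ω.indicator (fun p => DD Ω 0 u p * (δ⁻¹ • (p - a)) 0 + DD Ω 1 u p * (δ⁻¹ • (p - a)) 1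
        + δ/2*lam*u p)) := by
        rw [← Set.piecewise_eq_indicator]
        apply ContinuousOn.measurable_piecewise _ continuousOn_const h.op.measurableSet
        have k0 := ((h.sm_D he.sm 0).cont.mono subset_closure)
        have k1 := ((h.sm_D he.sm 1).cont.mono subset_closure)
        have k2 := (he.sm.cont.mono subset_closure)
        exact ((k0.mul (by fun_prop)).add (k1.mul (by fun_prop))).add (continuousOn_const.mul k2)
      exact (m.comp (by fun_prop)).aestronglyMeasurable
    · have : ∀ᶠ δ in 𝓝[>] (0:ℝ), δ < 1 := nhdsWithin_le_nhds (Iio_mem_nhds one_pos)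
      filter_upwards [self_mem_nhdsWithin, this] with δ (hδ : 0 < δ) hδ1
      refine Eventually.of_forall fun z => ?_
      rw [hKe δ z hδ, norm_mul, Real.norm_of_nonneg (gau_pos z).le, ← mul_assoc]
      refine mul_le_mul_of_nonneg_right ?_ (gau_pos z).le
      have hl := he.pos
      split_ifs with hz
      · have hz' := subset_closure hz
        have n0 : |z 0| ≤ ‖z‖ := by simpa using PiLp.norm_apply_le (p := 2) z 0
        have n1 : |z 1| ≤ ‖z‖ := by simpa using PiLp.norm_apply_le (p := 2) z 1
        have m0 : |DD Ω 0 u (a + δ • z) * z 0| ≤ B0 * ‖z‖ := by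
          rw [abs_mul]; exact mul_le_mul (b0 _ hz') n0 (abs_nonneg _) hB0
        have m1 : |DD Ω 1 u (a + δ • z) * z 1| ≤ B1 * ‖z‖ := by
          rw [abs_mul]; exact mul_le_mul (b1 _ hz') n1 (abs_nonneg _) hB1
        have m2 : |δ/2*lam*u (a + δ • z)| ≤ lam * B2 := by
          rw [abs_mul, abs_of_pos (by positivity : 0 < δ/2*lam)]
          exact mul_le_mul (by nlinarith) (b2 _ hz') (abs_nonneg _) hl.le
        rw [Real.norm_eq_abs]
        have := abs_add_three (DD Ω 0 u (a + δ • z) * z 0) (DD Ω 1 u (a + δ • z) * z 1) (δ/2*lam*u (a + δ • z))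
        have q0 := mul_nonneg hB0 (norm_nonneg z)
        have q1 := mul_nonneg hB1 (norm_nonneg z)
        have q2 := mul_nonneg (mul_nonneg hl.le hB2) (norm_nonneg z)
        nlinarith
      · simp only [norm_zero]; positivity
    · exact gau_int.const_mul _
    · filter_upwards [hne] with z hz
      rcases lt_or_gt_of_ne hz with hz | hz
      · have hzH : z ∈ H := hz
        rw [indicator_of_mem hzH, hin]
        have ev := hneg z hz
        have tw : Tendsto (fun δ : ℝ => a + δ • z) (𝓝[>] 0) (𝓝[closure Ω] a) := by
          apply tendsto_nhdsWithin_of_tendsto_nhds_of_eventually_within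
          · have : Continuous (fun δ : ℝ => a + δ • z) := by fun_prop
            simpa using (this.tendsto 0).mono_left nhdsWithin_le_nhds
          · exact ev.mono fun t ht => subset_closure ht
        have t0 := ((h.sm_D he.sm 0).cont a hcl).tendsto.comp tw
        have t1 := ((h.sm_D he.sm 1).cont a hcl).tendsto.comp tw
        have t2 := (he.sm.cont a hcl).tendsto.comp tw
        have tδ : Tendsto (fun δ : ℝ => δ) (𝓝[>] 0) (𝓝 0) := nhdsWithin_le_nhds
        have := (((t0.mul_const (z 0)).add (t1.mul_const (z 1))).add (((tδ.div_const 2).mul_const lam).mul t2)).mul_const (gau z)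
        simp only [zero_div, zero_mul, add_zero] at this
        refine this.congr' ?_
        filter_upwards [ev, self_mem_nhdsWithin] with δ hδ hδ0
        rw [hKe δ z hδ0, if_pos hδ]; rfl
      · have hzH : z ∉ H := fun hc => absurd (show ⟪n, z⟫ < 0 from hc) (not_lt.2 hz.le)
        rw [indicator_of_notMem hzH]
        apply tendsto_const_nhds.congr'
        filter_upwards [hpos z hz, self_mem_nhdsWithin] with δ hδ hδ0
        rw [hKe δ z hδ0, if_neg hδ, zero_mul]
  have z0 : Tendsto (fun δ => ∫ z, Kf δ z) (𝓝[>] 0) (𝓝 0) := by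
    apply tendsto_const_nhds.congr'
    filter_upwards [self_mem_nhdsWithin] with δ hδ
    exact (h.blow_zero he a hδ).symm
  have := tendsto_nhds_unique lim z0
  rw [integral_indicator hHm.measurableSet] at this
  exact half_gauss n V hn this

end Dom

namespace Dom
variable {Ω : Set E2} {ε : ℝ}

theorem cl_box (h : Dom Ω ε) {p : E2} (hp : p ∈ closure Ω) :
    (0 ≤ p 0 ∧ p 0 ≤ 1) ∧ (-ε ≤ p 1 ∧ p 1 ≤ ε) := by
  have c0 : Continuous (fun p : E2 => p 0) := by fun_prop
  have c1 : Continuous (fun p : E2 => p 1) := by fun_prop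
  have : ∀ p ∈ Ω, (0 ≤ p 0 ∧ p 0 ≤ 1) ∧ (-ε ≤ p 1 ∧ p 1 ≤ ε) := by
    intro p hp
    have := h.sub (p 0) (p 1) (by rwa [mk2_eta])
    exact ⟨⟨this.1.1.le, this.1.2.le⟩, this.2.1.le, this.2.2.le⟩
  have hc : IsClosed {p : E2 | (0 ≤ p 0 ∧ p 0 ≤ 1) ∧ (-ε ≤ p 1 ∧ p 1 ≤ ε)} :=
    ((isClosed_le continuous_const c0).inter (isClosed_le c0 continuous_const)).inter
      ((isClosed_le continuous_const c1).inter (isClosed_le c1 continuous_const))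
  exact closure_minimal this hc hp

theorem nrm_le (h : Dom Ω ε) {F : E2 → ℝ}
    (hF : ContDiff ℝ (⊤:ℕ∞) F) (hΩ : Ω = {p | F p < 0}) (hfr : frontier Ω = {p | F p = 0})
    {a : E2} (ha : a ∈ frontier Ω) {z : E2} (hz : z ∈ Ω) : ⟪gradient F a, z - a⟫ ≤ 0 := by
  set n := gradient F a with hndef
  have hFa : F a = 0 := by rw [hfr] at ha; exact ha
  have hd : HasDerivAt (fun t : ℝ => F (a + t • (z - a))) ⟪n, z - a⟫ 0 := by
    have hdf : HasFDerivAt F (fderiv ℝ F a) (a + (0:ℝ) • (z - a)) := by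
      simpa using (hF.differentiable (by simp) a).hasFDerivAt
    have hl : HasDerivAt (fun s : ℝ => a + s • (z - a)) (z - a) 0 := by
      simpa using ((hasDerivAt_id (0:ℝ)).smul_const (z - a)).const_add a
    have := hdf.comp_hasDerivAt (0:ℝ) hl
    have e : ⟪n, z - a⟫ = fderiv ℝ F a (z - a) := by
      rw [hndef, gradient, InnerProductSpace.toDual_symm_apply]
    rw [e]; exact this
  have hsl : Tendsto (fun t : ℝ => t⁻¹ * F (a + t • (z - a))) (𝓝[>] 0) (𝓝 ⟪n, z - a⟫) := by
    have := (hasDerivAt_iff_tendsto_slope.1 hd).mono_left (nhdsWithin_mono _ (fun t (ht : 0 < t) => ht.ne') : 𝓝[>] (0:ℝ) ≤ 𝓝[≠] 0)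
    refine this.congr fun t => ?_
    simp [slope, hFa]
  refine le_of_tendsto hsl ?_
  have : ∀ᶠ t in 𝓝[>] (0:ℝ), t < 1 := nhdsWithin_le_nhds (Iio_mem_nhds one_pos)
  filter_upwards [self_mem_nhdsWithin, this] with t (ht : 0 < t) ht1
  have hm := h.cv.add_smul_sub_mem_interior' ha.1 (by rwa [h.op.interior_eq]) (t := t) ⟨ht, ht1.le⟩
  rw [h.op.interior_eq, hΩ] at hm
  have hm' : F (a + t • (z - a)) < 0 := hm
  exact mul_nonpos_of_nonneg_of_nonpos (inv_pos.2 ht).le hm'.le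

theorem bdry (h : Dom Ω ε) {u : E2 → ℝ} {lam : ℝ} (he : Eig Ω u lam) {F : E2 → ℝ}
    (hF : ContDiff ℝ (⊤:ℕ∞) F) (hΩ : Ω = {p | F p < 0}) (hfr : frontier Ω = {p | F p = 0})
    (hnn : ∀ p ∈ frontier Ω, gradient F p ≠ 0) {B : ℝ} (hB : 0 ≤ B)
    (hg : ∀ i, ∀ p ∈ Ω, |DD Ω i u p| ≤ B * max (min (p 0) (1 - p 0)) ε)
    {a : E2} (ha : a ∈ frontier Ω) : |DD Ω 1 u a| ≤ 4 * B * ε := by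
  have hε := h.pos
  have hcl : a ∈ closure Ω := ha.1
  have hgc : ∀ i, |DD Ω i u a| ≤ B * max (min (a 0) (1 - a 0)) ε := by
    intro i
    refine le_on_closure (f := fun p => |DD Ω i u p|) (g := fun p => B * max (min (p 0) (1 - p 0)) ε) (hg i) (h.sm_D he.sm i).cont.abs ?_ hcl
    fun_prop
  obtain ⟨⟨a0, a1⟩, b0, b1⟩ := h.cl_box hcl
  rcases le_or_gt (min (a 0) (1 - a 0)) ε with hd | hd
  · have := hgc 1
    rw [max_eq_right hd] at this
    nlinarith [mul_nonneg hB hε.le]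
  · have h0 := hgc 0
    rw [max_eq_left hd.le] at h0
    set d := min (a 0) (1 - a 0) with hdd
    have hd1 : d ≤ a 0 := min_le_left _ _
    have hd2 : d ≤ 1 - a 0 := min_le_right _ _
    set n := gradient F a with hn
    have hne : n ≠ 0 := hnn a ha
    have neu := h.neumann he hF hΩ hfr ha hne
    have inn : ∀ z : E2, ⟪n, z⟫ = n 0 * z 0 + n 1 * z 1 := by
      intro z
      rw [EuclideanSpace.inner_eq_star_dotProduct]
      simp [dotProduct, mul_comm]
    rw [← hn, inn, mk2_zero, mk2_one] at neu
    have key : ∀ x ∈ Ioo (0:ℝ) 1, n 0 * (x - a 0) ≤ 2 * ε * |n 1| := by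
      intro x hx
      obtain ⟨y, hy⟩ := h.ne x hx
      have hy' := (h.sub x y hy).2
      have := h.nrm_le hF hΩ hfr ha hy
      rw [← hn, inn] at this
      simp only [PiLp.sub_apply, mk2_zero, mk2_one] at this
      have h1 : -(n 1 * (y - a 1)) ≤ |n 1| * (2 * ε) := by
        refine (neg_le_abs _).trans ?_
        rw [abs_mul]
        apply mul_le_mul_of_nonneg_left _ (abs_nonneg _)
        rw [abs_le]; constructor <;> linarith [hy'.1, hy'.2]
      linarith
    have k1 := key (a 0 / 2) ⟨by linarith, by linarith⟩
    have k2 := key ((1 + a 0) / 2) ⟨by linarith, by linarith⟩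
    have k3 : |n 0| * d ≤ 4 * ε * |n 1| := by
      rcases le_total 0 (n 0) with hs | hs
      · rw [abs_of_nonneg hs]; nlinarith
      · rw [abs_of_nonpos hs]; nlinarith
    have hn1 : 0 < |n 1| := by
      rw [abs_pos]
      intro hc
      rw [hc] at k3
      have : n 0 = 0 := by
        have : |n 0| * d ≤ 0 := by simpa using k3
        have : |n 0| ≤ 0 := by nlinarith [abs_nonneg (n 0)]
        exact abs_nonpos_iff.1 this
      apply hne
      ext i; fin_cases i
      · simpa using this
      · simpa using hc
    have e : |n 1| * |DD Ω 1 u a| = |n 0| * |DD Ω 0 u a| := by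
      rw [← abs_mul, ← abs_mul, ← abs_neg]; congr 1; linarith
    have : |n 0| * |DD Ω 0 u a| ≤ B * (4 * ε * |n 1|) := by
      calc |n 0| * |DD Ω 0 u a| ≤ |n 0| * (B * d) := by gcongr
        _ = B * (|n 0| * d) := by ring
        _ ≤ _ := by gcongr
    rw [← e] at this
    have : |n 1| * |DD Ω 1 u a| ≤ |n 1| * (4 * B * ε) := by linarith
    exact le_of_mul_le_mul_left this hn1

theorem D1_bd (h : Dom Ω ε) {u : E2 → ℝ} {lam k : ℝ} (he : Eig Ω u lam) {F : E2 → ℝ}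
    (hF : ContDiff ℝ (⊤:ℕ∞) F) (hΩ : Ω = {p | F p < 0}) (hfr : frontier Ω = {p | F p = 0})
    (hnn : ∀ p ∈ frontier Ω, gradient F p ≠ 0) {B : ℝ} (hB : 0 ≤ B)
    (hg : ∀ i, ∀ p ∈ Ω, |DD Ω i u p| ≤ B * max (min (p 0) (1 - p 0)) ε)
    (hk : lam < k^2) (hk0 : 0 < k) (hkε : k * ε ≤ 1) {p : E2} (hp : p ∈ Ω) :
    |DD Ω 1 u p| ≤ 8 * B * ε := by
  have hε := h.pos
  have hK : 0 ≤ 4 * B * ε := by positivity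
  have s1 := h.sm_D he.sm 1
  have b := fun a ha => abs_le.1 (h.bdry he hF hΩ hfr hnn hB hg (a := a) ha)
  have m1 := h.max_princ s1 (fun q hq => h.lap_D he 1 hq) hk hk0 hkε hK (fun a ha => (b a ha).2) p hp
  have s2 : Sm Ω (fun q => (-1) * DD Ω 1 u q) := (Sm.const (-1)).mul s1
  have a : ∀ i, ∀ f : E2 → ℝ, Sm Ω f → ∀ r ∈ Ω, DD Ω i (fun q => (-1) * f q) r = (-1) * DD Ω i f r := by
    intro i f hf r hr
    rw [h.D_mul (Sm.const (-1)) hf i (subset_closure hr), D_const]; ring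
  have aa : ∀ i, ∀ r ∈ Ω, DD Ω i (DD Ω i (fun q => (-1) * DD Ω 1 u q)) r = (-1) * DD Ω i (DD Ω i (DD Ω 1 u)) r := by
    intro i r hr
    rw [h.D_congr i (a i _ s1) hr, a i _ (h.sm_D s1 i) r hr]
  have m2 := h.max_princ s2 (lam := lam) (fun q hq => by
    rw [aa 0 q hq, aa 1 q hq]; linarith [h.lap_D he 1 hq]) hk hk0 hkε hK (fun a ha => by linarith [(b a ha).1]) p hp
  rw [abs_le]; constructor <;> linarith

theorem vert (h : Dom Ω ε) {u : E2 → ℝ} (hu : Sm Ω u) {G x y y' : ℝ}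
    (hg : ∀ p ∈ Ω, |DD Ω 1 u p| ≤ G) (hy : mk2 x y ∈ Ω) (hy' : mk2 x y' ∈ Ω) :
    |u (mk2 x y) - u (mk2 x y')| ≤ G * |y - y'| := by
  have e : ∀ y, mk2 x y = mk2 x 0 + y • EuclideanSpace.single 1 (1:ℝ) := by
    intro y; ext i; fin_cases i <;> simp [mk2]
  have hd : ∀ y ∈ cross2 Ω x, HasDerivWithinAt (fun y => u (mk2 x y)) (DD Ω 1 u (mk2 x y)) (cross2 Ω x) y := by
    intro y hy
    have := h.line_deriv hu 1 (p := mk2 x 0) (s := y) (by rw [← e]; exact hy)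
    simp only [← e] at this
    exact this.hasDerivWithinAt
  have := (h.cr_conv x).norm_image_sub_le_of_norm_hasDerivWithin_le hd (C := G) (fun z hz => hg _ hz) hy' hy
  simpa using this

theorem osc (h : Dom Ω ε) {u : E2 → ℝ} (hu : Sm Ω u) {G : ℝ}
    (hg : ∀ p ∈ Ω, |DD Ω 1 u p| ≤ G) {p : E2} (hp : p ∈ Ω) : |u p - avg Ω u (p 0)| ≤ 2 * G * ε := by
  have hp' : mk2 (p 0) (p 1) ∈ Ω := by rwa [mk2_eta]
  have hs := h.sub _ _ hp'
  have hG : 0 ≤ G := (abs_nonneg _).trans (hg p hp)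
  have key : ∀ y, mk2 (p 0) y ∈ Ω → |u p - u (mk2 (p 0) y)| ≤ 2 * G * ε := by
    intro y hy
    have := h.vert hu hg hp' hy
    rw [mk2_eta] at this
    refine this.trans ?_
    have hy' := (h.sub _ _ hy).2
    have : |p 1 - y| ≤ 2 * ε := by
      rw [abs_le]; constructor <;> linarith [hy'.1, hy'.2, hs.2.1, hs.2.2]
    nlinarith
  have k := fun y hy => abs_le.1 (key y hy)
  have u1 := h.avg_le hu.cont hs.1 (B := u p + 2 * G * ε) (fun y hy => by linarith [(k y hy).1])
  have u2 := h.le_avg hu.cont hs.1 (B := u p - 2 * G * ε) (fun y hy => by linarith [(k y hy).2])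
  rw [abs_le]; constructor <;> linarith

theorem lipp (h : Dom Ω ε) {u : E2 → ℝ} (hu : Sm Ω u) {G : ℝ}
    (hg : ∀ p ∈ Ω, ‖gradient u p‖ ≤ G) {p q : E2} (hp : p ∈ Ω) (hq : q ∈ Ω) :
    |u p - u q| ≤ G * (|p 0 - q 0| + 2 * ε) := by
  have hG : 0 ≤ G := (norm_nonneg _).trans (hg p hp)
  have := h.cv.norm_image_sub_le_of_norm_fderiv_le (𝕜 := ℝ) (f := u) (C := G) (fun r hr => (hu.diff _ (subset_closure hr)).differentiableAt (h.nhds hr))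
    (fun r hr => by
      have := hg r hr
      rwa [gradient, LinearIsometryEquiv.norm_map] at this) hq hp
  rw [Real.norm_eq_abs] at this
  refine this.trans (mul_le_mul_of_nonneg_left ?_ hG)
  rw [← mk2_eta p, ← mk2_eta q, mk2_sub]
  refine (mk2_norm_le _ _).trans ?_
  simp only [mk2_zero]
  have hp' := (h.cl_box (subset_closure hp)).2
  have hq' := (h.cl_box (subset_closure hq)).2
  have : |p 1 - q 1| ≤ 2 * ε := by rw [abs_le]; constructor <;> linarith [hp'.1, hp'.2, hq'.1, hq'.2]
  linarith

theorem D_le_grad (h : Dom Ω ε) (f : E2 → ℝ) (i : Fin 2) {p : E2} (hp : p ∈ Ω) :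
    |DD Ω i f p| ≤ ‖gradient f p‖ := by
  rw [h.D_eq f i hp, ← grad_apply]
  simpa using PiLp.norm_apply_le (p := 2) (gradient f p) i

end Dom

abbrev VV (Ω : Set E2) (x : ℝ) : ℝ := PP Ω (fun _ => (1:ℝ)) x

theorem PP_zero (Ω : Set E2) (f : E2 → ℝ) : PP Ω f 0 = 0 := by simp [PP]

theorem VV_zero (Ω : Set E2) : VV Ω 0 = 0 := PP_zero _ _

theorem PP_const (Ω : Set E2) (c x : ℝ) : PP Ω (fun _ => c) x = c * VV Ω x := by
  unfold VV PP
  simp only [Dom.avg_const]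
  rw [← intervalIntegral.integral_const_mul]
  congr 1; funext s; ring

namespace Dom
variable {Ω : Set E2} {ε : ℝ}

theorem avg_mono (h : Dom Ω ε) {f g : E2 → ℝ} (hf : ContinuousOn f (closure Ω)) (hg : ContinuousOn g (closure Ω))
    {x : ℝ} (hx : x ∈ Ioo (0:ℝ) 1) (hB : ∀ y, mk2 x y ∈ Ω → f (mk2 x y) ≤ g (mk2 x y)) : avg Ω f x ≤ avg Ω g x :=
  intervalIntegral.integral_mono_on_of_le_Ioo zero_le_one (h.sec_int hf hx) (h.sec_int hg hx)
    (fun t ht => hB _ (h.pt_mem hx ht))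

theorem PP_sub (h : Dom Ω ε) {f : E2 → ℝ} (hf : ContinuousOn f (closure Ω)) {x y : ℝ} (hx : 0 ≤ x) (hxy : x ≤ y)
    (hy : y ≤ 1) : PP Ω f y - PP Ω f x = ∫ s in x..y, fw Ω s * avg Ω f s :=
  intervalIntegral.integral_interval_sub_left (h.ii hf le_rfl zero_le_one (hx.trans hxy) hy)
    (h.ii hf le_rfl zero_le_one hx (hxy.trans hy))

theorem PP_mono (h : Dom Ω ε) {f g : E2 → ℝ} (hf : ContinuousOn f (closure Ω)) (hg : ContinuousOn g (closure Ω))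
    {x y : ℝ} (hx : 0 ≤ x) (hxy : x ≤ y) (hy : y ≤ 1)
    (hfg : ∀ p ∈ Ω, x < p 0 → p 0 < y → f p ≤ g p) : PP Ω f y - PP Ω f x ≤ PP Ω g y - PP Ω g x := by
  rw [h.PP_sub hf hx hxy hy, h.PP_sub hg hx hxy hy]
  apply intervalIntegral.integral_mono_on_of_le_Ioo hxy (h.ii hf hx (hxy.trans hy) (hx.trans hxy) hy)
    (h.ii hg hx (hxy.trans hy) (hx.trans hxy) hy)
  intro s hs
  have hs' : s ∈ Ioo (0:ℝ) 1 := ⟨by linarith [hs.1], by linarith [hs.2]⟩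
  apply mul_le_mul_of_nonneg_left _ (h.fw_pos hs').le
  apply h.avg_mono hf hg hs'
  intro _ ht
  exact hfg _ ht (by rw [mk2_zero]; exact hs.1) (by rw [mk2_zero]; exact hs.2)

theorem PP_mono_avg (h : Dom Ω ε) {f : E2 → ℝ} (hf : ContinuousOn f (closure Ω)) {c : ℝ}
    {x y : ℝ} (hx : 0 ≤ x) (hxy : x ≤ y) (hy : y ≤ 1)
    (hfg : ∀ s ∈ Ioo x y, c ≤ avg Ω f s) : c * (VV Ω y - VV Ω x) ≤ PP Ω f y - PP Ω f x := by
  have e : c * (VV Ω y - VV Ω x) = PP Ω (fun _ => c) y - PP Ω (fun _ => c) x := by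
    rw [PP_const, PP_const]; ring
  rw [e, h.PP_sub hf hx hxy hy, h.PP_sub continuousOn_const hx hxy hy]
  apply intervalIntegral.integral_mono_on_of_le_Ioo hxy (h.ii continuousOn_const hx (hxy.trans hy) (hx.trans hxy) hy)
    (h.ii hf hx (hxy.trans hy) (hx.trans hxy) hy)
  intro s hs
  have hs' : s ∈ Ioo (0:ℝ) 1 := ⟨by linarith [hs.1], by linarith [hs.2]⟩
  apply mul_le_mul_of_nonneg_left _ (h.fw_pos hs').le
  rw [avg_const]; exact hfg s hs

theorem PP_congr (h : Dom Ω ε) {f g : E2 → ℝ} (hf : ContinuousOn f (closure Ω)) (hg : ContinuousOn g (closure Ω))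
    {x y : ℝ} (hx : 0 ≤ x) (hxy : x ≤ y) (hy : y ≤ 1)
    (hfg : ∀ p ∈ Ω, x < p 0 → p 0 < y → f p = g p) : PP Ω f y - PP Ω f x = PP Ω g y - PP Ω g x :=
  le_antisymm (h.PP_mono hf hg hx hxy hy fun p a b c => (hfg p a b c).le)
    (h.PP_mono hg hf hx hxy hy fun p a b c => (hfg p a b c).ge)

theorem PP_addc (h : Dom Ω ε) {f : E2 → ℝ} (hf : ContinuousOn f (closure Ω)) (b : ℝ)
    {x : ℝ} (hx : 0 ≤ x) (hx1 : x ≤ 1) : PP Ω (fun p => f p + b) x = PP Ω f x + b * VV Ω x := by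
  rw [← PP_const]
  unfold PP
  rw [← intervalIntegral.integral_add (h.ii hf le_rfl zero_le_one hx hx1) (h.ii continuousOn_const le_rfl zero_le_one hx hx1)]
  apply intervalIntegral.integral_congr_ae
  refine Eventually.mono (measure_eq_zero_iff_ae_notMem.1 (by simp : volume {(1:ℝ)} = 0)) fun s hs1 hs => ?_
  rw [uIoc_of_le hx] at hs
  have hs' : s ∈ Ioo (0:ℝ) 1 := ⟨hs.1, lt_of_le_of_ne (hs.2.trans hx1) hs1⟩
  rw [h.avg_add hf continuousOn_const hs']; ring

theorem VV_one (h : Dom Ω ε) : VV Ω 1 = ∫ _p in Ω, (1:ℝ) := h.PP_one continuousOn_const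

theorem VV_mono (h : Dom Ω ε) {x y : ℝ} (hx : 0 ≤ x) (hxy : x ≤ y) (hy : y ≤ 1) : VV Ω x ≤ VV Ω y := by
  have := h.PP_mono (f := fun _ => 0) (g := fun _ => 1) continuousOn_const continuousOn_const hx hxy hy (fun _ _ _ _ => zero_le_one)
  rw [PP_const, PP_const] at this
  linarith

/-- Comparison of `VV` increments with a bound on `fw`. -/
theorem VV_sub_le (h : Dom Ω ε) {x y c : ℝ} (hx : 0 ≤ x) (hxy : x ≤ y) (hy : y ≤ 1)
    (hc : ∀ s ∈ Ioo x y, fw Ω s ≤ c) : VV Ω y - VV Ω x ≤ c * (y - x) := by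
  rw [h.PP_sub continuousOn_const hx hxy hy]
  have := intervalIntegral.integral_mono_on_of_le_Ioo (μ := volume) hxy (h.ii (continuousOn_const (c := (1:ℝ))) hx (hxy.trans hy) (hx.trans hxy) hy)
    (intervalIntegrable_const (c := c)) (fun s hs => by rw [avg_const, mul_one]; exact hc s hs)
  refine this.trans ?_
  simp [mul_comm]

theorem le_VV_sub (h : Dom Ω ε) {x y : ℝ} (hx : 0 ≤ x) (hxy : x ≤ y) (hy : y ≤ 1) {g : ℝ → ℝ} (hg : Continuous g)
    (hc : ∀ s ∈ Ioo x y, g s ≤ fw Ω s) : ∫ s in x..y, g s ≤ VV Ω y - VV Ω x := by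
  rw [h.PP_sub continuousOn_const hx hxy hy]
  exact intervalIntegral.integral_mono_on_of_le_Ioo (μ := volume) hxy 
    (hg.intervalIntegrable _ _) (h.ii (continuousOn_const (c := (1:ℝ))) hx (hxy.trans hy) (hx.trans hxy) hy) (fun s hs => by rw [avg_const, mul_one]; exact hc s hs)

theorem fw_le_W (h : Dom Ω ε) {x : ℝ} (hx : x ∈ Ioo (0:ℝ) 1) : fw Ω x ≤ 16 * VV Ω 1 := by
  have h1 := h.le_VV_sub (x := 1/4) (y := 3/4) (by norm_num) (by norm_num) (by norm_num) (g := fun _ => fw Ω x / 8) continuous_const (by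
    intro s hs
    have := h.fw_cmp (x := s) (z := x) ⟨by linarith [hs.1], by linarith [hs.2]⟩ hx
    have hm : 1/4 ≤ min s (1 - s) := le_min hs.1.le (by linarith [hs.2])
    have := h.fw_pos hx
    nlinarith)
  have h2 := h.VV_mono (x := 0) (y := 1/4) (by norm_num) (by norm_num) (by norm_num)
  have h3 := h.VV_mono (x := 3/4) (y := 1) (by norm_num) (by norm_num) (by norm_num)
  rw [VV_zero] at h2
  simp at h1
  norm_num at h1
  linarith

theorem W_le_fw (h : Dom Ω ε) {x : ℝ} (hx : x ∈ Ioo (0:ℝ) 1) : min x (1 - x) / 2 * VV Ω 1 ≤ fw Ω x := by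
  have hm : 0 < min x (1 - x) := lt_min hx.1 (by linarith [hx.2])
  have := h.VV_sub_le (x := 0) (y := 1) (c := fw Ω x / (min x (1-x) / 2)) le_rfl zero_le_one le_rfl (by
    intro s hs
    rw [le_div_iff₀ (by positivity), mul_comm]
    exact h.fw_cmp hx hs)
  rw [VV_zero, sub_zero, sub_zero, mul_one, le_div_iff₀ (by positivity)] at this
  rw [mul_comm]; exact this

theorem V_left (h : Dom Ω ε) {a : ℝ} (ha : 0 < a) (ha2 : a ≤ 1/2) : a^2/4 * VV Ω 1 ≤ VV Ω a := by
  have := h.le_VV_sub (x := 0) (y := a) le_rfl ha.le (by linarith) (g := fun s => s / 2 * VV Ω 1) (by fun_prop) (by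
    intro s hs
    have := h.W_le_fw (x := s) ⟨hs.1, by linarith [hs.2]⟩
    rwa [min_eq_left (by linarith [hs.2])] at this)
  rw [VV_zero, sub_zero] at this
  refine le_trans (le_of_eq ?_) this
  rw [intervalIntegral.integral_mul_const, intervalIntegral.integral_div, integral_id]
  ring

theorem V_right (h : Dom Ω ε) {a : ℝ} (ha : 0 < a) (ha2 : a ≤ 1/2) : VV Ω (1 - a) ≤ (1 - a^2/4) * VV Ω 1 := by
  have := h.le_VV_sub (x := 1 - a) (y := 1) (by linarith) (by linarith) le_rfl (g := fun s => (1 - s) / 2 * VV Ω 1) (by fun_prop) (by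
    intro s hs
    have := h.W_le_fw (x := s) ⟨by linarith [hs.1], by linarith [hs.2]⟩
    rwa [min_eq_right (by linarith [hs.1])] at this)
  have e : ∫ s in (1-a)..1, (1 - s) / 2 * VV Ω 1 = a^2/4 * VV Ω 1 := by
    rw [intervalIntegral.integral_mul_const, intervalIntegral.integral_div, intervalIntegral.integral_sub (by simp) (by simp), integral_id]
    simp only [intervalIntegral.integral_const, smul_eq_mul]; ring
  rw [e] at this
  linarith

theorem three (h : Dom Ω ε) {f g : E2 → ℝ} (hf : ContinuousOn f (closure Ω)) (hg : ContinuousOn g (closure Ω))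
    {x y M : ℝ} (hx : 0 ≤ x) (hxy : x ≤ y) (hy : y ≤ 1)
    (h1 : ∀ p ∈ Ω, p 0 < x → f p = g p) (h2 : ∀ p ∈ Ω, x < p 0 → p 0 < y → |f p| ≤ M)
    (h3 : ∀ p ∈ Ω, y < p 0 → f p = 0) :
    |(∫ p in Ω, f p) - PP Ω g x| ≤ M * (VV Ω y - VV Ω x) := by
  rw [← h.PP_one hf]
  have a1 := h.PP_congr hf hg le_rfl hx (hxy.trans hy) (fun p hp _ hh => h1 p hp hh)
  rw [PP_zero, PP_zero] at a1
  have a3 := h.PP_congr hf (g := fun _ => 0) continuousOn_const (hx.trans hxy) hy le_rfl (fun p hp hh _ => h3 p hp hh)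
  have a2 := h.PP_mono hf (g := fun _ => M) continuousOn_const hx hxy hy (fun p hp ha hb => (abs_le.1 (h2 p hp ha hb)).2)
  have a4 := h.PP_mono (f := fun _ => -M) continuousOn_const hf hx hxy hy (fun p hp ha hb => (abs_le.1 (h2 p hp ha hb)).1)
  rw [PP_const, PP_const] at a2 a4 a3
  rw [abs_le]; constructor <;> linarith

/-- Integrated Dini inequalities. -/
theorem dini_le (h : Dom Ω ε) {u : E2 → ℝ} (hu : Sm Ω u) {B x y a g : ℝ} (hB : 0 ≤ B)
    (hgr : ∀ p ∈ Ω, |DD Ω 1 u p| ≤ B * max (min (p 0) (1 - p 0)) ε)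
    (haε : ε ≤ a) (hx : a ≤ x) (hxy : x ≤ y) (hy : y ≤ 1 - a)
    (hG : ∀ s ∈ Ico x y, avg Ω (DD Ω 0 u) s ≤ g) :
    avg Ω u y - avg Ω u x ≤ (g + 4 * B * ε) * (y - x) := by
  have hε := h.pos
  have hc : ContinuousOn (avg Ω u) (Icc x y) := (h.avg_cont hu.cont).mono fun s hs => ⟨by linarith [hs.1], by linarith [hs.2]⟩
  have := image_le_of_liminf_slope_right_le_deriv_boundary (f := avg Ω u) (a := x) (b := y) hc
    (B := fun s => avg Ω u x + (g + 4 * B * ε) * (s - x)) (B' := fun _ => g + 4 * B * ε) (by simp) (by fun_prop)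
    (fun s hs => by
      have : HasDerivAt (fun s => avg Ω u x + (g + 4 * B * ε) * (s - x)) ((g + 4 * B * ε) * 1) s :=
        (((hasDerivAt_id s).sub_const x).const_mul _).const_add _
      rw [mul_one] at this
      exact this.hasDerivWithinAt) (fun s hs r hr => by
      have hd := h.dini hu (x := s) hB hgr rfl (le_min (by linarith [hs.1]) (by linarith [hs.2])) (κ := (r - (g + 4 * B * ε))/2) (by linarith)
      apply Eventually.frequently
      filter_upwards [hd, self_mem_nhdsWithin] with z hz (hz1 : s < z)
      have hG' := hG s hs
      have := (abs_le.1 hz).2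
      rw [slope_def_field, div_lt_iff₀ (by linarith)]
      nlinarith) (x := y) ⟨hxy, le_rfl⟩
  linarith

theorem dini_ge (h : Dom Ω ε) {u : E2 → ℝ} (hu : Sm Ω u) {B x y a g : ℝ} (hB : 0 ≤ B)
    (hgr : ∀ p ∈ Ω, |DD Ω 1 u p| ≤ B * max (min (p 0) (1 - p 0)) ε)
    (haε : ε ≤ a) (hx : a ≤ x) (hxy : x ≤ y) (hy : y ≤ 1 - a)
    (hG : ∀ s ∈ Ico x y, g ≤ avg Ω (DD Ω 0 u) s) :
    (g - 4 * B * ε) * (y - x) ≤ avg Ω u y - avg Ω u x := by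
  have hε := h.pos
  have hc : ContinuousOn (fun s => - avg Ω u s) (Icc x y) := ((h.avg_cont hu.cont).mono fun s hs => ⟨by linarith [hs.1], by linarith [hs.2]⟩).neg
  have := image_le_of_liminf_slope_right_le_deriv_boundary (f := fun s => - avg Ω u s) (a := x) (b := y) hc
    (B := fun s => -avg Ω u x + (-g + 4 * B * ε) * (s - x)) (B' := fun _ => -g + 4 * B * ε) (by simp) (by fun_prop)
    (fun s hs => by
      have : HasDerivAt (fun s => -avg Ω u x + (-g + 4 * B * ε) * (s - x)) ((-g + 4 * B * ε) * 1) s :=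
        (((hasDerivAt_id s).sub_const x).const_mul _).const_add _
      rw [mul_one] at this
      exact this.hasDerivWithinAt) (fun s hs r hr => by
      have hd := h.dini hu (x := s) hB hgr rfl (le_min (by linarith [hs.1]) (by linarith [hs.2])) (κ := (r - (-g + 4 * B * ε))/2) (by linarith)
      apply Eventually.frequently
      filter_upwards [hd, self_mem_nhdsWithin] with z hz (hz1 : s < z)
      have hG' := hG s hs
      have := (abs_le.1 hz).1
      rw [slope_def_field, div_lt_iff₀ (by linarith)]
      nlinarith) (x := y) ⟨hxy, le_rfl⟩
  linarith

end Dom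

theorem alg_ray {W b β B r R P η s I1 I2 : ℝ} (hW : 0 < W) (hβ : 0 ≤ β) (hb : β ≤ b) (hbB : b ≤ B) (hB : 1 ≤ B)
    (hr : 0 ≤ r) (hr2 : r ≤ 1/2) (hR : r ≤ R) (hR1 : R ≤ 1 - r) (hP : 0 ≤ P) (hPη : P ≤ η) (hs : 0 ≤ s) (ht : η + s ≤ 1)
    (h1 : |I1 - (P + b * R) * W| ≤ s * W) (h2 : |I2 - (P + b * R) * W| ≤ s * W) :
    (β^2 * r / 2 - 4 * B * (η + s)) * W ≤ b * I2 - I1^2 / W := by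
  obtain ⟨i1, rfl⟩ : ∃ i, I1 = i * W := ⟨I1 / W, by field_simp⟩
  obtain ⟨i2, rfl⟩ : ∃ i, I2 = i * W := ⟨I2 / W, by field_simp⟩
  rw [← sub_mul, abs_mul, abs_of_pos hW, mul_le_mul_iff_of_pos_right hW, abs_le] at h1 h2
  have e : b * (i2 * W) - (i1 * W)^2 / W = (b * i2 - i1^2) * W := by field_simp
  rw [e]
  apply mul_le_mul_of_nonneg_right _ hW.le
  have hb0 : 0 ≤ b := hβ.trans hb
  have hR0 : 0 ≤ R := hr.trans hR
  have hbR : 0 ≤ b * R := mul_nonneg hb0 hR0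
  have hbRB : b * R ≤ B := by nlinarith
  have k1 : b * (b * R) - B * (η + s) ≤ b * i2 := by
    have : b * (b * R - s) ≤ b * i2 := mul_le_mul_of_nonneg_left (by linarith [h2.1]) hb0
    nlinarith
  have k2 : i1^2 ≤ (b * R + (η + s))^2 := by
    apply sq_le_sq'
    · linarith [h1.1]
    · linarith [h1.2]
  have k3 : (b * R + (η + s))^2 ≤ (b*R)^2 + 3 * B * (η + s) := by
    have t0 : 0 ≤ η + s := by linarith
    nlinarith [mul_le_mul_of_nonneg_right hbRB t0, mul_le_mul_of_nonneg_right (ht.trans hB) t0]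
  have k4 : r / 2 ≤ R * (1 - R) := by nlinarith
  have k5 : β^2 * (r/2) ≤ b^2 * (R * (1 - R)) := by
    apply mul_le_mul _ k4 (by linarith) (by positivity)
    exact pow_le_pow_left₀ hβ hb 2
  nlinarith

theorem st_bound : ∃ T : ℝ, 0 < T ∧ (∀ t, |deriv Real.smoothTransition t| ≤ T) ∧
    (∀ t, t < 0 → deriv Real.smoothTransition t = 0) ∧ (∀ t, 1 < t → deriv Real.smoothTransition t = 0) := by
  have hs : ContDiff ℝ (⊤:ℕ∞) Real.smoothTransition := Real.smoothTransition.contDiff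
  have hc : Continuous (deriv Real.smoothTransition) := hs.continuous_deriv (by simp)
  have h0 : ∀ t, t < 0 → deriv Real.smoothTransition t = 0 := by
    intro t ht
    have : Real.smoothTransition =ᶠ[𝓝 t] fun _ => 0 := by
      filter_upwards [Iio_mem_nhds ht] with s hs using Real.smoothTransition.zero_of_nonpos (le_of_lt hs)
    rw [this.deriv_eq]; simp
  have h1 : ∀ t, 1 < t → deriv Real.smoothTransition t = 0 := by
    intro t ht
    have : Real.smoothTransition =ᶠ[𝓝 t] fun _ => 1 := by
      filter_upwards [Ioi_mem_nhds ht] with s hs using Real.smoothTransition.one_of_one_le (le_of_lt hs)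
    rw [this.deriv_eq]; simp
  obtain ⟨T, hT⟩ := (isCompact_Icc (a := (0:ℝ)) (b := 1)).exists_bound_of_continuousOn hc.continuousOn
  refine ⟨max T 1, by positivity, fun t => ?_, h0, h1⟩
  by_cases ha : t < 0
  · rw [h0 t ha]; simp
  by_cases hb : 1 < t
  · rw [h1 t hb]; simp
  exact (hT t ⟨not_lt.1 ha, not_lt.1 hb⟩).trans (le_max_left _ _)

structure Cor (Ω : Set E2) (u : E2 → ℝ) (ε B c a : ℝ) : Prop where
  B1 : 1 ≤ B
  c0 : 0 < c
  c1 : c ≤ 1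
  a0 : 0 < a
  a1 : a ≤ 1/4
  U : ∀ p ∈ Ω, |u p| ≤ B
  G : ∀ i, ∀ p ∈ Ω, |DD Ω i u p| ≤ B * max (min (p 0) (1 - p 0)) ε
  L : ∀ p ∈ Ω, ∀ q ∈ Ω, |u p - u q| ≤ B * (|p 0 - q 0| + 2 * ε)
  E0 : ∀ p ∈ Ω, p 0 ≤ a → c ≤ u p
  E1 : ∀ p ∈ Ω, 1 - a ≤ p 0 → u p ≤ -c

namespace Dom
variable {Ω : Set E2} {ε : ℝ}

theorem V1_pos (h : Dom Ω ε) : 0 < VV Ω 1 := by rw [h.VV_one]; exact h.W_pos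

theorem lam_le (h : Dom Ω ε) {u : E2 → ℝ} {lam B c a : ℝ} (he : Eig Ω u lam) (hc : Cor Ω u ε B c a)
    (hε : ε ≤ 1) : lam ≤ 8 * B^2 / (c^2 * a^2) := by
  obtain ⟨B1, c0, c1, a0, a1, U, G, L, E0, E1⟩ := hc
  have hu := he.sm
  have hW := h.V1_pos
  have e1 : ∫ p in Ω, (u p)^2 = PP Ω (fun p => (u p)^2) 1 := (h.PP_one (hu.cont.pow 2)).symm
  have k1 := h.PP_mono (f := fun _ => c^2) (g := fun p => (u p)^2) continuousOn_const (hu.cont.pow 2) le_rfl a0.le (by linarith)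
    (fun p hp _ hpa => pow_le_pow_left₀ c0.le (E0 p hp hpa.le) 2)
  have k2 := h.PP_mono (f := fun _ => 0) (g := fun p => (u p)^2) continuousOn_const (hu.cont.pow 2) a0.le (by linarith : a ≤ 1) le_rfl
    (fun p hp _ hpa => sq_nonneg _)
  rw [PP_const, PP_const] at k1 k2
  rw [PP_zero, VV_zero] at k1
  have k3 := h.V_left a0 (by linarith)
  have hD : Sm Ω (fun p => (DD Ω 0 u p)^2 + (DD Ω 1 u p)^2) := by
    have := ((h.sm_D hu 0).mul (h.sm_D hu 0)).add ((h.sm_D hu 1).mul (h.sm_D hu 1))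
    simpa only [← sq] using this
  have k4 := h.PP_mono (f := fun p => (DD Ω 0 u p)^2 + (DD Ω 1 u p)^2) (g := fun _ => 2 * B^2) hD.cont continuousOn_const le_rfl zero_le_one le_rfl (by
    intro p hp _ _
    have hm : max (min (p 0) (1 - p 0)) ε ≤ 1 := by
      apply max_le _ hε
      have := (h.cl_box (subset_closure hp)).1.2
      exact (min_le_left _ _).trans this
    have g : ∀ i, (DD Ω i u p)^2 ≤ B^2 := by
      intro i
      rw [← sq_abs]
      apply pow_le_pow_left₀ (abs_nonneg _)
      refine (G i p hp).trans ?_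
      nlinarith
    linarith [g 0, g 1])
  rw [h.PP_one hD.cont, ← he.en, e1, PP_const, PP_const, PP_zero, VV_zero] at k4
  have hl := he.pos
  have k5 : c^2 * (a^2/4 * VV Ω 1) ≤ PP Ω (fun p => (u p)^2) 1 := by
    have := mul_le_mul_of_nonneg_left k3 (sq_nonneg c)
    linarith
  rw [le_div_iff₀ (by positivity)]
  have k6 := mul_le_mul_of_nonneg_left k5 hl.le
  have : (lam * (c^2 * a^2)) * VV Ω 1 ≤ (8 * B^2) * VV Ω 1 := by nlinarith
  exact le_of_mul_le_mul_right this hW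

theorem U_left (h : Dom Ω ε) {u : E2 → ℝ} {B c a : ℝ} (hu : Sm Ω u) (hc : Cor Ω u ε B c a) {x : ℝ}
    (hx : 0 < x) (hxa : x ≤ a) : c ≤ avg Ω u x :=
  h.le_avg hu.cont ⟨hx, by linarith [hc.a1]⟩ (fun y hy => hc.E0 _ hy (by rwa [mk2_zero]))

theorem U_right (h : Dom Ω ε) {u : E2 → ℝ} {B c a : ℝ} (hu : Sm Ω u) (hc : Cor Ω u ε B c a) {x : ℝ}
    (hx : x < 1) (hxa : 1 - a ≤ x) : avg Ω u x ≤ -c :=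
  h.avg_le hu.cont ⟨by linarith [hc.a1], hx⟩ (fun y hy => hc.E1 _ hy (by rwa [mk2_zero]))

theorem lam_ge (h : Dom Ω ε) {u : E2 → ℝ} {lam B c a : ℝ} (he : Eig Ω u lam) (hc : Cor Ω u ε B c a)
    (hε : ε ≤ a) (hε2 : 4 * B * ε ≤ c) : c * a / (2 * B) ≤ lam := by
  have hcc := hc
  obtain ⟨B1, c0, c1, a0, a1, U, G, L, E0, E1⟩ := hc
  have hu := he.sm
  have hW := h.V1_pos
  have hl := he.pos
  have hG : ∀ s ∈ Ico a (1 - a), - (2 * lam * B / a) ≤ avg Ω (DD Ω 0 u) s := by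
    intro s hs
    have hs' : s ∈ Ioo (0:ℝ) 1 := ⟨by linarith [hs.1], by linarith [hs.2]⟩
    have g := h.G_eq he hs'
    have f1 := h.fw_pos hs'
    have f2 := h.W_le_fw hs'
    have hm : a ≤ min s (1 - s) := le_min hs.1 (by linarith [hs.2])
    have f3 : a / 2 * VV Ω 1 ≤ fw Ω s := by nlinarith
    have p1 := h.PP_mono (f := u) (g := fun _ => B) hu.cont continuousOn_const le_rfl hs'.1.le hs'.2.le (fun p hp _ _ => (abs_le.1 (U p hp)).2)
    rw [PP_const, PP_const, PP_zero, VV_zero] at p1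
    have v := h.VV_mono hs'.1.le hs'.2.le le_rfl
    have p2 : PP Ω u s ≤ B * VV Ω 1 := by nlinarith
    have : -(2 * lam * B / a) * fw Ω s ≤ avg Ω (DD Ω 0 u) s * fw Ω s := by
      rw [mul_comm (avg Ω (DD Ω 0 u) s), g]
      have q1 : lam * PP Ω u s ≤ lam * (B * VV Ω 1) := mul_le_mul_of_nonneg_left p2 hl.le
      have q2 : (2 * lam * B / a) * (a / 2 * VV Ω 1) ≤ (2 * lam * B / a) * fw Ω s := mul_le_mul_of_nonneg_left f3 (by positivity)
      have q3 : (2 * lam * B / a) * (a / 2 * VV Ω 1) = lam * (B * VV Ω 1) := by field_simp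
      linarith
    exact le_of_mul_le_mul_right this f1
  have d := h.dini_ge hu (by linarith : 0 ≤ B) (G 1) hε le_rfl (by linarith : a ≤ 1 - a) le_rfl hG
  have u0 := h.U_left hu hcc a0 le_rfl
  have u1 := h.U_right hu hcc (by linarith) le_rfl
  have hεp := h.pos
  have : 2 * c ≤ 2 * lam * B / a + 4 * B * ε := by
    have : 0 ≤ 2 * lam * B / a + 4 * B * ε := by positivity
    nlinarith
  have : c ≤ 2 * lam * B / a := by linarith
  rw [le_div_iff₀ a0] at this
  rw [div_le_iff₀ (by positivity)]
  linarith

end Dom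

namespace Dom
variable {Ω : Set E2} {ε : ℝ}

theorem ray_at (h : Dom Ω ε) {u : E2 → ℝ} {lam B c a : ℝ} (he : Eig Ω u lam) (hc : Cor Ω u ε B c a)
    {T x1 δ η β : ℝ} (hT0 : 0 < T) (hT : ∀ t, |deriv Real.smoothTransition t| ≤ T)
    (hTz1 : ∀ t, t < 0 → deriv Real.smoothTransition t = 0) (hTz2 : ∀ t, 1 < t → deriv Real.smoothTransition t = 0)
    (hδ : ε ≤ δ) (hδa : δ ≤ a) (hx1 : a ≤ x1) (hx2 : x1 ≤ 1 - a) (hβ : 0 ≤ β) (hb : β ≤ - avg Ω u x1)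
    (hP : 0 ≤ PP Ω u x1) (hP2 : PP Ω u x1 ≤ η * VV Ω 1) (ht : η + 48 * B * δ ≤ 1) :
    lam * (β^2 * (a^2/4) / 2 - 4 * B * (η + 48 * B * δ)) ≤ 144 * T^2 * B^2 * δ := by
  obtain ⟨B1, c0, c1, a0, a1, U, G, L, E0, E1⟩ := hc
  have hu := he.sm
  have hW := h.V1_pos
  have hl := he.pos
  have hε := h.pos
  have hδ0 : 0 < δ := hε.trans_le hδ
  have hx1' : x1 ∈ Ioo (0:ℝ) 1 := ⟨by linarith, by linarith⟩
  obtain ⟨b, hbe⟩ : ∃ b, b = - avg Ω u x1 := ⟨_, rfl⟩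
  rw [← hbe] at hb
  have hbB : b ≤ B := by
    have := h.le_avg hu.cont hx1' (fun y hy => (abs_le.1 (U _ hy)).1)
    linarith
  have hst : ∀ p ∈ Ω, x1 < p 0 → p 0 < x1 + δ → |u p + b| ≤ 3 * B * δ := by
    intro p hp h1 h2
    have k : ∀ y, mk2 x1 y ∈ Ω → |u p - u (mk2 x1 y)| ≤ 3 * B * δ := by
      intro y hy
      refine (L p hp _ hy).trans ?_
      rw [mk2_zero, abs_of_pos (by linarith)]
      nlinarith
    have k1 := h.le_avg (B := u p - 3 * B * δ) hu.cont hx1' (fun y hy => by linarith [(abs_le.1 (k y hy)).2])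
    have k2 := h.avg_le (B := u p + 3 * B * δ) hu.cont hx1' (fun y hy => by linarith [(abs_le.1 (k y hy)).1])
    rw [abs_le]; constructor <;> linarith
  obtain ⟨χ, hχe⟩ : ∃ χ : ℝ → ℝ, χ = fun x => Real.smoothTransition ((x1 + δ - x) / δ) := ⟨_, rfl⟩
  have hs : ContDiff ℝ (⊤:ℕ∞) Real.smoothTransition := Real.smoothTransition.contDiff
  have hχ : ContDiff ℝ (⊤:ℕ∞) χ := by
    rw [hχe]
    exact hs.comp (by fun_prop)
  have hχ1 : ∀ x, x ≤ x1 → χ x = 1 := by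
    intro x hx
    rw [hχe]
    exact Real.smoothTransition.one_of_one_le (by rw [le_div_iff₀ hδ0]; linarith)
  have hχ0 : ∀ x, x1 + δ ≤ x → χ x = 0 := by
    intro x hx
    rw [hχe]
    exact Real.smoothTransition.zero_of_nonpos (div_nonpos_of_nonpos_of_nonneg (by linarith) hδ0.le)
  have hχn : ∀ x, 0 ≤ χ x ∧ χ x ≤ 1 := by
    intro x
    rw [hχe]
    exact ⟨Real.smoothTransition.nonneg _, Real.smoothTransition.le_one _⟩
  have hd : ∀ x, deriv χ x = deriv Real.smoothTransition ((x1 + δ - x) / δ) * (-1/δ) := by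
    intro x
    rw [hχe]
    have i1 : HasDerivAt (fun x => (x1 + δ - x) / δ) (-1/δ) x := ((hasDerivAt_id x).const_sub (x1 + δ)).div_const δ
    have i2 : HasDerivAt Real.smoothTransition (deriv Real.smoothTransition ((x1 + δ - x) / δ)) ((x1 + δ - x) / δ) :=
      ((hs.differentiable (by simp)) _).hasDerivAt
    exact (i2.comp x i1).deriv
  have hd1 : ∀ x, x < x1 → deriv χ x = 0 := by
    intro x hx
    rw [hd, hTz2 _ (by rw [lt_div_iff₀ hδ0]; linarith), zero_mul]
  have hd2 : ∀ x, x1 + δ < x → deriv χ x = 0 := by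
    intro x hx
    rw [hd, hTz1 _ (div_neg_of_neg_of_pos (by linarith) hδ0), zero_mul]
  have hd3 : ∀ x, (deriv χ x)^2 ≤ (T/δ)^2 := by
    intro x
    rw [← sq_abs]
    apply pow_le_pow_left₀ (abs_nonneg _)
    rw [hd, abs_mul, abs_div, abs_neg, abs_one, abs_of_pos hδ0, mul_one_div]
    exact div_le_div_of_nonneg_right (hT _) hδ0.le
  have sχ : Sm Ω (fun p => χ (p 0)) := sm_chi hχ 0
  have sχ' : Sm Ω (fun p => deriv χ (p 0)) := sm_chi ((contDiff_infty_iff_deriv.1 hχ).2) 0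
  have sv : Sm Ω (fun p => u p + b) := he.sm.add (Sm.const b)
  have hy1 : x1 + δ ≤ 1 := by linarith
  have hV := h.VV_sub_le (x := x1) (y := x1 + δ) (c := 16 * VV Ω 1) hx1'.1.le (by linarith) hy1
    (fun s hs => h.fw_le_W ⟨by linarith [hs.1], by linarith [hs.2]⟩)
  have hV' : VV Ω (x1 + δ) - VV Ω x1 ≤ 16 * VV Ω 1 * δ := by linarith
  have t1 := h.three (f := fun p => χ (p 0) * (u p + b)) (g := fun p => u p + b) (M := 3 * B * δ)
    (sχ.mul sv).cont sv.cont hx1'.1.le (by linarith : x1 ≤ x1 + δ) hy1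
    (fun p hp h1 => by simp only [hχ1 _ h1.le, one_mul])
    (fun p hp h1 h2 => by
      rw [abs_mul, abs_of_nonneg (hχn _).1]
      exact (mul_le_of_le_one_left (abs_nonneg _) (hχn _).2).trans (hst p hp h1 h2))
    (fun p hp h1 => by simp only [hχ0 _ h1.le, zero_mul])
  have t2 := h.three (f := fun p => (χ (p 0))^2 * (u p + b)) (g := fun p => u p + b) (M := 3 * B * δ)
    ((sχ.cont.pow 2).mul sv.cont) sv.cont hx1'.1.le (by linarith : x1 ≤ x1 + δ) hy1
    (fun p hp h1 => by simp only [hχ1 _ h1.le, one_mul, one_pow])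
    (fun p hp h1 h2 => by
      rw [abs_mul, abs_of_nonneg (sq_nonneg _)]
      exact (mul_le_of_le_one_left (abs_nonneg _) (pow_le_one₀ (hχn _).1 (hχn _).2)).trans (hst p hp h1 h2))
    (fun p hp h1 => by simp only [hχ0 _ h1.le]; ring)
  have t3 := h.three (f := fun p => (deriv χ (p 0))^2 * (u p + b)^2) (g := fun p => 0) (M := 9 * T^2 * B^2)
    ((sχ'.cont.pow 2).mul (sv.cont.pow 2)) continuousOn_const hx1'.1.le (by linarith : x1 ≤ x1 + δ) hy1
    (fun p hp h1 => by simp only [hd1 _ h1]; ring)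
    (fun p hp h1 h2 => by
      rw [abs_of_nonneg (by positivity)]
      have e : 9 * T^2 * B^2 = (T/δ)^2 * (3 * B * δ)^2 := by field_simp; ring
      rw [e]
      apply mul_le_mul (hd3 _) _ (sq_nonneg _) (sq_nonneg _)
      rw [← sq_abs]
      exact pow_le_pow_left₀ (abs_nonneg _) (hst p hp h1 h2) 2)
    (fun p hp h1 => by simp only [hd2 _ h1]; ring)
  rw [h.PP_addc hu.cont b hx1'.1.le hx1'.2.le] at t1 t2
  rw [PP_const, zero_mul, sub_zero] at t3
  have rc := h.ray_cut he hχ b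
  rw [← h.VV_one] at rc
  have q : 3 * B * δ * (VV Ω (x1 + δ) - VV Ω x1) ≤ 48 * B * δ * VV Ω 1 := by
    have : 3 * B * δ * (VV Ω (x1 + δ) - VV Ω x1) ≤ 3 * B * δ * (16 * VV Ω 1 * δ) :=
      mul_le_mul_of_nonneg_left hV' (by positivity)
    have : 48 * B * δ * VV Ω 1 * δ ≤ 48 * B * δ * VV Ω 1 * 1 := mul_le_mul_of_nonneg_left (by linarith) (by positivity)
    nlinarith
  have hR1 : a^2/4 ≤ VV Ω x1 / VV Ω 1 := by
    rw [le_div_iff₀ hW]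
    exact (h.V_left a0 (by linarith)).trans (h.VV_mono a0.le hx1 hx1'.2.le)
  have hR2 : VV Ω x1 / VV Ω 1 ≤ 1 - a^2/4 := by
    rw [div_le_iff₀ hW]
    exact (h.VV_mono hx1'.1.le hx2 (by linarith)).trans (h.V_right a0 (by linarith))
  have e : PP Ω u x1 + b * VV Ω x1 = (PP Ω u x1 / VV Ω 1 + b * (VV Ω x1 / VV Ω 1)) * VV Ω 1 := by
    field_simp
  rw [e] at t1 t2
  have al := alg_ray (W := VV Ω 1) (P := PP Ω u x1 / VV Ω 1) (η := η) (s := 48 * B * δ) hW hβ hb hbB B1 (by positivity : 0 ≤ a^2/4) (by nlinarith) hR1 hR2 (by positivity)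
    (by rw [div_le_iff₀ hW]; exact hP2) (by positivity) ht (t1.trans q) (t2.trans q)
  have al2 := mul_le_mul_of_nonneg_left al hl.le
  have t4 := (abs_le.1 t3).2
  have t5 : 9 * T^2 * B^2 * (VV Ω (x1 + δ) - VV Ω x1) ≤ 9 * T^2 * B^2 * (16 * VV Ω 1 * δ) :=
      mul_le_mul_of_nonneg_left hV' (by positivity)
  have fin : (lam * (β^2 * (a^2/4) / 2 - 4 * B * (η + 48 * B * δ))) * VV Ω 1 ≤ (144 * T^2 * B^2 * δ) * VV Ω 1 := by
    nlinarith
  exact le_of_mul_le_mul_right fin hW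

theorem G_nonpos (h : Dom Ω ε) {u : E2 → ℝ} {lam : ℝ} (he : Eig Ω u lam) {x : ℝ} (hx : x ∈ Ioo (0:ℝ) 1)
    {η : ℝ} (hη : 0 ≤ η) (hP : η * VV Ω 1 ≤ PP Ω u x) : avg Ω (DD Ω 0 u) x ≤ -(lam * η / 16) := by
  have g := h.G_eq he hx
  have f1 := h.fw_pos hx
  have f2 := h.fw_le_W hx
  have hl := he.pos
  have k1 : lam * η / 16 * fw Ω x ≤ lam * η / 16 * (16 * VV Ω 1) := mul_le_mul_of_nonneg_left f2 (by positivity)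
  have k2 : lam * (η * VV Ω 1) ≤ lam * PP Ω u x := mul_le_mul_of_nonneg_left hP hl.le
  have : avg Ω (DD Ω 0 u) x * fw Ω x ≤ -(lam * η / 16) * fw Ω x := by
    rw [mul_comm, g]; linarith
  exact le_of_mul_le_mul_right this f1

theorem PP_lower (h : Dom Ω ε) {u : E2 → ℝ} {lam B c a : ℝ} (he : Eig Ω u lam) (hc : Cor Ω u ε B c a)
    {T δ η : ℝ} (hT0 : 0 < T) (hT : ∀ t, |deriv Real.smoothTransition t| ≤ T)
    (hTz1 : ∀ t, t < 0 → deriv Real.smoothTransition t = 0) (hTz2 : ∀ t, 1 < t → deriv Real.smoothTransition t = 0)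
    (hδ : ε ≤ δ) (hδa : δ ≤ a) (ht : η + 48 * B * δ ≤ 1) (hη0 : 0 < η) (hη : η ≤ c * a^2/16) (hBε : 4 * B * ε ≤ c * a^2/16)
    (hlam : 144 * T^2 * B^2 * δ < lam * ((c * a^2/8)^2 * (a^2/4) / 2 - 4 * B * (η + 48 * B * δ)))
    {x : ℝ} (hx : x ∈ Icc a (1 - a)) : η * VV Ω 1 ≤ PP Ω u x := by
  have hcc := hc
  obtain ⟨B1, c0, c1, a0, a1, U, G, L, E0, E1⟩ := hc
  have hu := he.sm
  have hW := h.V1_pos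
  have hl := he.pos
  have hε := h.pos
  by_contra hcon
  rw [not_le] at hcon
  have hPc : ContinuousOn (PP Ω u) (Icc a (1 - a)) := (h.PP_cont hu.cont).mono (Icc_subset_Icc a0.le (by linarith))
  have hK : IsCompact (Icc a (1 - a) ∩ (PP Ω u) ⁻¹' (Iic (η * VV Ω 1))) :=
    isCompact_Icc.of_isClosed_subset (hPc.preimage_isClosed_of_isClosed isClosed_Icc isClosed_Iic) inter_subset_left
  obtain ⟨x1, ⟨⟨hx1, hx2⟩, hxP⟩, hmin⟩ := hK.exists_isLeast ⟨x, hx, hcon.le⟩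
  have hxP : PP Ω u x1 ≤ η * VV Ω 1 := hxP
  have hbig : ∀ z, a ≤ z → z < x1 → η * VV Ω 1 ≤ PP Ω u z := by
    intro z hz1 hz2
    by_contra hn
    have := hmin ⟨⟨hz1, by linarith⟩, (not_le.1 hn).le⟩
    linarith
  have hPa : c * a^2/4 * VV Ω 1 ≤ PP Ω u a := by
    have k := h.PP_mono (f := fun _ => c) (g := u) continuousOn_const hu.cont le_rfl a0.le (by linarith)
      (fun p hp _ hpa => E0 p hp hpa.le)
    rw [PP_const, PP_const, PP_zero, VV_zero] at k
    have := mul_le_mul_of_nonneg_left (h.V_left a0 (by linarith)) c0.le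
    linarith
  have hca : 0 < c * a^2 := by positivity
  have hηW : η * VV Ω 1 < PP Ω u a := by nlinarith
  have hax : a < x1 := by
    apply lt_of_le_of_ne hx1
    rintro rfl
    linarith
  have hP0 : η * VV Ω 1 ≤ PP Ω u x1 := by
    have hct : Tendsto (PP Ω u) (𝓝[<] x1) (𝓝 (PP Ω u x1)) := by
      have := ((h.PP_cont hu.cont).continuousAt (x := x1) (Icc_mem_nhds (by linarith) (by linarith)))
      exact this.tendsto.mono_left nhdsWithin_le_nhds
    apply ge_of_tendsto hct
    filter_upwards [Ioo_mem_nhdsLT hax] with z hz using hbig z hz.1.le hz.2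
  have hP00 : 0 ≤ PP Ω u x1 := le_trans (by positivity) hP0
  have hUmon : ∀ z ∈ Ioo a x1, avg Ω u x1 - 4 * B * ε ≤ avg Ω u z := by
    intro z hz
    have d := h.dini_le hu (g := 0) (by linarith : 0 ≤ B) (G 1) (hδ.trans hδa) hz.1.le hz.2.le hx2 (by
      intro s hs
      have := h.G_nonpos he (x := s) ⟨by linarith [hs.1, hz.1], by linarith [hs.2]⟩ hη0.le (hbig s (by linarith [hs.1, hz.1]) hs.2)
      have h0 : 0 ≤ lam * η / 16 := by positivity
      linarith)
    have h4 : 0 ≤ 4 * B * ε := by positivity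
    have : x1 - z ≤ 1 := by linarith [hz.1]
    nlinarith
  have hav := h.PP_mono_avg hu.cont a0.le hx1 (by linarith) hUmon
  have hv0 : 0 ≤ VV Ω x1 - VV Ω a := sub_nonneg.2 (h.VV_mono a0.le hx1 (by linarith))
  have hv1 : VV Ω x1 - VV Ω a ≤ VV Ω 1 := by
    have i1 := h.VV_mono (x := 0) (y := a) le_rfl a0.le (by linarith)
    have i2 := h.VV_mono (x := x1) (y := 1) (by linarith) (by linarith) le_rfl
    rw [VV_zero] at i1
    linarith
  have hb : c * a^2/8 ≤ - avg Ω u x1 := by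
    by_contra hn
    rw [not_le] at hn
    have k0 : -(c * a^2/8) - c * a^2/16 ≤ avg Ω u x1 - 4 * B * ε := by linarith
    have k1 : (-(c * a^2/8) - c * a^2/16) * (VV Ω x1 - VV Ω a) ≤ (avg Ω u x1 - 4 * B * ε) * (VV Ω x1 - VV Ω a) :=
      mul_le_mul_of_nonneg_right k0 hv0
    have k2 : (c * a^2/8 + c * a^2/16) * (VV Ω x1 - VV Ω a) ≤ (c * a^2/8 + c * a^2/16) * VV Ω 1 :=
      mul_le_mul_of_nonneg_left hv1 (by positivity)
    have k3 : η * VV Ω 1 ≤ c * a^2/16 * VV Ω 1 := mul_le_mul_of_nonneg_right hη hW.le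
    have k4 : (avg Ω u x1 - 4 * B * ε) * (VV Ω x1 - VV Ω a) ≤ (c * a^2/16 - c * a^2/4) * VV Ω 1 := by linarith
    have k5 : (c * a^2/16 - c * a^2/4) * VV Ω 1 = -((c * a^2/8 + c * a^2/16) * VV Ω 1) := by ring
    -- equality case excluded by strictness of hn
    rcases hv0.eq_or_lt with hz | hz
    · rw [← hz] at k4 
      have : 0 < (c * a^2/8 + c * a^2/16) * VV Ω 1 := by positivity
      linarith
    · have k6 : (-(c * a^2/8) - c * a^2/16) * (VV Ω x1 - VV Ω a) < (avg Ω u x1 - 4 * B * ε) * (VV Ω x1 - VV Ω a) :=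
        mul_lt_mul_of_pos_right (by linarith) hz
      linarith
  have := h.ray_at he hcc hT0 hT hTz1 hTz2 hδ hδa hx1 hx2 (by positivity) hb hP00 hxP ht
  linarith

end Dom

theorem core (B c a : ℝ) (B1 : 1 ≤ B) (c0 : 0 < c) (c1 : c ≤ 1) (a0 : 0 < a) (a1 : a ≤ 1/4) :
    ∃ κ > (0:ℝ), ∃ ε₁ > (0:ℝ), ∀ ε Ω u lam, ε < ε₁ → Dom Ω ε → Eig Ω u lam → Cor Ω u ε B c a →
      ∀ x y, a ≤ x → x ≤ y → y ≤ 1 - a → κ * (y - x) ≤ avg Ω u x - avg Ω u y := by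
  obtain ⟨T, hT0, hT, hz1, hz2⟩ := st_bound
  obtain ⟨E, hE⟩ : ∃ E, E = (c * a^2/8)^2 * (a^2/4) / 2 := ⟨_, rfl⟩
  have hE0 : 0 < E := by rw [hE]; positivity
  obtain ⟨l0, hl0⟩ : ∃ l0, l0 = c * a / (2 * B) := ⟨_, rfl⟩
  have hB0 : 0 < B := by linarith
  have hl0p : 0 < l0 := by rw [hl0]; positivity
  obtain ⟨η, hη⟩ : ∃ η, η = min (min (1/2) (c * a^2/16)) (E / (16 * B)) := ⟨_, rfl⟩
  have hη0 : 0 < η := by rw [hη]; positivity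
  have hη1 : η ≤ 1/2 := by rw [hη]; exact (min_le_left _ _).trans (min_le_left _ _)
  have hη2 : η ≤ c * a^2/16 := by rw [hη]; exact (min_le_left _ _).trans (min_le_right _ _)
  have hη3 : η * (16 * B) ≤ E := by rw [← le_div_iff₀ (by positivity), hη]; exact (min_le_right _ _)
  obtain ⟨δ, hδ⟩ : ∃ δ, δ = min (min a (1/(96 * B))) (min (E / (16 * 48 * B * B)) (l0 * E / (4 * (144 * T^2 * B^2)))) := ⟨_, rfl⟩
  have hδ0 : 0 < δ := by rw [hδ]; positivity
  have hδ1 : δ ≤ a := by rw [hδ]; exact (min_le_left _ _).trans (min_le_left _ _)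
  have hδ2 : δ * (96 * B) ≤ 1 := by rw [← le_div_iff₀ (by positivity), hδ]; exact (min_le_left _ _).trans (min_le_right _ _)
  have hδ3 : δ * (16 * 48 * B * B) ≤ E := by rw [← le_div_iff₀ (by positivity), hδ]; exact (min_le_right _ _).trans (min_le_left _ _)
  have hδ4 : δ * (4 * (144 * T^2 * B^2)) ≤ l0 * E := by rw [← le_div_iff₀ (by positivity), hδ]; exact (min_le_right _ _).trans (min_le_right _ _)
  obtain ⟨κ, hκ⟩ : ∃ κ, κ = l0 * η / 32 := ⟨_, rfl⟩
  have hκ0 : 0 < κ := by rw [hκ]; positivity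
  refine ⟨κ, hκ0, min (min δ (c * a^2/16 / (4 * B))) (min (c / (4 * B)) (κ / (4 * B))), by positivity, ?_⟩
  intro ε Ω u lam hε h he hc x y hax hxy hya
  have e1 : ε ≤ δ := hε.le.trans ((min_le_left _ _).trans (min_le_left _ _))
  have e2 : ε * (4 * B) ≤ c * a^2/16 := by rw [← le_div_iff₀ (by positivity)]; exact hε.le.trans ((min_le_left _ _).trans (min_le_right _ _))
  have e3 : ε * (4 * B) ≤ c := by rw [← le_div_iff₀ (by positivity)]; exact hε.le.trans ((min_le_right _ _).trans (min_le_left _ _))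
  have e4 : ε * (4 * B) ≤ κ := by rw [← le_div_iff₀ (by positivity)]; exact hε.le.trans ((min_le_right _ _).trans (min_le_right _ _))
  have hlam := h.lam_ge he hc (e1.trans hδ1) (by linarith)
  rw [← hl0] at hlam
  have hl := he.pos
  have key : 144 * T^2 * B^2 * δ < lam * (E - 4 * B * (η + 48 * B * δ)) := by
    have i1 : E / 2 ≤ E - 4 * B * (η + 48 * B * δ) := by nlinarith
    have i2 : l0 * (E / 2) ≤ lam * (E - 4 * B * (η + 48 * B * δ)) := mul_le_mul hlam i1 (by positivity) hl.le
    have i3 : 0 < l0 * E := by positivity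
    linarith
  rw [hE] at key
  have d := h.dini_le he.sm (g := -(2 * κ)) hB0.le (hc.G 1) (e1.trans hδ1) hax hxy hya (by
    intro s hs
    have hP := h.PP_lower he hc hT0 hT hz1 hz2 e1 hδ1 (by linarith) hη0 hη2 (by linarith) key (x := s) ⟨by linarith [hs.1], by linarith [hs.2]⟩
    have := h.G_nonpos he (x := s) ⟨by linarith [hs.1], by linarith [hs.2]⟩ hη0.le hP
    have i : l0 * η ≤ lam * η := mul_le_mul_of_nonneg_right hlam hη0.le
    linarith)
  nlinarith

namespace Dom
variable {Ω : Set E2} {ε : ℝ}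

theorem D_smul (h : Dom Ω ε) {f : E2 → ℝ} (hf : Sm Ω f) (c : ℝ) (i : Fin 2) {p : E2}
    (hp : p ∈ closure Ω) : DD Ω i (fun q => c * f q) p = c * DD Ω i f p := by
  rw [h.D_mul (Sm.const c) hf i hp, D_const]; ring

theorem eig_smul (h : Dom Ω ε) {u : E2 → ℝ} {lam : ℝ} (he : Eig Ω u lam) (c : ℝ) :
    Eig Ω (fun p => c * u p) lam where
  sm := (Sm.const c).mul he.sm
  mean := by rw [integral_const_mul, he.mean, mul_zero]
  pos := he.pos
  lap := by
    intro p hp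
    have k : ∀ i, DD Ω i (DD Ω i (fun p => c * u p)) p = c * DD Ω i (DD Ω i u) p := by
      intro i
      have e : DD Ω i (DD Ω i (fun p => c * u p)) p = DD Ω i (fun q => c * DD Ω i u q) p := by
        exact h.D_congr i (fun q hq => h.D_smul he.sm c i (subset_closure hq)) hp
      rw [e, h.D_smul (h.sm_D he.sm i) c i (subset_closure hp)]
    rw [k, k, ← mul_add, he.lap p hp]; ring
  en := by
    have e1 : ∫ p in Ω, (c * u p)^2 = c^2 * ∫ p in Ω, (u p)^2 := by
      rw [← integral_const_mul]; congr 1; funext p; ring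
    have e2 : ∫ p in Ω, ((DD Ω 0 (fun p => c * u p) p)^2 + (DD Ω 1 (fun p => c * u p) p)^2) =
        c^2 * ∫ p in Ω, ((DD Ω 0 u p)^2 + (DD Ω 1 u p)^2) := by
      rw [← integral_const_mul]
      apply setIntegral_congr_fun h.op.measurableSet
      intro p hp
      simp only [h.D_smul he.sm c _ (subset_closure hp)]; ring
    rw [e1, e2, ← he.en]; ring
  weak := by
    intro φ hφ
    have e1 : ∫ p in Ω, (c * u p) * φ p = c * ∫ p in Ω, u p * φ p := by
      rw [← integral_const_mul]; congr 1; funext p; ring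
    have e2 : ∫ p in Ω, (DD Ω 0 (fun p => c * u p) p * DD Ω 0 φ p + DD Ω 1 (fun p => c * u p) p * DD Ω 1 φ p) =
        c * ∫ p in Ω, (DD Ω 0 u p * DD Ω 0 φ p + DD Ω 1 u p * DD Ω 1 φ p) := by
      rw [← integral_const_mul]
      apply setIntegral_congr_fun h.op.measurableSet
      intro p hp
      simp only [h.D_smul he.sm c _ (subset_closure hp)]; ring
    rw [e1, e2, he.weak φ hφ]; ring
  ray := he.ray

/-- Building the normalised data. -/
theorem mkCor (h : Dom Ω ε) {u : E2 → ℝ} {lam c₀ C₀ K B c a m L0 L1 : ℝ} (he : Eig Ω u lam)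
    (hC₀ : 0 < C₀) (hK1 : 1 ≤ K) (hKC : C₀ ≤ K) (hB : B = 1 + C₀ + K + C₀ * K)
    (hc1 : c ≤ 1 / 2) (hc0 : 0 < c) (hcc : 2 * c ≤ c₀) (ha : a * (4 * B) = c)
    (hεa : ε ≤ a) (hm : m = sSup (u '' Ω)) (hne : ∃ p ∈ Ω, u p ≠ 0)
    (hgr : ∀ p ∈ Ω, ‖gradient u p‖ ≤
        C₀ * max (min (p 0) (1 - p 0)) ε * sSup ((fun q => |u q|) '' Ω))
    (h1 : c₀ * m ≤ -sInf (u '' Ω)) (h2 : -sInf (u '' Ω) ≤ C₀ * m)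
    (hL0 : Tendsto (ubar2 Ω u) (𝓝[>] 0) (𝓝 L0)) (hL0' : (1 - C₀ * ε) * m ≤ L0)
    (hL1 : Tendsto (ubar2 Ω u) (𝓝[<] 1) (𝓝 L1)) (hL1' : L1 ≤ (1 - C₀ * ε) * sInf (u '' Ω)) :
    0 < m ∧ Cor Ω (fun p => m⁻¹ * u p) ε B c a := by
  have hu := he.sm
  have hε := h.pos
  obtain ⟨D, hD0, hD⟩ := h.bdd hu.cont
  have bA : BddAbove (u '' Ω) := ⟨D, by rintro _ ⟨p, hp, rfl⟩; exact (abs_le.1 (hD p (subset_closure hp))).2⟩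
  have bB : BddBelow (u '' Ω) := ⟨-D, by rintro _ ⟨p, hp, rfl⟩; exact (abs_le.1 (hD p (subset_closure hp))).1⟩
  have up : ∀ p ∈ Ω, u p ≤ m := fun p hp => by rw [hm]; exact le_csSup bA ⟨p, hp, rfl⟩
  have lo : ∀ p ∈ Ω, sInf (u '' Ω) ≤ u p := fun p hp => csInf_le bB ⟨p, hp, rfl⟩
  have hm0 : 0 < m := by
    by_contra hn
    rw [not_lt] at hn
    obtain ⟨p, hp, hpn⟩ := hne
    have := mul_nonpos_of_nonneg_of_nonpos hC₀.le hn
    have i1 := up p hp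
    have i2 := lo p hp
    exact hpn (le_antisymm (by linarith) (by linarith))
  have hK0 : 0 < K := by linarith
  have hCK : 0 < C₀ * K := by positivity
  have hB1 : 1 ≤ B := by linarith
  have hBp : 0 < B := by linarith
  have hBK : K ≤ B := by linarith
  have hBC : C₀ ≤ B := by linarith
  have hBCK : C₀ * K ≤ B := by linarith
  have ha0 : 0 < a := by
    by_contra hn
    rw [not_lt] at hn
    have := mul_nonpos_of_nonpos_of_nonneg hn (by positivity : 0 ≤ 4 * B)
    linarith
  have ha1 : a ≤ 1/8 := by nlinarith
  have ab : ∀ p ∈ Ω, |u p| ≤ K * m := by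
    intro p hp
    have i1 := up p hp
    have i2 := lo p hp
    have : C₀ * m ≤ K * m := mul_le_mul_of_nonneg_right hKC hm0.le
    have : 1 * m ≤ K * m := mul_le_mul_of_nonneg_right hK1 hm0.le
    rw [abs_le]; constructor <;> linarith
  have hM : sSup ((fun q => |u q|) '' Ω) ≤ K * m := by
    apply csSup_le (h.nonempty.image _)
    rintro _ ⟨p, hp, rfl⟩
    exact ab p hp
  have hmx : ∀ p : E2, 0 ≤ max (min (p 0) (1 - p 0)) ε := fun p => hε.le.trans (le_max_right _ _)
  have hgr2 : ∀ p ∈ Ω, ‖gradient u p‖ ≤ (C₀ * K * m) * max (min (p 0) (1 - p 0)) ε := by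
    intro p hp
    refine (hgr p hp).trans ?_
    have := mul_le_mul_of_nonneg_left hM (mul_nonneg hC₀.le (hmx p))
    linarith
  have hgr3 : ∀ p ∈ Ω, ‖gradient u p‖ ≤ C₀ * K * m := by
    intro p hp
    refine (hgr2 p hp).trans ?_
    have hm1 : max (min (p 0) (1 - p 0)) ε ≤ 1 := by
      apply max_le _ (by linarith)
      have := (h.cl_box (subset_closure hp)).1.2
      exact (min_le_left _ _).trans this
    exact mul_le_of_le_one_right (by positivity) hm1
  have hL : ∀ p ∈ Ω, ∀ q ∈ Ω, |u p - u q| ≤ (C₀ * K * m) * (|p 0 - q 0| + 2 * ε) :=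
    fun p hp q hq => h.lipp hu hgr3 hp hq
  have hCKa : (C₀ * K * m) * (a + 2 * ε) ≤ B * m * (3 * a) :=
    mul_le_mul (mul_le_mul_of_nonneg_right hBCK hm0.le) (by linarith) (by positivity) (by positivity)
  have hCε : C₀ * ε ≤ B * a := mul_le_mul hBC hεa hε.le hBp.le
  have hBa : B * a = c / 4 := by linarith
  have e0 : ∀ p ∈ Ω, p 0 ≤ a → c * m ≤ u p := by
    intro p hp hpa
    have k : L0 ≤ u p + B * m * (3 * a) := by
      apply le_of_tendsto hL0
      filter_upwards [Ioo_mem_nhdsGT ha0] with x hx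
      have hx' : x ∈ Ioo (0:ℝ) 1 := ⟨hx.1, by linarith [hx.2]⟩
      rw [h.ubar_eq u hx']
      apply h.avg_le hu.cont hx'
      intro y hy
      have l := (abs_le.1 (hL p hp _ hy)).1
      rw [mk2_zero] at l
      have p0 := (h.cl_box (subset_closure hp)).1.1
      have : |p 0 - x| ≤ a := by rw [abs_le]; constructor <;> linarith [hx.1, hx.2]
      have : (C₀ * K * m) * (|p 0 - x| + 2 * ε) ≤ (C₀ * K * m) * (a + 2 * ε) :=
        mul_le_mul_of_nonneg_left (by linarith) (by positivity)
      linarith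
    have k2 : (C₀ * ε) * m ≤ (c/4) * m := mul_le_mul_of_nonneg_right (by linarith) hm0.le
    have k3 : B * m * (3 * a) = 3 * (c/4) * m := by rw [← hBa]; ring
    have k4 : c * m ≤ 1/2 * m := mul_le_mul_of_nonneg_right hc1 hm0.le
    linarith
  have e1 : ∀ p ∈ Ω, 1 - a ≤ p 0 → u p ≤ -c * m := by
    intro p hp hpa
    have k : u p - B * m * (3 * a) ≤ L1 := by
      apply ge_of_tendsto hL1
      filter_upwards [Ioo_mem_nhdsLT (show 1 - a < 1 by linarith)] with x hx
      have hx' : x ∈ Ioo (0:ℝ) 1 := ⟨by linarith [hx.1], hx.2⟩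
      rw [h.ubar_eq u hx']
      apply h.le_avg hu.cont hx'
      intro y hy
      have l := (abs_le.1 (hL p hp _ hy)).2
      rw [mk2_zero] at l
      have p0 := (h.cl_box (subset_closure hp)).1.2
      have : |p 0 - x| ≤ a := by rw [abs_le]; constructor <;> linarith [hx.1, hx.2]
      have : (C₀ * K * m) * (|p 0 - x| + 2 * ε) ≤ (C₀ * K * m) * (a + 2 * ε) :=
        mul_le_mul_of_nonneg_left (by linarith) (by positivity)
      linarith
    have k3 : B * m * (3 * a) = 3 * (c/4) * m := by rw [← hBa]; ring
    have k5 : 2 * c * m ≤ c₀ * m := mul_le_mul_of_nonneg_right hcc hm0.le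
    have k6 : (1 - C₀ * ε) * sInf (u '' Ω) ≤ (1 - C₀ * ε) * (-(2 * c * m)) :=
      mul_le_mul_of_nonneg_left (by linarith) (by linarith)
    have k7 : (C₀ * ε) * (2 * c * m) ≤ (1/8) * (2 * c * m) := mul_le_mul_of_nonneg_right (by linarith) (by positivity)
    have k8 : 0 < c * m := by positivity
    linarith
  have hmi : 0 < m⁻¹ := inv_pos.2 hm0
  have hmm : m⁻¹ * m = 1 := inv_mul_cancel₀ hm0.ne'
  refine ⟨hm0, ⟨hB1, hc0, by linarith, ha0, by linarith, ?_, ?_, ?_, ?_, ?_⟩⟩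
  · intro p hp
    rw [abs_mul, abs_of_pos hmi, inv_mul_le_iff₀ hm0]
    refine (ab p hp).trans ?_
    rw [mul_comm]; exact mul_le_mul_of_nonneg_left hBK hm0.le
  · intro i p hp
    rw [h.D_smul hu _ _ (subset_closure hp), abs_mul, abs_of_pos hmi, inv_mul_le_iff₀ hm0]
    refine (h.D_le_grad u i hp).trans ((hgr2 p hp).trans ?_)
    rw [← mul_assoc, mul_comm m B]
    exact mul_le_mul_of_nonneg_right (mul_le_mul_of_nonneg_right hBCK hm0.le) (hmx p)
  · intro p hp q hq
    rw [← mul_sub, abs_mul, abs_of_pos hmi, inv_mul_le_iff₀ hm0]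
    refine (hL p hp q hq).trans ?_
    rw [← mul_assoc, mul_comm m B]
    exact mul_le_mul_of_nonneg_right (mul_le_mul_of_nonneg_right hBCK hm0.le) (by positivity)
  · intro p hp hpa
    rw [le_inv_mul_iff₀ hm0, mul_comm]
    exact e0 p hp hpa
  · intro p hp hpa
    rw [inv_mul_le_iff₀ hm0, mul_comm]
    exact e1 p hp hpa

end Dom

/-- In dimension 2, every point of the nodal set has first coordinate
within `Cε²` of the smallest zero `s₀` of the cross-sectional average `ū`; in particular
the projection of the nodal set to the x-axis has diameter at most `Cε²`. -/
theorem nodal_set_width_eps_squared_2d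
    (c₀ C₀ : ℝ) (hc₀ : 0 < c₀) (hC₀ : 0 < C₀) :
    ∃ C > (0:ℝ), ∃ ε₀ > (0:ℝ),
    ∀ (ε : ℝ) (Ω : Set (EuclideanSpace ℝ (Fin 2)))
      (u : EuclideanSpace ℝ (Fin 2) → ℝ) (lam L0 L1 s₀ : ℝ),
      0 < ε → ε < ε₀ →
      IsOpen Ω → Convex ℝ Ω → Bornology.IsBounded Ω →
      -- smooth boundary
      (∃ F : EuclideanSpace ℝ (Fin 2) → ℝ, ContDiff ℝ (⊤:ℕ∞) F ∧
        Ω = {p | F p < 0} ∧ frontier Ω = {p | F p = 0} ∧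
        ∀ p ∈ frontier Ω, gradient F p ≠ 0) →
      -- Ω ⊆ (0,1) × (-ε, ε)
      (∀ x y, mk2 x y ∈ Ω → x ∈ Ioo (0:ℝ) 1 ∧ y ∈ Ioo (-ε) ε) →
      -- nonempty cross-sections
      (∀ s ∈ Ioo (0:ℝ) 1, (cross2 Ω s).Nonempty) →
      -- u is a nonzero mean-zero smooth Neumann eigenfunction with eigenvalue lam
      ContDiffOn ℝ (⊤:ℕ∞) u (closure Ω) →
      (∃ p ∈ Ω, u p ≠ 0) →
      (∫ p in Ω, u p) = 0 →
      (∀ p ∈ Ω, lap u p = -(lam * u p)) →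
      (∀ p ∈ frontier Ω, ∀ v, (∀ z ∈ Ω, ⟪v, z - p⟫ ≤ 0) → ⟪gradient u p, v⟫ = 0) →
      0 < lam →
      -- lam is the smallest nonzero Neumann eigenvalue (variational
      -- characterization), attained at u
      lam = sInf {r | ∃ w : EuclideanSpace ℝ (Fin 2) → ℝ,
        ContDiffOn ℝ (⊤:ℕ∞) w (closure Ω) ∧ (∃ p ∈ Ω, w p ≠ 0) ∧ (∫ p in Ω, w p) = 0 ∧
        r = (∫ p in Ω, ‖gradient w p‖ ^ 2) / (∫ p in Ω, (w p) ^ 2)} →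
      lam = (∫ p in Ω, ‖gradient u p‖ ^ 2) / (∫ p in Ω, (u p) ^ 2) →
      -- facts from [CJK2009], assumed as hypotheses
      (∀ p ∈ Ω, ‖gradient u p‖ ≤
        C₀ * max (min (p 0) (1 - p 0)) ε * sSup ((fun q => |u q|) '' Ω)) →
      c₀ * sSup (u '' Ω) ≤ -sInf (u '' Ω) →
      -sInf (u '' Ω) ≤ C₀ * sSup (u '' Ω) →
      Tendsto (ubar2 Ω u) (𝓝[>] 0) (𝓝 L0) →
      (1 - C₀ * ε) * sSup (u '' Ω) ≤ L0 →
      Tendsto (ubar2 Ω u) (𝓝[<] 1) (𝓝 L1) →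
      L1 ≤ (1 - C₀ * ε) * sInf (u '' Ω) →
      -- s₀ is the smallest zero of ū in (0,1)
      s₀ ∈ Ioo (0:ℝ) 1 → ubar2 Ω u s₀ = 0 →
      (∀ s ∈ Ioo (0:ℝ) 1, ubar2 Ω u s = 0 → s₀ ≤ s) →
      (∀ p ∈ Ω, u p = 0 → |p 0 - s₀| ≤ C * ε ^ 2) ∧
      (∀ p ∈ Ω, ∀ q ∈ Ω, u p = 0 → u q = 0 → |p 0 - q 0| ≤ C * ε ^ 2) := by

  obtain ⟨K, hK⟩ : ∃ K, K = max 1 C₀ := ⟨_, rfl⟩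
  have hK1 : 1 ≤ K := by rw [hK]; exact le_max_left _ _
  have hKC : C₀ ≤ K := by rw [hK]; exact le_max_right _ _
  obtain ⟨B, hB⟩ : ∃ B, B = 1 + C₀ + K + C₀ * K := ⟨_, rfl⟩
  have hK0 : 0 < K := by linarith
  have hB1 : 1 ≤ B := by have : 0 < C₀ * K := by positivity
                         linarith
  have hBp : 0 < B := by linarith
  obtain ⟨c, hc⟩ : ∃ c, c = min 1 c₀ / 2 := ⟨_, rfl⟩
  have hc0 : 0 < c := by rw [hc]; positivity
  have hc1 : c ≤ 1/2 := by rw [hc]; linarith [min_le_left 1 c₀]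
  have hcc : 2 * c ≤ c₀ := by rw [hc]; linarith [min_le_right 1 c₀]
  obtain ⟨a, ha⟩ : ∃ a, a = c / (4 * B) := ⟨_, rfl⟩
  have ha0 : 0 < a := by rw [ha]; positivity
  have ha' : a * (4 * B) = c := by rw [ha]; field_simp
  have ha1 : a ≤ 1/4 := by nlinarith
  obtain ⟨κ, hκ, ε₁, hε₁, hcore⟩ := core B c a hB1 hc0 (by linarith) ha0 ha1
  obtain ⟨k, hk⟩ : ∃ k, k = 8 * B^2 / (c^2 * a^2) + 1 := ⟨_, rfl⟩
  have hL0 : 0 < 8 * B^2 / (c^2 * a^2) := by positivity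
  have hk0 : 0 < k := by linarith
  have hk2 : 8 * B^2 / (c^2 * a^2) < k^2 := by nlinarith
  refine ⟨2 * (16 * B / κ), by positivity, min ε₁ (min a (1 / k)), by positivity, ?_⟩
  intro ε Ω u lam L0 L1 s₀ hε hεε hop hcv hbd hsm hsub hne hu hune hmean hlap _ hlam hinf hat hgr h1 h2 hT0 hT0' hT1 hT1' hs hs0 _
  have h : Dom Ω ε := ⟨hop, hcv, hbd, hsub, hne, hε⟩
  have hεa : ε ≤ a := hεε.le.trans ((min_le_right _ _).trans (min_le_left _ _))
  have hεk : k * ε ≤ 1 := by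
    have : ε ≤ 1 / k := hεε.le.trans ((min_le_right _ _).trans (min_le_right _ _))
    rw [le_div_iff₀ hk0] at this
    linarith
  have he0 := h.mkEig hu hune hmean hlap hlam hinf hat
  obtain ⟨hm0, hC⟩ := h.mkCor he0 hC₀ hK1 hKC hB hc1 hc0 hcc ha' hεa rfl hune hgr h1 h2 hT0 hT0' hT1 hT1'
  obtain ⟨m, hm⟩ : ∃ m, m = sSup (u '' Ω) := ⟨_, rfl⟩
  rw [← hm] at hm0 hC
  have he := h.eig_smul he0 m⁻¹
  obtain ⟨F, hF, hFΩ, hFfr, hFn⟩ := hsm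
  have hsl := hcore ε Ω _ lam (hεε.trans_le (min_le_left _ _)) h he hC
  have hD1 : ∀ p ∈ Ω, |DD Ω 1 (fun p => m⁻¹ * u p) p| ≤ 8 * B * ε := fun p hp =>
    h.D1_bd he hF hFΩ hFfr hFn hBp.le hC.G ((h.lam_le he hC (by linarith)).trans_lt hk2) hk0 hεk hp
  have hv0 : avg Ω (fun p => m⁻¹ * u p) s₀ = 0 := by
    rw [← h.ubar_eq _ hs]
    have : ubar2 Ω (fun p => m⁻¹ * u p) s₀ = m⁻¹ * ubar2 Ω u s₀ := by
      unfold ubar2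
      rw [integral_const_mul, mul_div_assoc]
    rw [this, hs0, mul_zero]
  have hsa : a ≤ s₀ := by
    by_contra hn
    have := h.U_left he.sm hC hs.1 (not_le.1 hn).le
    linarith
  have hsb : s₀ ≤ 1 - a := by
    by_contra hn
    have := h.U_right he.sm hC hs.2 (not_le.1 hn).le
    linarith
  have main : ∀ p ∈ Ω, u p = 0 → |p 0 - s₀| ≤ 16 * B / κ * ε^2 := by
    intro p hp hp0
    have o := h.osc he.sm hD1 hp
    simp only [hp0, mul_zero, zero_sub, abs_neg] at o
    have hpa : a ≤ p 0 := by
      by_contra hn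
      have := hC.E0 p hp (not_le.1 hn).le
      simp only [hp0, mul_zero] at this
      linarith
    have hpb : p 0 ≤ 1 - a := by
      by_contra hn
      have := hC.E1 p hp (not_le.1 hn).le
      simp only [hp0, mul_zero] at this
      linarith
    have q : κ * |p 0 - s₀| ≤ 16 * B * ε^2 := by
      rcases le_total (p 0) s₀ with hle | hle
      · have := hsl _ _ hpa hle hsb
        rw [abs_sub_comm, abs_of_nonneg (by linarith)]
        rw [hv0] at this
        have := (abs_le.1 o).2
        linarith
      · have := hsl _ _ hsa hle hpb
        rw [abs_of_nonneg (by linarith)]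
        rw [hv0] at this
        have := (abs_le.1 o).1
        linarith
    rw [div_mul_eq_mul_div, le_div_iff₀ hκ]
    linarith
  have hC1 : 0 ≤ 16 * B / κ * ε^2 := by positivity
  constructor
  · intro p hp hp0
    have := main p hp hp0
    linarith
  · intro p hp q hq hp0 hq0
    have i1 := abs_le.1 (main p hp hp0)
    have i2 := abs_le.1 (main q hq hq0)
    rw [abs_le]; constructor <;> linarith [i1.1, i1.2, i2.1, i2.2]
end
end

section
/- Let Ω and ω be as in the context. Then for all 0 < a < b < 1: ω(b) ≤ ω(a) (b/a)^{n−1} and ω(a) ≤ ω(b) ((1−a)/(1−b))^{n−1}. -/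
open MeasureTheory Set Filter Topology RealInnerProductSpace

noncomputable section

/-- The point `(x, y) ∈ ℝ × ℝ^m ≅ ℝ^{m+1}`. -/
def mkPt (m : ℕ) (x : ℝ) (y : EuclideanSpace ℝ (Fin m)) : EuclideanSpace ℝ (Fin (m+1)) :=
  (EuclideanSpace.equiv (Fin (m+1)) ℝ).symm (Fin.cons x ((EuclideanSpace.equiv (Fin m) ℝ) y))

/-- The cross-section `Ω(s) = {y : (s, y) ∈ Ω}`. -/
def cross {m : ℕ} (Ω : Set (EuclideanSpace ℝ (Fin (m+1)))) (s : ℝ) :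
    Set (EuclideanSpace ℝ (Fin m)) := {y | mkPt m s y ∈ Ω}

/-- `ω(s)`: the (n-1)-dimensional volume of the cross-section `Ω(s)`. -/
def ωvol {m : ℕ} (Ω : Set (EuclideanSpace ℝ (Fin (m+1)))) (s : ℝ) : ℝ :=
  (volume (cross Ω s)).toReal

/-- The cross-sectional average `ū(x)` of `u`. -/
def ubarFn {m : ℕ} (Ω : Set (EuclideanSpace ℝ (Fin (m+1))))
    (u : EuclideanSpace ℝ (Fin (m+1)) → ℝ) (x : ℝ) : ℝ :=
  (∫ y in cross Ω x, u (mkPt m x y)) / ωvol Ω x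

theorem cross_bdd {m : ℕ} {Ω : Set (EuclideanSpace ℝ (Fin (m+1)))}
    (hb : Bornology.IsBounded Ω) (s : ℝ) : volume (cross Ω s) ≠ ⊤ := by
  obtain ⟨R, hR⟩ := hb.exists_norm_le
  have : Bornology.IsBounded (cross Ω s) := by
    refine isBounded_iff_forall_norm_le.2 ⟨R, fun y hy => le_trans ?_ (hR _ hy)⟩
    rw [EuclideanSpace.norm_eq, EuclideanSpace.norm_eq]
    apply Real.sqrt_le_sqrt
    rw [Fin.sum_univ_succ]
    simp [mkPt]
    positivity
  exact this.measure_lt_top.ne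

theorem cross_key {m : ℕ} {Ω : Set (EuclideanSpace ℝ (Fin (m+1)))}
    (hc : Convex ℝ Ω) (hb : Bornology.IsBounded Ω) (s c t a : ℝ) (hs : (cross Ω s).Nonempty)
    (ht0 : 0 ≤ t) (ht1 : t ≤ 1) (ha : (1 - t) * s + t * c = a) :
    t ^ m * ωvol Ω c ≤ ωvol Ω a := by
  obtain ⟨p, hp⟩ := hs
  have hsub : AffineMap.homothety p t '' (cross Ω c) ⊆ cross Ω a := by
    rintro _ ⟨y, hy, rfl⟩
    have h := hc hp hy (sub_nonneg.2 ht1) ht0 (by ring)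
    have e : mkPt m a (AffineMap.homothety p t y) = (1 - t) • mkPt m s p + t • mkPt m c y := by
      ext i
      refine Fin.cases ?_ (fun j => ?_) i
      · simp [mkPt, ← ha]
      · simp [mkPt, AffineMap.homothety_apply]
        ring
    show mkPt m a _ ∈ Ω
    rw [e]; exact h
  have h1 := ENNReal.toReal_mono (cross_bdd hb a) (measure_mono (μ := volume) hsub)
  rw [Measure.addHaar_image_homothety, ENNReal.toReal_mul, ENNReal.toReal_ofReal (abs_nonneg _),
    finrank_euclideanSpace_fin, abs_of_nonneg (pow_nonneg ht0 m)] at h1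
  exact h1

/-- Comparison of cross-sectional volumes of a convex domain:
`ω(b) ≤ ω(a)(b/a)^{n-1}` and `ω(a) ≤ ω(b)((1-a)/(1-b))^{n-1}`. -/
theorem cross_section_volume_comparison
    (m : ℕ) (hm : 1 ≤ m) (Ω : Set (EuclideanSpace ℝ (Fin (m+1)))) :
      IsOpen Ω → Convex ℝ Ω → Bornology.IsBounded Ω →
      -- Ω ⊆ (0,1) × ℝ^{n-1}
      (∀ x y, mkPt m x y ∈ Ω → x ∈ Ioo (0:ℝ) 1) →
      -- nonempty cross-sections
      (∀ s ∈ Ioo (0:ℝ) 1, (cross Ω s).Nonempty) →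
      ∀ a b : ℝ, 0 < a → a < b → b < 1 →
        ωvol Ω b ≤ ωvol Ω a * (b / a) ^ m ∧
        ωvol Ω a ≤ ωvol Ω b * ((1 - a) / (1 - b)) ^ m := by
  intro _ hc hbd _ hne a b ha hab hb
  have hb0 : 0 < b := ha.trans hab
  constructor
  · have hlim : Tendsto (fun s : ℝ => ((a - s) / (b - s)) ^ m * ωvol Ω b) (𝓝[>] 0)
        (𝓝 (((a - 0) / (b - 0)) ^ m * ωvol Ω b)) := by
      apply Tendsto.mono_left _ nhdsWithin_le_nhds
      have : ContinuousAt (fun s : ℝ => ((a - s) / (b - s)) ^ m * ωvol Ω b) 0 := by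
        have : b - 0 ≠ 0 := by simpa using hb0.ne'
        fun_prop (disch := assumption)
      exact this
    have h := le_of_tendsto hlim (b := ωvol Ω a) (by
      filter_upwards [Ioo_mem_nhdsGT ha] with s hs
      have hbs : 0 < b - s := by linarith [hs.2]
      refine cross_key hc hbd s b _ a (hne s ⟨hs.1, by linarith [hs.2]⟩) ?_ ?_ ?_
      · exact div_nonneg (by linarith [hs.2]) hbs.le
      · rw [div_le_one hbs]; linarith
      · field_simp; ring)
    simp only [sub_zero] at h
    calc ωvol Ω b = ((a / b) ^ m * ωvol Ω b) * (b / a) ^ m := by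
          rw [mul_right_comm, ← mul_pow]
          rw [div_mul_div_comm, mul_comm b a, div_self (by positivity)]; simp
      _ ≤ _ := by gcongr
  · have hb1 : 0 < 1 - b := by linarith
    have ha1 : 0 < 1 - a := by linarith
    have hlim : Tendsto (fun s : ℝ => ((s - b) / (s - a)) ^ m * ωvol Ω a) (𝓝[<] 1)
        (𝓝 (((1 - b) / (1 - a)) ^ m * ωvol Ω a)) := by
      apply Tendsto.mono_left _ nhdsWithin_le_nhds
      have : ContinuousAt (fun s : ℝ => ((s - b) / (s - a)) ^ m * ωvol Ω a) 1 := by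
        have : 1 - a ≠ 0 := ha1.ne'
        fun_prop (disch := assumption)
      exact this
    have h := le_of_tendsto hlim (b := ωvol Ω b) (by
      filter_upwards [Ioo_mem_nhdsLT hb] with s hs
      have hbs : 0 < s - a := by linarith [hs.1]
      refine cross_key hc hbd s a _ b (hne s ⟨by linarith [hs.1], hs.2⟩) ?_ ?_ ?_
      · exact div_nonneg (by linarith [hs.1]) hbs.le
      · rw [div_le_one hbs]; linarith
      · field_simp; ring)
    calc ωvol Ω a = (((1 - b) / (1 - a)) ^ m * ωvol Ω a) * ((1 - a) / (1 - b)) ^ m := by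
          rw [mul_right_comm, ← mul_pow]
          rw [div_mul_div_comm, mul_comm (1 - b) (1 - a), div_self (by positivity)]; simp
      _ ≤ _ := by gcongr
end
end

section
/- Let Ω and ω be as in the context, and suppose 0 < ε < 1/4. Then ∫_0^ε ω dx + ∫_{1−ε}^1 ω dx ≤ C ε ∫_ε^{1−ε} ω dx, with C depending only on n. -/
open MeasureTheory Set Filter Topology RealInnerProductSpace

noncomputable section

lemma mkPt_comb (m : ℕ) (c x t : ℝ) (y z : EuclideanSpace ℝ (Fin m)) :
    c • mkPt m x y + (1 - c) • mkPt m t z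
      = mkPt m (c * x + (1 - c) * t) (c • y + (1 - c) • z) := by
  ext i
  refine Fin.cases ?_ (fun j => ?_) i <;> simp [mkPt]

lemma continuous_mkPt (m : ℕ) :
    Continuous (fun p : ℝ × EuclideanSpace ℝ (Fin m) => mkPt m p.1 p.2) := by
  unfold mkPt
  refine (EuclideanSpace.equiv (Fin (m+1)) ℝ).symm.continuous.comp ?_
  refine continuous_pi (fun i => ?_)
  refine Fin.cases ?_ (fun j => ?_) i
  · simpa using continuous_fst
  · simp only [Fin.cons_succ]
    exact (continuous_apply j).comp
      ((EuclideanSpace.equiv (Fin m) ℝ).continuous.comp continuous_snd)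

lemma norm_le_mkPt (m : ℕ) (x : ℝ) (y : EuclideanSpace ℝ (Fin m)) :
    ‖y‖ ≤ ‖mkPt m x y‖ := by
  rw [EuclideanSpace.norm_eq, EuclideanSpace.norm_eq]
  apply Real.sqrt_le_sqrt
  rw [Fin.sum_univ_succ]
  simp [mkPt]
  positivity

lemma cross_bound {m : ℕ} {Ω : Set (EuclideanSpace ℝ (Fin (m+1)))}
    (hb : Bornology.IsBounded Ω) :
    ∃ R : ℝ, ∀ s, cross Ω s ⊆ Metric.closedBall 0 R := by
  obtain ⟨R, hR⟩ := hb.exists_norm_le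
  refine ⟨R, fun s y hy => ?_⟩
  rw [mem_closedBall_zero_iff]
  exact (norm_le_mkPt m s y).trans (hR _ hy)

lemma cross_lt_top {m : ℕ} {Ω : Set (EuclideanSpace ℝ (Fin (m+1)))}
    (hb : Bornology.IsBounded Ω) (s : ℝ) : volume (cross Ω s) < ⊤ := by
  obtain ⟨R, hR⟩ := cross_bound hb
  exact (measure_mono (hR s)).trans_lt measure_closedBall_lt_top

lemma omega_intervalIntegrable {m : ℕ} {Ω : Set (EuclideanSpace ℝ (Fin (m+1)))}
    (ho : IsOpen Ω) (hb : Bornology.IsBounded Ω) (a b : ℝ) :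
    IntervalIntegrable (ωvol Ω) volume a b := by
  obtain ⟨R, hR⟩ := cross_bound hb
  have hmeas : Measurable (ωvol Ω) := by
    have h1 : MeasurableSet ((fun p : ℝ × EuclideanSpace ℝ (Fin m) => mkPt m p.1 p.2) ⁻¹' Ω) :=
      (ho.preimage (continuous_mkPt m)).measurableSet
    exact (measurable_measure_prodMk_left (ν := volume) h1).ennreal_toReal
  refine (intervalIntegrable_const
    (c := (volume (Metric.closedBall (0 : EuclideanSpace ℝ (Fin m)) R)).toReal)).mono_fun
    hmeas.aestronglyMeasurable ?_
  refine Filter.Eventually.of_forall (fun s => ?_)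
  simp only [ωvol, Real.norm_eq_abs, ENNReal.abs_toReal]
  exact ENNReal.toReal_mono measure_closedBall_lt_top.ne (measure_mono (hR s))

lemma omega_key {m : ℕ} {Ω : Set (EuclideanSpace ℝ (Fin (m+1)))}
    (hc : Convex ℝ Ω) (hb : Bornology.IsBounded Ω) (s t c : ℝ) (h0 : 0 ≤ c) (h1 : c ≤ 1)
    (ht : (cross Ω t).Nonempty) :
    c ^ m * ωvol Ω s ≤ ωvol Ω (c * s + (1 - c) * t) := by
  obtain ⟨z, hz⟩ := ht
  have hsub : (fun w => w + (1 - c) • z) '' ((fun y => c • y) '' cross Ω s)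
      ⊆ cross Ω (c * s + (1 - c) * t) := by
    rintro _ ⟨_, ⟨y, hy, rfl⟩, rfl⟩
    have := hc hy hz h0 (sub_nonneg.2 h1) (by ring)
    rw [mkPt_comb] at this
    exact this
  have hv := measure_mono (μ := volume) hsub
  rw [image_add_right, measure_preimage_add_right, image_smul, Measure.addHaar_smul] at hv
  have := ENNReal.toReal_mono (cross_lt_top hb _).ne hv
  rw [ENNReal.toReal_mul, ENNReal.toReal_ofReal (abs_nonneg _)] at this
  simpa [abs_of_nonneg h0, ωvol] using this

lemma omega_cmp {m : ℕ} {Ω : Set (EuclideanSpace ℝ (Fin (m+1)))}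
    (hc : Convex ℝ Ω) (hb : Bornology.IsBounded Ω)
    (hne : ∀ s ∈ Ioo (0:ℝ) 1, (cross Ω s).Nonempty)
    (s x : ℝ) (hs : s ∈ Icc (0:ℝ) (1/4) ∪ Icc (3/4) 1) (hx : x ∈ Icc (1/4 : ℝ) (3/4)) :
    ωvol Ω s ≤ 8 ^ m * ωvol Ω x := by
  have hω : 0 ≤ ωvol Ω s := ENNReal.toReal_nonneg
  obtain ⟨t, ht, c, hc8, hc1, hcx⟩ : ∃ t ∈ Ioo (0:ℝ) 1, ∃ c : ℝ, 1/8 ≤ c ∧ c ≤ 1 ∧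
      c * s + (1 - c) * t = x := by
    obtain ⟨hx1, hx2⟩ := hx
    rcases hs with ⟨h1, h2⟩ | ⟨h1, h2⟩
    · have hp : 0 < 7/8 - s := by linarith
      refine ⟨7/8, by norm_num, (7/8 - x) / (7/8 - s), ?_, ?_, ?_⟩
      · rw [le_div_iff₀ hp]; linarith
      · rw [div_le_one hp]; linarith
      · have h := div_mul_cancel₀ (7/8 - x) hp.ne'
        linear_combination -h
    · have hp : 0 < s - 1/8 := by linarith
      refine ⟨1/8, by norm_num, (x - 1/8) / (s - 1/8), ?_, ?_, ?_⟩
      · rw [le_div_iff₀ hp]; linarith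
      · rw [div_le_one hp]; linarith
      · have h := div_mul_cancel₀ (x - 1/8) hp.ne'
        linear_combination h
  have h := omega_key hc hb s t c (by linarith) hc1 (hne t ht)
  rw [hcx] at h
  have h2 : (1/8 : ℝ) ^ m ≤ c ^ m := pow_le_pow_left₀ (by norm_num) hc8 m
  have h3 : (8:ℝ) ^ m * (1/8) ^ m = 1 := by rw [← mul_pow]; norm_num
  calc ωvol Ω s = 8 ^ m * ((1/8) ^ m * ωvol Ω s) := by rw [← mul_assoc, h3, one_mul]
    _ ≤ 8 ^ m * (c ^ m * ωvol Ω s) := by gcongr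
    _ ≤ _ := by gcongr

/-- `∫_0^ε ω + ∫_{1-ε}^1 ω ≤ C ε ∫_ε^{1-ε} ω` for `0 < ε < 1/4`,
with `C` depending only on the dimension. -/
theorem omega_mass_at_ends
    (m : ℕ) (hm : 1 ≤ m) :
    ∃ C > (0:ℝ), ∀ (Ω : Set (EuclideanSpace ℝ (Fin (m+1)))),
      IsOpen Ω → Convex ℝ Ω → Bornology.IsBounded Ω →
      -- Ω ⊆ (0,1) × ℝ^{n-1}
      (∀ x y, mkPt m x y ∈ Ω → x ∈ Ioo (0:ℝ) 1) →
      -- nonempty cross-sections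
      (∀ s ∈ Ioo (0:ℝ) 1, (cross Ω s).Nonempty) →
      ∀ ε : ℝ, 0 < ε → ε < 1/4 →
        (∫ x in (0:ℝ)..ε, ωvol Ω x) + (∫ x in (1-ε)..1, ωvol Ω x)
          ≤ C * ε * ∫ x in ε..(1-ε), ωvol Ω x := by
  refine ⟨4 * 8 ^ m, by positivity, ?_⟩
  intro Ω ho hc hb _ hne ε h0 h4
  have hnn : ∀ x, 0 ≤ ωvol Ω x := fun x => ENNReal.toReal_nonneg
  set I := ∫ x in ε..(1-ε), ωvol Ω x with hI
  have hmid : ∫ x in (1/4:ℝ)..(3/4), ωvol Ω x ≤ I := by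
    refine intervalIntegral.integral_mono_interval h4.le (by norm_num) (by linarith)
      (Filter.Eventually.of_forall hnn) (omega_intervalIntegrable ho hb _ _)
  have hpt : ∀ s ∈ Icc (0:ℝ) (1/4) ∪ Icc (3/4) 1, ωvol Ω s ≤ 2 * 8 ^ m * I := by
    intro s hs
    have h := intervalIntegral.integral_mono_on (a := (1/4:ℝ)) (b := 3/4) (by norm_num)
      (intervalIntegrable_const (c := ωvol Ω s) (μ := volume))
      ((omega_intervalIntegrable ho hb (1/4) (3/4)).const_mul (8 ^ m))
      (fun x hx => omega_cmp hc hb hne s x hs hx)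
    rw [intervalIntegral.integral_const, intervalIntegral.integral_const_mul, smul_eq_mul] at h
    have h' : (8:ℝ) ^ m * ∫ x in (1/4:ℝ)..(3/4), ωvol Ω x ≤ 8 ^ m * I := by gcongr
    linarith
  have hA : ∫ x in (0:ℝ)..ε, ωvol Ω x ≤ 2 * 8 ^ m * I * ε := by
    have h := intervalIntegral.norm_integral_le_of_norm_le_const (a := 0) (b := ε)
      (f := ωvol Ω) (C := 2 * 8 ^ m * I) (fun x hx => by
        rw [uIoc_of_le h0.le] at hx
        rw [Real.norm_of_nonneg (hnn x)]
        exact hpt x (Or.inl ⟨hx.1.le, by linarith [hx.2]⟩))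
    rw [sub_zero, abs_of_pos h0] at h
    exact (Real.le_norm_self _).trans h
  have hB : ∫ x in (1-ε)..1, ωvol Ω x ≤ 2 * 8 ^ m * I * ε := by
    have h := intervalIntegral.norm_integral_le_of_norm_le_const (a := 1 - ε) (b := 1)
      (f := ωvol Ω) (C := 2 * 8 ^ m * I) (fun x hx => by
        rw [uIoc_of_le (by linarith)] at hx
        rw [Real.norm_of_nonneg (hnn x)]
        exact hpt x (Or.inr ⟨by linarith [hx.1], hx.2⟩))
    rw [sub_sub_cancel, abs_of_pos h0] at h
    exact (Real.le_norm_self _).trans h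
  linarith
end
end
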